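/- Let n ≥ 1 be an integer, θ ∈ (0, π/2), 1 ≤ k ≤ n, and let φ : C_θ → (0,∞) be smooth. For every integer m ≥ 1 there exists a constant C_m > 0 (depending only on m, n, k, θ and φ) such that: every smooth capillary function s on C_θ with τ[s] > 0 satisfying ∫_{C_θ} s(ζ) ζ_i dσ(ζ) = 0 for all i = 1,…,n and σ_k(τ[s])(ζ) = φ(ζ) for all ζ ∈ C_θ has C^m norm bounded by C_m; precisely, its 1-homogeneous extension G satisfies ‖D^jG(u)‖ ≤ C_m for every u ∈ S^n_θ and every 0 ≤ j ≤ m, where D^jG denotes the j-th total (Fréchet) derivative. -/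

import Mathlib

open MeasureTheory Real Set
open scoped RealInnerProductSpace

noncomputable section

abbrev V (n : ℕ) := EuclideanSpace ℝ (Fin (n + 1))

/-- The vertical unit vector `E_{n+1}`. -/
def Etop (n : ℕ) : V n := EuclideanSpace.single (Fin.last n) 1

/-- The spherical cap `S^n_θ`. -/
def sphCap (n : ℕ) (θ : ℝ) : Set (V n) :=
  {u | ‖u‖ = 1 ∧ Real.cos θ ≤ u (Fin.last n)}

/-- The boundary circle `∂S^n_θ`. -/
def sphCapBdry (n : ℕ) (θ : ℝ) : Set (V n) :=
  {u | ‖u‖ = 1 ∧ u (Fin.last n) = Real.cos θ}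

/-- The capillary cap `C_θ`. -/
def capCap (n : ℕ) (θ : ℝ) : Set (V n) :=
  {ζ | 0 ≤ ζ (Fin.last n) ∧ ‖ζ + Real.cos θ • Etop n‖ = 1}

/-- The open cone over `S^n_θ`. -/
def coneCap (n : ℕ) (θ : ℝ) : Set (V n) :=
  {x | ∃ l : ℝ, 0 < l ∧ ∃ u ∈ sphCap n θ, x = l • u}

/-- `G` is a positively 1-homogeneous extension of `g : C_θ → ℝ` which is `C^m` on an
open neighborhood of the cone over `S^n_θ`. -/
def IsHomExt (n : ℕ) (θ : ℝ) (m : ℕ∞) (g G : V n → ℝ) : Prop :=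
  (∃ U : Set (V n), IsOpen U ∧ coneCap n θ ⊆ U ∧ ContDiffOn ℝ m G U) ∧
  (∀ l : ℝ, 0 < l → ∀ u ∈ sphCap n θ, G (l • u) = l * G u) ∧
  (∀ ζ ∈ capCap n θ, G (ζ + Real.cos θ • Etop n) = g ζ)

/-- The Hessian of `G` at `u` as a quadratic/bilinear form. -/
def hessQ (n : ℕ) (G : V n → ℝ) (u v w : V n) : ℝ :=
  fderiv ℝ (fderiv ℝ G) u v w

/-- The Hessian matrix `D²G(u)` in the standard coordinates. -/
def hessM (n : ℕ) (G : V n → ℝ) (u : V n) : Matrix (Fin (n + 1)) (Fin (n + 1)) ℝ :=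
  fun i j => fderiv ℝ (fderiv ℝ G) u (EuclideanSpace.single i 1) (EuclideanSpace.single j 1)

/-- `σ_j` of the eigenvalues of `D²G(u)` (via characteristic polynomial coefficients). -/
def sigmaElem (n : ℕ) (j : ℕ) (G : V n → ℝ) (u : V n) : ℝ :=
  (-1 : ℝ) ^ j * ((hessM n G u).charpoly.coeff (n + 1 - j))

/-- `τ[g] ≥ 0` : the Hessian of the extension is positive semidefinite on `S^n_θ`. -/
def TauNonneg (n : ℕ) (θ : ℝ) (G : V n → ℝ) : Prop :=
  ∀ u ∈ sphCap n θ, ∀ v : V n, 0 ≤ hessQ n G u v v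

/-- `τ[g] > 0`. -/
def TauPos (n : ℕ) (θ : ℝ) (G : V n → ℝ) : Prop :=
  TauNonneg n θ G ∧
  ∀ u ∈ sphCap n θ, ∀ v : V n, v ≠ 0 → ⟪v, u⟫ = 0 → 0 < hessQ n G u v v

/-- Capillary (Robin) boundary condition: `∂_{n+1}G = 0` on `∂S^n_θ`. -/
def IsCapillaryF (n : ℕ) (θ : ℝ) (G : V n → ℝ) : Prop :=
  ∀ u ∈ sphCapBdry n θ, fderiv ℝ G u (Etop n) = 0

/-- Reflection negating the horizontal coordinates. -/
def horizNeg (n : ℕ) (ζ : V n) : V n := (2 * ζ (Fin.last n)) • Etop n - ζ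

/-- Support function of a set. -/
def suppFn (n : ℕ) (K : Set (V n)) (u : V n) : ℝ := sSup ((fun y => ⟪u, y⟫) '' K)

/-- Relative interior (within the hyperplane `{x_{n+1}=0}`) of the base `K ∩ {x_{n+1}=0}`. -/
def relintBase (n : ℕ) (K : Set (V n)) : Set (V n) :=
  {x | x (Fin.last n) = 0 ∧ ∃ ε > 0, ∀ y : V n, y (Fin.last n) = 0 → ‖y - x‖ < ε → y ∈ K}

/-- A `θ`-capillary convex body. -/
def IsCapBody (n : ℕ) (θ : ℝ) (K : Set (V n)) : Prop :=
  IsCompact K ∧ Convex ℝ K ∧ (interior K).Nonempty ∧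
  (∀ x ∈ K, 0 ≤ x (Fin.last n)) ∧
  (∀ x ∈ K, 0 < x (Fin.last n) → ∀ u : V n, ‖u‖ = 1 → ⟪u, x⟫ = suppFn n K u →
    Real.cos θ ≤ u (Fin.last n)) ∧
  (∀ v : V n, ‖v‖ = 1 → v (Fin.last n) = 0 →
    suppFn n K (Real.sin θ • v + Real.cos θ • Etop n) = Real.sin θ * suppFn n K v) ∧
  (relintBase n K).Nonempty

/-- `ψ` is one of `x²`, `x^p (p<0)`, `-log x`. -/
def PsiOK (ψ : ℝ → ℝ) : Prop :=
  (ψ = fun x : ℝ => x ^ 2) ∨ (∃ p : ℝ, p < 0 ∧ ψ = fun x : ℝ => x ^ p) ∨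
    (ψ = fun x : ℝ => -Real.log x)

/-- The elementary symmetric polynomial of degree `k` in the variables `x i`, `i ∈ S`. -/
def elemSym {ι : Type*} (S : Finset ι) (x : ι → ℝ) (k : ℕ) : ℝ :=
  (∏ i ∈ S, (1 + Polynomial.C (x i) * Polynomial.X)).coeff k

/-- The quotient of consecutive elementary symmetric polynomials. -/
def elemQuot {ι : Type*} (S : Finset ι) (x : ι → ℝ) (k : ℕ) : ℝ :=
  elemSym S x (k + 1) / elemSym S x k

lemma elemSym_zero {ι : Type*} (S : Finset ι) (x : ι → ℝ) : elemSym S x 0 = 1 := by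
  simp [elemSym, Polynomial.coeff_zero_prod]

lemma elemSym_empty_succ {ι : Type*} (x : ι → ℝ) (k : ℕ) :
    elemSym (∅ : Finset ι) x (k + 1) = 0 := by
  simp [elemSym, Polynomial.coeff_one]

lemma elemSym_insert_succ {ι : Type*} [DecidableEq ι] {S : Finset ι} {i : ι} (hi : i ∉ S)
    (x : ι → ℝ) (k : ℕ) :
    elemSym (insert i S) x (k + 1) = elemSym S x (k + 1) + x i * elemSym S x k := by
  simp only [elemSym, Finset.prod_insert hi, add_mul, one_mul, Polynomial.coeff_add, mul_assoc,
    Polynomial.coeff_C_mul, Polynomial.coeff_X_mul]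

lemma elemSym_eq_erase_add {ι : Type*} [DecidableEq ι] {S : Finset ι} {i : ι} (hi : i ∈ S)
    (x : ι → ℝ) (k : ℕ) :
    elemSym S x (k + 1) = elemSym (S.erase i) x (k + 1) + x i * elemSym (S.erase i) x k := by
  conv_lhs => rw [← Finset.insert_erase hi]
  exact elemSym_insert_succ (Finset.notMem_erase i S) x k

lemma succ_mul_elemSym_succ {ι : Type*} [DecidableEq ι] (S : Finset ι) (x : ι → ℝ) (k : ℕ) :
    ((k : ℝ) + 1) * elemSym S x (k + 1) = ∑ i ∈ S, x i * elemSym (S.erase i) x k := by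
  have h := congrArg (fun p : Polynomial ℝ => p.coeff k) (Polynomial.derivative_prod_finset (s := S)
    (f := fun i => (1 + Polynomial.C (x i) * Polynomial.X)))
  simp only [Polynomial.coeff_derivative, Polynomial.finsetSum_coeff] at h
  rw [mul_comm]
  refine h.trans (Finset.sum_congr rfl fun i _ => ?_)
  simp only [Polynomial.derivative_add, Polynomial.derivative_one, Polynomial.derivative_C_mul,
    Polynomial.derivative_X, zero_add, mul_one, Polynomial.coeff_mul_C, elemSym]
  exact mul_comm _ _

lemma elemSym_nonneg {ι : Type*} (S : Finset ι) {x : ι → ℝ} (hx : ∀ i, 0 ≤ x i) (k : ℕ) :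
    0 ≤ elemSym S x k := by
  classical
  induction S using Finset.induction_on generalizing k with
  | empty =>
    cases k with
    | zero => simp [elemSym_zero]
    | succ k => simp [elemSym_empty_succ]
  | insert i S hi ih =>
    cases k with
    | zero => simp [elemSym_zero]
    | succ k =>
      rw [elemSym_insert_succ hi]
      exact add_nonneg (ih _) (mul_nonneg (hx i) (ih _))

lemma elemSym_succ_eq_zero {ι : Type*} (S : Finset ι) {x : ι → ℝ} (hx : ∀ i, 0 ≤ x i) {k : ℕ}
    (h : elemSym S x k = 0) : elemSym S x (k + 1) = 0 := by
  classical
  induction S using Finset.induction_on generalizing k with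
  | empty => exact elemSym_empty_succ x k
  | insert i S hi ih =>
    cases k with
    | zero => simp [elemSym_zero] at h
    | succ k =>
      rw [elemSym_insert_succ hi] at h ⊢
      have h1 := elemSym_nonneg S hx (k + 1)
      have h2 := mul_nonneg (hx i) (elemSym_nonneg S hx k)
      have h3 : elemSym S x (k + 1) = 0 := by linarith
      rw [ih h3, h3]; simp

lemma elemSym_smul {ι : Type*} (S : Finset ι) (a : ℝ) (x : ι → ℝ) (k : ℕ) :
    elemSym S (a • x) k = a ^ k * elemSym S x k := by
  classical
  induction S using Finset.induction_on generalizing k with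
  | empty =>
    cases k with
    | zero => simp [elemSym_zero]
    | succ k => simp [elemSym_empty_succ]
  | insert i S hi ih =>
    cases k with
    | zero => simp [elemSym_zero]
    | succ k =>
      rw [elemSym_insert_succ hi, elemSym_insert_succ hi, ih, ih]
      simp only [Pi.smul_apply, smul_eq_mul]; ring

lemma elemQuot_nonneg {ι : Type*} (S : Finset ι) {x : ι → ℝ} (hx : ∀ i, 0 ≤ x i) (k : ℕ) :
    0 ≤ elemQuot S x k :=
  div_nonneg (elemSym_nonneg S hx _) (elemSym_nonneg S hx _)

lemma elemQuot_smul {ι : Type*} (S : Finset ι) {a : ℝ} (ha : a ≠ 0) (x : ι → ℝ) (k : ℕ) :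
    elemQuot S (a • x) k = a * elemQuot S x k := by
  rw [elemQuot, elemQuot, elemSym_smul, elemSym_smul]
  by_cases h : elemSym S x k = 0
  · simp [h]
  · field_simp
    ring

lemma succ_mul_elemQuot_succ {ι : Type*} [DecidableEq ι] (S : Finset ι) {x : ι → ℝ}
    (hx : ∀ i, 0 ≤ x i) (k : ℕ) :
    ((k : ℝ) + 2) * elemQuot S x (k + 1) =
      ∑ i ∈ S, x i * elemQuot (S.erase i) x k / (x i + elemQuot (S.erase i) x k) := by
  have h := succ_mul_elemSym_succ S x (k + 1)
  push_cast at h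
  rw [elemQuot, ← mul_div_assoc, show (k : ℝ) + 2 = k + 1 + 1 by ring, h, Finset.sum_div]
  refine Finset.sum_congr rfl fun i hi => ?_
  rw [elemSym_eq_erase_add hi x k, elemQuot]
  have h0 := elemSym_nonneg (S.erase i) hx k
  have h1 := elemSym_nonneg (S.erase i) hx (k + 1)
  rcases h0.eq_or_lt with h0 | h0
  · rw [elemSym_succ_eq_zero _ hx h0.symm]; simp
  · have hxi := hx i
    by_cases hz : elemSym (S.erase i) x (k + 1) + x i * elemSym (S.erase i) x k = 0
    · have : elemSym (S.erase i) x (k + 1) = 0 := by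
        have := mul_nonneg hxi h0.le
        linarith
      simp [this]
    · have h2 : x i + elemSym (S.erase i) x (k + 1) / elemSym (S.erase i) x k ≠ 0 := by
        intro h3
        apply hz
        field_simp at h3
        linarith
      rw [div_eq_div_iff hz h2]
      field_simp
      ring

lemma parallelSum_add_le {a b c d A B : ℝ} (ha : 0 ≤ a) (hb : 0 ≤ b) (hc : 0 ≤ c) (hd : 0 ≤ d)
    (hA : A = a + c) (hB : b + d ≤ B) :
    a * b / (a + b) + c * d / (c + d) ≤ A * B / (A + B) := by
  subst hA
  rcases (add_nonneg ha hb).eq_or_lt with h | h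
  · obtain rfl : a = 0 := by linarith
    obtain rfl : b = 0 := by linarith
    rcases (add_nonneg hc hd).eq_or_lt with h' | h'
    · rw [← h']
      simp only [mul_zero, div_zero, zero_add, add_zero]
      exact div_nonneg (mul_nonneg hc (by linarith)) (by linarith)
    · simp only [zero_mul, zero_add, zero_div] at *
      rw [div_le_div_iff₀ h' (by linarith)]
      nlinarith [mul_nonneg hc (sub_nonneg.2 hB), mul_nonneg (mul_nonneg hc hc) (sub_nonneg.2 hB)]
  · rcases (add_nonneg hc hd).eq_or_lt with h' | h'
    · obtain rfl : c = 0 := by linarith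
      obtain rfl : d = 0 := by linarith
      simp only [mul_zero, zero_div, add_zero] at *
      rw [div_le_div_iff₀ h (by linarith)]
      nlinarith [mul_nonneg (mul_nonneg ha ha) (sub_nonneg.2 hB)]
    · have h1 : a * b / (a + b) + c * d / (c + d)
          ≤ (a + c) * (b + d) / (a + c + (b + d)) := by
        rw [div_add_div _ _ h.ne' h'.ne', div_le_div_iff₀ (mul_pos h h') (by linarith)]
        nlinarith [sq_nonneg (a * d - b * c)]
      refine h1.trans ?_
      rw [div_le_div_iff₀ (by linarith) (by linarith)]
      nlinarith [mul_nonneg (mul_nonneg (add_nonneg ha hc) (add_nonneg ha hc)) (sub_nonneg.2 hB)]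

lemma elemQuot_zero {ι : Type*} (S : Finset ι) (x : ι → ℝ) : elemQuot S x 0 = ∑ i ∈ S, x i := by
  classical
  have := succ_mul_elemSym_succ S x 0
  simp [elemSym_zero] at this
  simp [elemQuot, elemSym_zero, this]

/-- Superadditivity of quotients of elementary symmetric polynomials on the nonnegative orthant
(Marcus–Lopes). -/
lemma elemQuot_add_le {ι : Type*} (S : Finset ι) {x y : ι → ℝ} (hx : ∀ i, 0 ≤ x i)
    (hy : ∀ i, 0 ≤ y i) (k : ℕ) :
    elemQuot S x k + elemQuot S y k ≤ elemQuot S (x + y) k := by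
  classical
  induction k generalizing S with
  | zero => simp [elemQuot_zero, Finset.sum_add_distrib]
  | succ k ih =>
    have hk : (0 : ℝ) < (k : ℝ) + 2 := by positivity
    refine le_of_mul_le_mul_left ?_ hk
    rw [mul_add, succ_mul_elemQuot_succ S hx, succ_mul_elemQuot_succ S hy,
      succ_mul_elemQuot_succ S (x := x + y) (fun i => add_nonneg (hx i) (hy i)), ← Finset.sum_add_distrib]
    exact Finset.sum_le_sum fun i _ => parallelSum_add_le (hx i) (elemQuot_nonneg _ hx k) (hy i)
      (elemQuot_nonneg _ hy k) rfl (ih _)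

lemma elemSym_eq_prod_elemQuot {ι : Type*} (S : Finset ι) {x : ι → ℝ} (hx : ∀ i, 0 ≤ x i)
    (k : ℕ) : elemSym S x k = ∏ j ∈ Finset.range k, elemQuot S x j := by
  induction k with
  | zero => simp [elemSym_zero]
  | succ k ih =>
    rw [Finset.prod_range_succ, ← ih, elemQuot]
    by_cases h : elemSym S x k = 0
    · rw [elemSym_succ_eq_zero S hx h, h]; simp
    · field_simp

lemma elemSym_two {ι : Type*} (S : Finset ι) (x : ι → ℝ) :
    2 * elemSym S x 2 = (∑ i ∈ S, x i) ^ 2 - ∑ i ∈ S, x i ^ 2 := by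
  classical
  have h := succ_mul_elemSym_succ S x 1
  have h1 : ∀ S : Finset ι, elemSym S x 1 = ∑ i ∈ S, x i := fun S => by
    have := elemQuot_zero S x
    simpa [elemQuot, elemSym_zero] using this
  norm_num at h
  rw [show (2 : ℝ) * elemSym S x 2 = (1 + 1) * elemSym S x 2 by norm_num] at *
  rw [show ((1 : ℝ) + 1) = 2 by norm_num] at *
  rw [h, sq, Finset.sum_mul, ← Finset.sum_sub_distrib]
  refine Finset.sum_congr rfl fun i hi => ?_
  rw [h1, ← Finset.add_sum_erase S x hi]
  ring

lemma elemQuot_pos {ι : Type*} (S : Finset ι) {x : ι → ℝ} (hx : ∀ i, 0 ≤ x i) {k : ℕ}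
    (h : 0 < elemSym S x k) {j : ℕ} (hj : j ∈ Finset.range k) : 0 < elemQuot S x j := by
  rw [elemSym_eq_prod_elemQuot S hx] at h
  exact (elemQuot_nonneg S hx j).lt_of_ne' (Finset.prod_ne_zero_iff.1 h.ne' j hj)

lemma elemQuot_combo {ι : Type*} (S : Finset ι) {x y : ι → ℝ} (hx : ∀ i, 0 ≤ x i)
    (hy : ∀ i, 0 ≤ y i) {a b : ℝ} (ha : 0 < a) (hb : 0 < b) (k : ℕ) :
    a * elemQuot S x k + b * elemQuot S y k ≤ elemQuot S (a • x + b • y) k := by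
  rw [← elemQuot_smul S ha.ne', ← elemQuot_smul S hb.ne']
  exact elemQuot_add_le S (fun i => mul_nonneg ha.le (hx i)) (fun i => mul_nonneg hb.le (hy i)) k

lemma log_combo_elemQuot_le {ι : Type*} (S : Finset ι) {x y : ι → ℝ} (hx : ∀ i, 0 ≤ x i)
    (hy : ∀ i, 0 ≤ y i) {a b : ℝ} (ha : 0 < a) (hb : 0 < b) (hab : a + b = 1) {k : ℕ}
    (hxk : 0 < elemQuot S x k) (hyk : 0 < elemQuot S y k) :
    a * log (elemQuot S x k) + b * log (elemQuot S y k) ≤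
      log (elemQuot S (a • x + b • y) k) := by
  refine (strictConcaveOn_log_Ioi.concaveOn.2 hxk hyk ha.le hb.le hab).trans ?_
  exact log_le_log (add_pos (mul_pos ha hxk) (mul_pos hb hyk)) (elemQuot_combo S hx hy ha hb k)

lemma exists_log_combo_elemQuot_lt {ι : Type*} (S : Finset ι) {x y : ι → ℝ} (hx : ∀ i, 0 ≤ x i)
    (hy : ∀ i, 0 ≤ y i) {a b : ℝ} (ha : 0 < a) (hb : 0 < b) (hab : a + b = 1)
    (hx0 : 0 < elemQuot S x 0) (hy0 : 0 < elemQuot S y 0)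
    (hx1 : 0 < elemQuot S x 1) (hy1 : 0 < elemQuot S y 1) (hne : ∃ i ∈ S, x i ≠ y i) :
    ∃ k ∈ Finset.range 2, a * log (elemQuot S x k) + b * log (elemQuot S y k) <
      log (elemQuot S (a • x + b • y) k) := by
  by_cases h : elemQuot S x 0 = elemQuot S y 0
  · refine ⟨1, by simp, ?_⟩
    refine (strictConcaveOn_log_Ioi.concaveOn.2 hx1 hy1 ha.le hb.le hab).trans_lt ?_
    refine log_lt_log (add_pos (mul_pos ha hx1) (mul_pos hb hy1)) ?_
    have e1 : ∀ z : ι → ℝ, elemSym S z 1 = elemQuot S z 0 := fun z => by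
      simp [elemQuot, elemSym_zero]
    have hz : elemQuot S (a • x + b • y) 0 = elemQuot S x 0 := by
      have : elemQuot S (a • x + b • y) 0 = a * elemQuot S x 0 + b * elemQuot S y 0 := by
        simp [elemQuot_zero, Finset.sum_add_distrib, Finset.mul_sum]
      rw [this, ← h, ← add_mul, hab, one_mul]
    have hq : ∀ z : ι → ℝ, elemQuot S z 1 = elemSym S z 2 / elemQuot S z 0 := fun z => by
      rw [← e1]; rfl
    have hs : ∑ i ∈ S, (a * x i + b * y i) ^ 2 < ∑ i ∈ S, (a * x i ^ 2 + b * y i ^ 2) := by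
      have key : ∀ i, a * x i ^ 2 + b * y i ^ 2 - (a * x i + b * y i) ^ 2 =
          a * b * (x i - y i) ^ 2 := fun i => by
        obtain rfl : b = 1 - a := by linarith
        ring
      obtain ⟨i, hi, hne⟩ := hne
      refine Finset.sum_lt_sum (fun j _ => ?_) ⟨i, hi, ?_⟩
      · have := mul_nonneg (mul_pos ha hb).le (sq_nonneg (x j - y j))
        linarith [key j]
      · have := mul_pos (mul_pos ha hb) (sq_pos_of_ne_zero (sub_ne_zero.2 hne))
        linarith [key i]
    rw [Finset.sum_add_distrib, ← Finset.mul_sum, ← Finset.mul_sum] at hs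
    rw [hq, hq, hq, hz, ← h, smul_eq_mul, smul_eq_mul, ← mul_div_assoc, ← mul_div_assoc, ← add_div]
    refine div_lt_div_of_pos_right ?_ hx0
    have t1 := elemSym_two S x
    have t2 := elemSym_two S y
    have t3 := elemSym_two S (a • x + b • y)
    rw [← elemQuot_zero] at t1 t2 t3
    rw [hz] at t3
    rw [← h] at t2
    simp only [Pi.add_apply, Pi.smul_apply, smul_eq_mul] at t3
    have : a * elemQuot S x 0 ^ 2 + b * elemQuot S x 0 ^ 2 = elemQuot S x 0 ^ 2 := by
      rw [← add_mul, hab, one_mul]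
    nlinarith
  · refine ⟨0, by simp, ?_⟩
    refine (strictConcaveOn_log_Ioi.2 hx0 hy0 h ha hb hab).trans_le ?_
    exact log_le_log (add_pos (mul_pos ha hx0) (mul_pos hb hy0)) (elemQuot_combo S hx hy ha hb 0)

lemma log_elemSym {ι : Type*} (S : Finset ι) {x : ι → ℝ} (hx : ∀ i, 0 ≤ x i) {k : ℕ}
    (h : 0 < elemSym S x k) :
    log (elemSym S x k) = ∑ j ∈ Finset.range k, log (elemQuot S x j) := by
  rw [elemSym_eq_prod_elemQuot S hx, log_prod (fun j hj => (elemQuot_pos S hx h hj).ne')]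

lemma elemSym_combo_pos {ι : Type*} (S : Finset ι) {x y : ι → ℝ} (hx : ∀ i, 0 ≤ x i)
    (hy : ∀ i, 0 ≤ y i) {a b : ℝ} (ha : 0 < a) (hb : 0 < b) {k : ℕ}
    (hxk : 0 < elemSym S x k) (hyk : 0 < elemSym S y k) :
    0 < elemSym S (a • x + b • y) k := by
  rw [elemSym_eq_prod_elemQuot S (x := a • x + b • y)
    (fun i => add_nonneg (mul_nonneg ha.le (hx i)) (mul_nonneg hb.le (hy i)))]
  refine Finset.prod_pos fun j hj => lt_of_lt_of_le ?_ (elemQuot_combo S hx hy ha hb j)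
  exact add_pos (mul_pos ha (elemQuot_pos S hx hxk hj)) (mul_pos hb (elemQuot_pos S hy hyk hj))

lemma le_elemSym_combo {ι : Type*} (S : Finset ι) {x y : ι → ℝ} (hx : ∀ i, 0 ≤ x i)
    (hy : ∀ i, 0 ≤ y i) {a b : ℝ} (ha : 0 < a) (hb : 0 < b) (hab : a + b = 1) {k : ℕ} {c : ℝ}
    (hc : 0 < c) (hxk : c ≤ elemSym S x k) (hyk : c ≤ elemSym S y k) :
    c ≤ elemSym S (a • x + b • y) k := by
  have hx0 := hc.trans_le hxk
  have hy0 := hc.trans_le hyk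
  have hz0 := elemSym_combo_pos S hx hy ha hb hx0 hy0
  rw [← log_le_log_iff hc hz0, log_elemSym S (x := a • x + b • y)
    (fun i => add_nonneg (mul_nonneg ha.le (hx i)) (mul_nonneg hb.le (hy i))) hz0]
  have hle := Finset.sum_le_sum fun j (hj : j ∈ Finset.range k) =>
    log_combo_elemQuot_le S hx hy ha hb hab (elemQuot_pos S hx hx0 hj) (elemQuot_pos S hy hy0 hj)
  rw [Finset.sum_add_distrib, ← Finset.mul_sum, ← Finset.mul_sum, ← log_elemSym S hx hx0,
    ← log_elemSym S hy hy0] at hle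
  refine le_trans ?_ hle
  calc log c = a * log c + b * log c := by rw [← add_mul, hab, one_mul]
    _ ≤ _ := add_le_add (mul_le_mul_of_nonneg_left (log_le_log hc hxk) ha.le)
      (mul_le_mul_of_nonneg_left (log_le_log hc hyk) hb.le)

lemma lt_elemSym_combo {ι : Type*} (S : Finset ι) {x y : ι → ℝ} (hx : ∀ i, 0 ≤ x i)
    (hy : ∀ i, 0 ≤ y i) {a b : ℝ} (ha : 0 < a) (hb : 0 < b) (hab : a + b = 1) {k : ℕ}
    (hk : 2 ≤ k) {c : ℝ} (hc : 0 < c) (hxk : c ≤ elemSym S x k) (hyk : c ≤ elemSym S y k)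
    (hne : ∃ i ∈ S, x i ≠ y i) :
    c < elemSym S (a • x + b • y) k := by
  have hx0 := hc.trans_le hxk
  have hy0 := hc.trans_le hyk
  have hz0 := elemSym_combo_pos S hx hy ha hb hx0 hy0
  rw [← log_lt_log_iff hc hz0, log_elemSym S (x := a • x + b • y)
    (fun i => add_nonneg (mul_nonneg ha.le (hx i)) (mul_nonneg hb.le (hy i))) hz0]
  have h0 : 0 ∈ Finset.range k := Finset.mem_range.2 (by omega)
  have h1 : 1 ∈ Finset.range k := Finset.mem_range.2 (by omega)
  obtain ⟨j, hj, hjlt⟩ := exists_log_combo_elemQuot_lt S hx hy ha hb hab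
    (elemQuot_pos S hx hx0 h0) (elemQuot_pos S hy hy0 h0)
    (elemQuot_pos S hx hx0 h1) (elemQuot_pos S hy hy0 h1) hne
  have hlt := Finset.sum_lt_sum (fun j (hj : j ∈ Finset.range k) =>
    log_combo_elemQuot_le S hx hy ha hb hab (elemQuot_pos S hx hx0 hj) (elemQuot_pos S hy hy0 hj))
    ⟨j, Finset.mem_range.2 (by have := Finset.mem_range.1 hj; omega), hjlt⟩
  rw [Finset.sum_add_distrib, ← Finset.mul_sum, ← Finset.mul_sum, ← log_elemSym S hx hx0,
    ← log_elemSym S hy hy0] at hlt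
  refine lt_of_le_of_lt ?_ hlt
  calc log c = a * log c + b * log c := by rw [← add_mul, hab, one_mul]
    _ ≤ _ := add_le_add (mul_le_mul_of_nonneg_left (log_le_log hc hxk) ha.le)
      (mul_le_mul_of_nonneg_left (log_le_log hc hyk) hb.le)

/-- **Jacobi's formula** along a line of matrices. -/
lemma hasDerivAt_det_add_smul {ι : Type*} [Fintype ι] [DecidableEq ι] (A B : Matrix ι ι ℝ) :
    HasDerivAt (fun s : ℝ => (A + s • B).det) (A.adjugate * B).trace 0 := by
  let D : ContinuousMultilinearMap ℝ (fun _ : ι => ι → ℝ) ℝ :=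
    { toMultilinearMap := (Matrix.detRowAlternating (n := ι) (R := ℝ)).toMultilinearMap
      cont := Continuous.matrix_det (A := fun m : ι → ι → ℝ => (m : Matrix ι ι ℝ)) continuous_id }
  have h1 : HasDerivAt (fun s : ℝ => ((fun i j => A i j + s * B i j) : ι → ι → ℝ))
      (fun i j => B i j) 0 := by
    rw [hasDerivAt_pi]; intro i
    rw [hasDerivAt_pi]; intro j
    simpa using ((hasDerivAt_id (0 : ℝ)).mul_const (B i j)).const_add (A i j)
  have h2 := (D.hasFDerivAt (x := (fun i j => A i j + (0 : ℝ) * B i j))).comp_hasDerivAt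
    (0 : ℝ) h1
  refine h2.congr_deriv ?_
  rw [ContinuousMultilinearMap.linearDeriv_apply, Matrix.trace]
  have e : (fun i j => A i j + (0 : ℝ) * B i j) = A := by ext i j; simp
  rw [e]
  calc (∑ i, D (Function.update (A : ι → ι → ℝ) i (B i)))
      = ∑ i, ∑ j, A.adjugate j i * B i j := by
        refine Finset.sum_congr rfl fun i _ => ?_
        have : D (Function.update (A : ι → ι → ℝ) i (B i)) = (A.updateRow i (B i)).det := rfl
        rw [this, ← Matrix.cramer_transpose_apply, Matrix.cramer_eq_adjugate_mulVec,
          ← Matrix.adjugate_transpose]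
        simp [Matrix.mulVec, dotProduct]
    _ = _ := by
        rw [Finset.sum_comm]
        simp [Matrix.mul_apply]

/-- The matrix polynomial `1 + X M`. -/
def oneAddX {ι : Type*} [Fintype ι] [DecidableEq ι] (M : Matrix ι ι ℝ) :
    Matrix ι ι (Polynomial ℝ) :=
  1 + (Polynomial.X : Polynomial ℝ) • M.map Polynomial.C

/-- The `k`-th elementary symmetric function of the eigenvalues of a matrix. -/
def matSym {ι : Type*} [Fintype ι] [DecidableEq ι] (M : Matrix ι ι ℝ) (k : ℕ) : ℝ :=
  (oneAddX M).det.coeff k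

/-- The `k`-th Newton transformation of a matrix. -/
def newtonT {ι : Type*} [Fintype ι] [DecidableEq ι] (M : Matrix ι ι ℝ) (k : ℕ) : Matrix ι ι ℝ :=
  fun i j => ((oneAddX M).adjugate i j).coeff k

section
variable {ι : Type*} [Fintype ι] [DecidableEq ι]

lemma map_eval_oneAddX (M : Matrix ι ι ℝ) (t : ℝ) :
    (oneAddX M).map (Polynomial.eval t) = 1 + t • M := by
  ext i j
  by_cases h : i = j
  · simp [oneAddX, h, mul_comm (M j j) t]
  · simp [oneAddX, h, mul_comm (M i j) t]

lemma eval_det_oneAddX (M : Matrix ι ι ℝ) (t : ℝ) :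
    (oneAddX M).det.eval t = (1 + t • M).det := by
  rw [← map_eval_oneAddX]
  exact RingHom.map_det (Polynomial.evalRingHom t) (oneAddX M)

lemma map_eval_adjugate_oneAddX (M : Matrix ι ι ℝ) (t : ℝ) :
    (oneAddX M).adjugate.map (Polynomial.eval t) = (1 + t • M).adjugate := by
  rw [← map_eval_oneAddX]
  exact RingHom.map_adjugate (Polynomial.evalRingHom t) (oneAddX M)

lemma newtonT_zero (M : Matrix ι ι ℝ) : newtonT M 0 = 1 := by
  have := map_eval_adjugate_oneAddX M 0
  simp only [zero_smul, add_zero, Matrix.adjugate_one] at this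
  rw [← this]
  ext i j
  simp [newtonT, Polynomial.coeff_zero_eq_eval_zero]

lemma matSym_zero (M : Matrix ι ι ℝ) : matSym M 0 = 1 := by
  rw [matSym, Polynomial.coeff_zero_eq_eval_zero, eval_det_oneAddX]; simp

lemma mul_newtonT_add (M : Matrix ι ι ℝ) (k : ℕ) :
    newtonT M (k + 1) + M * newtonT M k = matSym M (k + 1) • (1 : Matrix ι ι ℝ) := by
  have h := Matrix.mul_adjugate (oneAddX M)
  ext i j
  have hij := congrArg (fun A => (A i j).coeff (k + 1)) h
  simp only [oneAddX, add_mul, one_mul, Matrix.smul_mul] at hij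
  rw [← oneAddX] at hij
  simp only [Matrix.add_apply, Matrix.smul_apply, smul_eq_mul, Polynomial.coeff_add,
    Polynomial.coeff_X_mul, Matrix.mul_apply, Matrix.map_apply, Polynomial.finsetSum_coeff,
    Polynomial.coeff_C_mul] at hij
  simp only [Matrix.add_apply, Matrix.smul_apply, smul_eq_mul, Matrix.mul_apply, newtonT, hij,
    matSym, Matrix.one_apply]
  split <;> simp

lemma newtonT_mul_add (M : Matrix ι ι ℝ) (k : ℕ) :
    newtonT M (k + 1) + newtonT M k * M = matSym M (k + 1) • (1 : Matrix ι ι ℝ) := by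
  have h := Matrix.adjugate_mul (oneAddX M)
  ext i j
  have hij := congrArg (fun A => (A i j).coeff (k + 1)) h
  simp only [oneAddX, mul_add, mul_one, Matrix.mul_smul] at hij
  rw [← oneAddX] at hij
  simp only [Matrix.add_apply, Matrix.smul_apply, smul_eq_mul, Polynomial.coeff_add,
    Polynomial.coeff_X_mul, Matrix.mul_apply, Matrix.map_apply, Polynomial.finsetSum_coeff,
    Polynomial.coeff_mul_C] at hij
  simp only [Matrix.add_apply, Matrix.smul_apply, smul_eq_mul, Matrix.mul_apply, newtonT, hij,
    matSym, Matrix.one_apply]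
  split <;> simp

lemma newtonT_succ (M : Matrix ι ι ℝ) (k : ℕ) :
    newtonT M (k + 1) = matSym M (k + 1) • (1 : Matrix ι ι ℝ) - M * newtonT M k :=
  eq_sub_of_add_eq (mul_newtonT_add M k)

lemma newtonT_succ' (M : Matrix ι ι ℝ) (k : ℕ) :
    newtonT M (k + 1) = matSym M (k + 1) • (1 : Matrix ι ι ℝ) - newtonT M k * M :=
  eq_sub_of_add_eq (newtonT_mul_add M k)

lemma newtonT_transpose {M : Matrix ι ι ℝ} (hM : M.transpose = M) (k : ℕ) :
    (newtonT M k).transpose = newtonT M k := by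
  induction k with
  | zero => simp [newtonT_zero]
  | succ k ih =>
    conv_lhs => rw [newtonT_succ]
    rw [Matrix.transpose_sub, Matrix.transpose_mul, ih, hM, newtonT_succ']
    simp

lemma natDegree_det_oneAddX_lt (M : Matrix ι ι ℝ) {N : ℕ} (hN : Fintype.card ι < N) :
    (oneAddX M).det.natDegree < N := by
  have := Polynomial.natDegree_det_X_add_C_le M (1 : Matrix ι ι ℝ)
  rw [Matrix.map_one _ (map_zero _) (map_one _), add_comm] at this
  exact lt_of_le_of_lt this hN

lemma matSym_smul (c : ℝ) (M : Matrix ι ι ℝ) (k : ℕ) : matSym (c • M) k = c ^ k * matSym M k := by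
  have h : (oneAddX (c • M)).det = (oneAddX M).det.comp (Polynomial.C c * Polynomial.X) := by
    refine Polynomial.funext fun t => ?_
    rw [Polynomial.eval_comp, eval_det_oneAddX, eval_det_oneAddX]
    rw [smul_smul, mul_comm t c]
    simp
  rw [matSym, h, Polynomial.comp_C_mul_X_coeff, matSym, mul_comm]

lemma trace_adjugate_oneAddX (M N : Matrix ι ι ℝ) (t : ℝ) :
    ((oneAddX M).adjugate * N.map Polynomial.C).trace.eval t = ((1 + t • M).adjugate * N).trace := by
  rw [← map_eval_adjugate_oneAddX]
  simp [Matrix.trace, Matrix.mul_apply, Polynomial.eval_finsetSum]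

lemma trace_newtonT_mul (M N : Matrix ι ι ℝ) (k : ℕ) :
    (newtonT M k * N).trace = ((oneAddX M).adjugate * N.map Polynomial.C).trace.coeff k := by
  simp [Matrix.trace, Matrix.mul_apply, newtonT, Polynomial.finsetSum_coeff]

lemma trace_newtonT_mul_of_hasDerivAt (M N : Matrix ι ι ℝ) (d : ℕ → ℝ)
    (hd : ∀ k, HasDerivAt (fun s : ℝ => matSym (M + s • N) k) (d k) 0) (k : ℕ) :
    d (k + 1) = (newtonT M k * N).trace := by
  set N₀ := Fintype.card ι + k + 2
  have hp : ∑ j ∈ Finset.range N₀, Polynomial.C (d j) * Polynomial.X ^ j =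
      Polynomial.X * ((oneAddX M).adjugate * N.map Polynomial.C).trace := by
    refine Polynomial.funext fun t => ?_
    have h1 : HasDerivAt (fun s : ℝ => (1 + t • M + s • (t • N)).det)
        (∑ j ∈ Finset.range N₀, d j * t ^ j) 0 := by
      have := HasDerivAt.fun_sum (u := Finset.range N₀) fun j _ => (hd j).mul_const (t ^ j)
      refine this.congr_of_eventuallyEq (Filter.Eventually.of_forall fun s => ?_)
      have e : 1 + t • M + s • (t • N) = 1 + t • (M + s • N) := by
        rw [smul_add, smul_comm, add_assoc]
      simp only [e]
      rw [← eval_det_oneAddX, Polynomial.eval_eq_sum_range'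
        (natDegree_det_oneAddX_lt (M + s • N) (N := N₀) (by omega))]
      rfl
    have h2 := h1.unique (hasDerivAt_det_add_smul (1 + t • M) (t • N))
    simp only [Polynomial.eval_finsetSum, Polynomial.eval_mul, Polynomial.eval_C,
      Polynomial.eval_pow, Polynomial.eval_X, trace_adjugate_oneAddX]
    rw [h2]; simp
  have := congrArg (fun p : Polynomial ℝ => p.coeff (k + 1)) hp
  simp only [Polynomial.finsetSum_coeff, Polynomial.coeff_C_mul, Polynomial.coeff_X_pow,
    Polynomial.coeff_X_mul] at this
  rw [trace_newtonT_mul, ← this]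
  simp [N₀]

lemma trace_newtonT_mul_self (M : Matrix ι ι ℝ) (k : ℕ) :
    (newtonT M k * M).trace = (k + 1) * matSym M (k + 1) := by
  have h := trace_newtonT_mul_of_hasDerivAt M M (fun k => k * matSym M k) (fun k => ?_) k
  · rw [← h]; push_cast; ring
  · have e : (fun s : ℝ => matSym (M + s • M) k) = fun s : ℝ => (1 + s) ^ k * matSym M k := by
      ext s
      rw [← matSym_smul, add_smul, one_smul]
    rw [e]
    have := (((hasDerivAt_id (0 : ℝ)).const_add 1).pow k).mul_const (matSym M k)
    simpa using this

lemma matSym_succ (M : Matrix ι ι ℝ) (k : ℕ) :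
    matSym M (k + 1) = (newtonT M k * M).trace / (k + 1) := by
  rw [trace_newtonT_mul_self]
  have : (k : ℝ) + 1 ≠ 0 := by positivity
  field_simp

/-- A property of functions stable under ring operations passes from the entries of a matrix-valued
function to its Newton transformations and elementary symmetric functions. -/
lemma newtonT_matSym_induction {α : Type*} (P : (α → ℝ) → Prop) (hconst : ∀ c : ℝ, P fun _ => c)
    (hadd : ∀ f g, P f → P g → P fun x => f x + g x)
    (hmul : ∀ f g, P f → P g → P fun x => f x * g x) (A : α → Matrix ι ι ℝ)
    (hA : ∀ i j, P fun x => A x i j) (k : ℕ) :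
    (∀ i j, P fun x => newtonT (A x) k i j) ∧ P fun x => matSym (A x) k := by
  have hsum : ∀ (S : Finset ι) (f : ι → α → ℝ), (∀ i, P (f i)) → P fun x => ∑ i ∈ S, f i x := by
    intro S f hf
    induction S using Finset.induction_on with
    | empty => simpa using hconst 0
    | insert i S hi ih => simpa [Finset.sum_insert hi] using hadd _ _ (hf i) ih
  induction k with
  | zero => exact ⟨fun i j => by simpa [newtonT_zero] using hconst _,
      by simpa [matSym_zero] using hconst 1⟩
  | succ k ih =>
    have hs : P fun x => matSym (A x) (k + 1) := by
      simp only [matSym_succ, Matrix.trace, Matrix.diag_apply, Matrix.mul_apply, div_eq_mul_inv]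
      exact hmul _ _ (hsum _ _ fun i => hsum _ _ fun j => hmul _ _ (ih.1 i j) (hA j i))
        (hconst _)
    refine ⟨fun i j => ?_, hs⟩
    have e : (fun x => newtonT (A x) (k + 1) i j) = fun x => matSym (A x) (k + 1) *
        (1 : Matrix ι ι ℝ) i j + (-1) * ∑ l, A x i l * newtonT (A x) k l j := by
      ext x
      rw [newtonT_succ, Matrix.sub_apply, Matrix.smul_apply, smul_eq_mul, Matrix.mul_apply]
      ring
    rw [e]
    exact hadd _ _ (hmul _ _ hs (hconst _)) (hmul _ _ (hconst _)
      (hsum _ _ fun l => hmul _ _ (hA i l) (ih.1 l j)))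

lemma hasDerivAt_matSym (M N : Matrix ι ι ℝ) (k : ℕ) :
    HasDerivAt (fun s : ℝ => matSym (M + s • N) (k + 1)) (newtonT M k * N).trace 0 := by
  have hd : ∀ k, DifferentiableAt ℝ (fun s : ℝ => matSym (M + s • N) k) 0 := fun k =>
    (newtonT_matSym_induction (fun f => DifferentiableAt ℝ f 0)
      (fun c => differentiableAt_const c) (fun f g hf hg => hf.add hg) (fun f g hf hg => hf.mul hg)
      (fun s : ℝ => M + s • N) (fun i j => by
        simp only [Matrix.add_apply, Matrix.smul_apply, smul_eq_mul]; fun_prop) k).2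
  rw [← trace_newtonT_mul_of_hasDerivAt M N (fun k => deriv (fun s : ℝ => matSym (M + s • N) k) 0)
    (fun k => (hd k).hasDerivAt) k]
  exact (hd (k + 1)).hasDerivAt

lemma matSym_eq_charpoly_coeff (M : Matrix ι ι ℝ) {k : ℕ} (hk : k ≤ Fintype.card ι) :
    matSym M k = (-1) ^ k * M.charpoly.coeff (Fintype.card ι - k) := by
  have h1 : M.charpolyRev.coeff k = M.charpoly.coeff (Fintype.card ι - k) := by
    rw [← Matrix.reverse_charpoly, Polynomial.coeff_reverse, Matrix.charpoly_natDegree_eq_dim,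
      Polynomial.revAt_le hk]
  have e : oneAddX (-M) = 1 - (Polynomial.X : Polynomial ℝ) • M.map Polynomial.C := by
    rw [oneAddX, sub_eq_add_neg, ← smul_neg]
    congr 2
    ext i j
    simp
  have h2 : matSym (-M) k = M.charpolyRev.coeff k := by rw [matSym, e, Matrix.charpolyRev]
  rw [← h1, ← h2, ← matSym_smul, neg_one_smul, neg_neg]

lemma matSym_diagonal (d : ι → ℝ) (k : ℕ) :
    matSym (Matrix.diagonal d) k = elemSym Finset.univ d k := by
  have : oneAddX (Matrix.diagonal d) =
      Matrix.diagonal fun i => 1 + Polynomial.C (d i) * Polynomial.X := by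
    ext i j
    by_cases h : i = j
    · subst h; simp [oneAddX]
    · simp [oneAddX, h]
  rw [matSym, this, Matrix.det_diagonal, elemSym]

lemma matSym_conj {P Q : Matrix ι ι ℝ} (h : P * Q = 1) (M : Matrix ι ι ℝ) (k : ℕ) :
    matSym (P * M * Q) k = matSym M k := by
  rw [matSym, matSym]
  congr 1
  refine Polynomial.funext fun t => ?_
  rw [eval_det_oneAddX, eval_det_oneAddX]
  have : 1 + t • (P * M * Q) = P * (1 + t • M) * Q := by
    rw [mul_add, add_mul, mul_one, h]; simp
  rw [this, Matrix.det_mul, Matrix.det_mul, mul_right_comm, ← Matrix.det_mul, h]; simp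

end

lemma elemSym_comp_perm {ι : Type*} [Fintype ι] (d : ι → ℝ) (ρ : Equiv.Perm ι) (k : ℕ) :
    elemSym Finset.univ (fun i => d (ρ i)) k = elemSym Finset.univ d k := by
  rw [elemSym, elemSym]
  congr 1
  exact Equiv.prod_comp ρ fun i => 1 + Polynomial.C (d i) * Polynomial.X

lemma convex_elemSym_strict {ι : Type*} [Fintype ι] (k : ℕ) {c : ℝ} (hc : 0 < c) (s : ℝ) :
    Convex ℝ {y : ι → ℝ | (∀ i, 0 ≤ y i) ∧ c ≤ elemSym Finset.univ y k ∧
      (2 ≤ k → c < elemSym Finset.univ y k ∨ ∑ i, y i ^ 2 = s)} := by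
  rw [convex_iff_forall_pos]
  rintro x ⟨hx, hxc, hxs⟩ y ⟨hy, hyc, hys⟩ a b ha hb hab
  by_cases hxy : x = y
  · subst hxy
    rw [← add_smul, hab, one_smul]
    exact ⟨hx, hxc, hxs⟩
  refine ⟨fun i => add_nonneg (mul_nonneg ha.le (hx i)) (mul_nonneg hb.le (hy i)),
    le_elemSym_combo _ hx hy ha hb hab hc hxc hyc, fun hk => Or.inl ?_⟩
  obtain ⟨i, hi⟩ := Function.ne_iff.1 hxy
  exact lt_elemSym_combo _ hx hy ha hb hab hk hc hxc hyc ⟨i, Finset.mem_univ _, hi⟩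

section
variable {ι : Type*} [Fintype ι] [DecidableEq ι]

lemma exists_orthogonal_diagonalization {X : Matrix ι ι ℝ} (hX : X.IsHermitian) :
    ∃ (U : Matrix ι ι ℝ) (d : ι → ℝ), U * U.transpose = 1 ∧ U.transpose * U = 1 ∧
      X = U * Matrix.diagonal d * U.transpose := by
  have h := hX.spectral_theorem
  refine ⟨hX.eigenvectorUnitary, hX.eigenvalues, ?_, ?_, ?_⟩
  · exact (Unitary.mem_iff.1 hX.eigenvectorUnitary.2).2
  · exact (Unitary.mem_iff.1 hX.eigenvectorUnitary.2).1
  · exact h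

/-- The elementary symmetric functions increase when passing from the eigenvalues of a positive
semidefinite matrix to its diagonal. -/
lemma le_elemSym_diag {X : Matrix ι ι ℝ} (hX : X.PosSemidef) {k : ℕ} {c : ℝ} (hc : 0 < c)
    (h : c ≤ matSym X k) :
    c ≤ elemSym Finset.univ X.diag k ∧
      (2 ≤ k → c < elemSym Finset.univ X.diag k ∨ X = Matrix.diagonal X.diag) := by
  obtain ⟨U, d, h1, h2, hXd⟩ := exists_orthogonal_diagonalization hX.isHermitian
  have hd : ∀ i, 0 ≤ d i := by
    intro i
    have := (hX.conjTranspose_mul_mul_same U).diag_nonneg (i := i)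
    have e : U.conjTranspose * X * U = Matrix.diagonal d := by
      rw [Matrix.conjTranspose_eq_transpose_of_trivial, hXd]
      calc U.transpose * (U * Matrix.diagonal d * U.transpose) * U
          = (U.transpose * U) * Matrix.diagonal d * (U.transpose * U) := by
            simp only [Matrix.mul_assoc]
        _ = _ := by rw [h2]; simp
    rw [e] at this
    simpa using this
  have hcd : c ≤ elemSym Finset.univ d k := by
    rwa [hXd, matSym_conj h1, matSym_diagonal] at h
  have hdiag : ∀ i, X.diag i = ∑ j, U i j ^ 2 * d j := by
    intro i
    rw [Matrix.diag_apply, hXd, Matrix.mul_apply]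
    refine Finset.sum_congr rfl fun j _ => ?_
    rw [Matrix.mul_diagonal, Matrix.transpose_apply]; ring
  have hS : (Matrix.of fun i j => U i j ^ 2) ∈ doublyStochastic ℝ ι := by
    rw [mem_doublyStochastic_iff_sum]
    refine ⟨fun i j => sq_nonneg _, fun i => ?_, fun j => ?_⟩
    · have := congrFun (congrFun h1 i) i
      simpa [Matrix.mul_apply, ← sq] using this
    · have := congrFun (congrFun h2 j) j
      simpa [Matrix.mul_apply, ← sq] using this
  obtain ⟨w, hw0, hw1, hw⟩ := exists_eq_sum_perm_of_mem_doublyStochastic hS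
  have hmem : X.diag ∈ {y : ι → ℝ | (∀ i, 0 ≤ y i) ∧ c ≤ elemSym Finset.univ y k ∧
      (2 ≤ k → c < elemSym Finset.univ y k ∨ ∑ i, y i ^ 2 = ∑ i, d i ^ 2)} := by
    have e : X.diag = ∑ ρ, w ρ • fun i => d (ρ i) := by
      ext i
      rw [hdiag]
      have : ∀ j, U i j ^ 2 = ∑ ρ, w ρ * Equiv.Perm.permMatrix ℝ ρ i j := by
        intro j
        have := congrFun (congrFun hw i) j
        simp only [Matrix.sum_apply, Matrix.smul_apply, smul_eq_mul, Matrix.of_apply] at this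
        exact this.symm
      simp only [this, Finset.sum_mul, Finset.sum_apply, Pi.smul_apply, smul_eq_mul]
      rw [Finset.sum_comm]
      refine Finset.sum_congr rfl fun ρ _ => ?_
      simp [Equiv.Perm.permMatrix, PEquiv.toMatrix_apply]
    rw [e]
    refine (convex_elemSym_strict k hc _).sum_mem (fun ρ _ => hw0 ρ) hw1 fun ρ _ => ?_
    refine ⟨fun i => hd _, by rwa [elemSym_comp_perm], fun _ => Or.inr ?_⟩
    exact Equiv.sum_comp ρ fun i => d i ^ 2
  refine ⟨hmem.2.1, fun hk => (hmem.2.2 hk).imp_right fun hsum => ?_⟩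
  have hfrob : ∑ i, ∑ j, X i j ^ 2 = ∑ i, d i ^ 2 := by
    have e1 : (X * X).trace = ∑ i, ∑ j, X i j ^ 2 := by
      simp only [Matrix.trace, Matrix.diag_apply, Matrix.mul_apply]
      refine Finset.sum_congr rfl fun i _ => Finset.sum_congr rfl fun j _ => ?_
      have : X j i = X i j := by simpa using hX.isHermitian.apply i j
      rw [this, sq]
    have e2 : X * X = U * Matrix.diagonal (fun i => d i * d i) * U.transpose := by
      conv_lhs => rw [hXd]
      calc U * Matrix.diagonal d * U.transpose * (U * Matrix.diagonal d * U.transpose)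
          = U * Matrix.diagonal d * (U.transpose * U) * Matrix.diagonal d * U.transpose := by
            simp only [Matrix.mul_assoc]
        _ = _ := by rw [h2, Matrix.mul_one, Matrix.mul_assoc U, Matrix.diagonal_mul_diagonal]
    rw [← e1, e2, Matrix.trace_mul_comm, ← Matrix.mul_assoc, h2, Matrix.one_mul,
      Matrix.trace_diagonal]
    simp [sq]
  have hz : ∀ i ∈ Finset.univ, ∑ j, X i j ^ 2 - X i i ^ 2 = 0 := by
    rw [← Finset.sum_eq_zero_iff_of_nonneg]
    · rw [Finset.sum_sub_distrib, hfrob, ← hsum]; simp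
    · intro i _
      have := Finset.single_le_sum (f := fun j => X i j ^ 2) (fun j _ => sq_nonneg _)
        (Finset.mem_univ i)
      simpa using this
  ext i j
  by_cases hij : i = j
  · subst hij; simp
  · rw [Matrix.diagonal_apply_ne _ hij]
    have h3 := hz i (Finset.mem_univ i)
    rw [← Finset.add_sum_erase _ _ (Finset.mem_univ i), add_sub_cancel_left,
      Finset.sum_eq_zero_iff_of_nonneg fun j _ => sq_nonneg _] at h3
    exact pow_eq_zero_iff (two_ne_zero) |>.1
      (h3 j (Finset.mem_erase.2 ⟨fun h => hij h.symm, Finset.mem_univ j⟩))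

lemma le_matSym_combo {X Y : Matrix ι ι ℝ} (hX : X.PosSemidef) (hY : Y.PosSemidef) {a b : ℝ}
    (ha : 0 < a) (hb : 0 < b) (hab : a + b = 1) {k : ℕ} {c : ℝ} (hc : 0 < c)
    (hXk : c ≤ matSym X k) (hYk : c ≤ matSym Y k) :
    c ≤ matSym (a • X + b • Y) k ∧ (2 ≤ k → X ≠ Y → c < matSym (a • X + b • Y) k) := by
  obtain ⟨U, d, h1, h2, hZ⟩ := exists_orthogonal_diagonalization
    ((hX.smul ha.le).add (hY.smul hb.le)).isHermitian
  have key : ∀ W : Matrix ι ι ℝ, W.PosSemidef → c ≤ matSym W k →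
      (U.transpose * W * U).PosSemidef ∧ c ≤ matSym (U.transpose * W * U) k := by
    intro W hW hWk
    refine ⟨?_, by rwa [matSym_conj h2]⟩
    have := hW.conjTranspose_mul_mul_same U
    rwa [Matrix.conjTranspose_eq_transpose_of_trivial] at this
  obtain ⟨hX1, hX2⟩ := key X hX hXk
  obtain ⟨hY1, hY2⟩ := key Y hY hYk
  set X' := U.transpose * X * U with hX'
  set Y' := U.transpose * Y * U with hY'
  have hd : d = a • X'.diag + b • Y'.diag := by
    have : Matrix.diagonal d = a • X' + b • Y' := by
      calc Matrix.diagonal d = (U.transpose * U) * Matrix.diagonal d * (U.transpose * U) := by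
            rw [h2]; simp
        _ = U.transpose * (U * Matrix.diagonal d * U.transpose) * U := by
            simp only [Matrix.mul_assoc]
        _ = _ := by
            rw [← hZ, hX', hY']
            simp [Matrix.mul_add, Matrix.add_mul]
    ext i
    have := congrFun (congrFun this i) i
    simpa using this
  rw [hZ, matSym_conj h1, matSym_diagonal, hd]
  obtain ⟨hX3, hX4⟩ := le_elemSym_diag hX1 hc hX2
  obtain ⟨hY3, hY4⟩ := le_elemSym_diag hY1 hc hY2
  have hX0 : ∀ i, 0 ≤ X'.diag i := fun i => hX1.diag_nonneg
  have hY0 : ∀ i, 0 ≤ Y'.diag i := fun i => hY1.diag_nonneg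
  refine ⟨le_elemSym_combo _ hX0 hY0 ha hb hab hc hX3 hY3, fun hk hne => ?_⟩
  by_cases hdd : X'.diag = Y'.diag
  · rw [← hdd, ← add_smul, hab, one_smul]
    rcases hX4 hk with h | h
    · exact h
    rcases hY4 hk with h' | h'
    · rwa [hdd]
    exfalso
    apply hne
    have e : X' = Y' := by rw [h, h', hdd]
    have back : ∀ W : Matrix ι ι ℝ, U * (U.transpose * W * U) * U.transpose = W := by
      intro W
      calc U * (U.transpose * W * U) * U.transpose = (U * U.transpose) * W * (U * U.transpose) := by
            simp only [Matrix.mul_assoc]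
        _ = W := by rw [h1]; simp
    rw [← back X, ← back Y, ← hX', ← hY', e]
  · obtain ⟨i, hi⟩ := Function.ne_iff.1 hdd
    exact lt_elemSym_combo _ hX0 hY0 ha hb hab hk hc hX3 hY3 ⟨i, Finset.mem_univ _, hi⟩

/-- Strict tangent inequality for the level sets of `matSym` on positive semidefinite matrices. -/
lemma lt_trace_newtonT_mul {X Y : Matrix ι ι ℝ} (hX : X.PosSemidef) (hY : Y.PosSemidef) {k : ℕ}
    (hk : 1 ≤ k) {c : ℝ} (hc : 0 < c) (hXk : matSym X (k + 1) = c) (hYk : matSym Y (k + 1) = c)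
    (hne : X ≠ Y) : (k + 1) * c < (newtonT Y k * X).trace := by
  have hmid := (le_matSym_combo hX hY (a := 1 / 2) (b := 1 / 2) (by norm_num) (by norm_num)
    (by norm_num) hc hXk.ge hYk.ge).2 (by omega) hne
  set m := (1 / 2 : ℝ) • X + (1 / 2 : ℝ) • Y with hm
  have hmP : m.PosSemidef := (hX.smul (by norm_num)).add (hY.smul (by norm_num))
  set c' := matSym m (k + 1) with hc'
  have hc'0 : 0 < c' := hc.trans hmid
  set r : ℝ := (c / c') ^ (1 / ((k + 1 : ℕ) : ℝ)) with hr
  have hr0 : 0 < r := Real.rpow_pos_of_pos (div_pos hc hc'0) _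
  have hrk : r ^ (k + 1) = c / c' := by
    rw [hr, one_div]
    exact Real.rpow_inv_natCast_pow (div_pos hc hc'0).le (by omega)
  have hr1 : r < 1 := Real.rpow_lt_one (div_pos hc hc'0).le ((div_lt_one hc'0).2 hmid)
    (by positivity)
  have hrm : matSym (r • m) (k + 1) = c := by
    rw [matSym_smul, hrk]; field_simp; rfl
  have hder := hasDerivAt_matSym Y (r • m - Y) k
  have hnn : 0 ≤ (newtonT Y k * (r • m - Y)).trace := by
    refine ge_of_tendsto (x := nhdsWithin (0 : ℝ) (Ioi 0)) (b := 0)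
      ((hasDerivAt_iff_tendsto_slope.1 hder).mono_left
        (nhdsWithin_mono _ fun x hx => ne_of_gt hx)) ?_
    filter_upwards [Ioo_mem_nhdsGT (show (0 : ℝ) < 1 by norm_num)] with t ht
    rw [slope_def_field, sub_zero]
    refine div_nonneg (sub_nonneg.2 ?_) ht.1.le
    have e : Y + t • (r • m - Y) = (1 - t) • Y + t • (r • m) := by
      rw [smul_sub, sub_smul, one_smul]; abel
    rw [e]
    simp only [zero_smul, add_zero, hYk]
    exact (le_matSym_combo hY (hmP.smul hr0.le) (sub_pos.2 ht.2) ht.1 (by ring) hc hYk.ge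
      hrm.ge).1
  have hE : (newtonT Y k * Y).trace = (k + 1) * c := by
    rw [trace_newtonT_mul_self, hYk]
  have e : (newtonT Y k * (r • m - Y)).trace =
      r * (1 / 2 * (newtonT Y k * X).trace + 1 / 2 * ((k + 1) * c)) - (k + 1) * c := by
    rw [Matrix.mul_sub, Matrix.trace_sub, hE, hm]
    simp only [Matrix.mul_smul, Matrix.mul_add, Matrix.trace_smul, Matrix.trace_add, smul_eq_mul,
      hE]
  rw [e] at hnn
  have hkc : 0 < (k + 1) * c := by positivity
  by_contra hle
  push Not at hle
  have : r * (1 / 2 * (newtonT Y k * X).trace + 1 / 2 * ((k + 1) * c)) ≤ r * ((k + 1) * c) :=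
    mul_le_mul_of_nonneg_left (by linarith) hr0.le
  nlinarith

lemma le_trace_newtonT_mul {X Y : Matrix ι ι ℝ} (hX : X.PosSemidef) (hY : Y.PosSemidef) {k : ℕ}
    (hk : 1 ≤ k) {c : ℝ} (hc : 0 < c) (hXk : matSym X (k + 1) = c) (hYk : matSym Y (k + 1) = c) :
    (k + 1) * c ≤ (newtonT Y k * X).trace := by
  by_cases hne : X = Y
  · subst hne
    rw [trace_newtonT_mul_self, hXk]
  · exact (lt_trace_newtonT_mul hX hY hk hc hXk hYk hne).le

end

/-- The partial derivative in the `i`-th coordinate direction. -/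
def pd {n : ℕ} (i : Fin (n + 1)) (f : V n → ℝ) (x : V n) : ℝ :=
  fderiv ℝ f x (EuclideanSpace.single i 1)

section
open scoped ContDiff
variable {n : ℕ}

lemma pd_add {i : Fin (n + 1)} {f g : V n → ℝ} {x : V n} (hf : DifferentiableAt ℝ f x)
    (hg : DifferentiableAt ℝ g x) : pd i (fun y => f y + g y) x = pd i f x + pd i g x := by
  rw [pd, fderiv_fun_add hf hg]; rfl

lemma pd_sub {i : Fin (n + 1)} {f g : V n → ℝ} {x : V n} (hf : DifferentiableAt ℝ f x)
    (hg : DifferentiableAt ℝ g x) : pd i (fun y => f y - g y) x = pd i f x - pd i g x := by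
  rw [pd, fderiv_fun_sub hf hg]; rfl

lemma pd_mul {i : Fin (n + 1)} {f g : V n → ℝ} {x : V n} (hf : DifferentiableAt ℝ f x)
    (hg : DifferentiableAt ℝ g x) :
    pd i (fun y => f y * g y) x = f x * pd i g x + g x * pd i f x := by
  rw [pd, fderiv_fun_mul hf hg]; rfl

lemma pd_const (i : Fin (n + 1)) (c : ℝ) (x : V n) : pd i (fun _ => c) x = 0 := by
  simp [pd]

lemma pd_sum {κ : Type*} (S : Finset κ) {i : Fin (n + 1)} {f : κ → V n → ℝ} {x : V n}
    (hf : ∀ a ∈ S, DifferentiableAt ℝ (f a) x) :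
    pd i (fun y => ∑ a ∈ S, f a y) x = ∑ a ∈ S, pd i (f a) x := by
  rw [pd, fderiv_fun_sum hf]; simp [pd]

lemma pd_congr {i : Fin (n + 1)} {f g : V n → ℝ} {x : V n} (h : f =ᶠ[nhds x] g) :
    pd i f x = pd i g x := by
  rw [pd, pd, h.fderiv_eq]

lemma fderiv_apply_eq_sum_pd (f : V n → ℝ) (x v : V n) :
    fderiv ℝ f x v = ∑ i, v i * pd i f x := by
  conv_lhs => rw [← (EuclideanSpace.basisFun (Fin (n + 1)) ℝ).sum_repr v]
  simp [pd]

variable {U : Set (V n)} {f g h : V n → ℝ}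

lemma differentiableAt_of_contDiffOn (hU : IsOpen U) (hf : ContDiffOn ℝ ∞ f U) {x : V n}
    (hx : x ∈ U) : DifferentiableAt ℝ f x :=
  (hf.contDiffAt (hU.mem_nhds hx)).differentiableAt (by simp)

lemma ContDiffOn.fderiv_infty (hU : IsOpen U) (hf : ContDiffOn ℝ ∞ f U) :
    ContDiffOn ℝ ∞ (fderiv ℝ f) U :=
  hf.fderiv_of_isOpen hU (by simp)

lemma ContDiffOn.pd_infty (hU : IsOpen U) (hf : ContDiffOn ℝ ∞ f U) (i : Fin (n + 1)) :
    ContDiffOn ℝ ∞ (pd i f) U :=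
  (hf.fderiv_infty hU).clm_apply contDiffOn_const

lemma hessM_eq_pd (hU : IsOpen U) (hf : ContDiffOn ℝ ∞ f U) {x : V n} (hx : x ∈ U)
    (i j : Fin (n + 1)) : hessM n f x i j = pd i (pd j f) x := by
  have hd : DifferentiableAt ℝ (fderiv ℝ f) x :=
    ((hf.fderiv_infty hU).contDiffAt (hU.mem_nhds hx)).differentiableAt (by simp)
  have : pd j f = fun y => fderiv ℝ f y (EuclideanSpace.single j 1) := rfl
  rw [hessM, pd, this, fderiv_clm_apply hd (by fun_prop)]
  simp

lemma hessM_comm (hU : IsOpen U) (hf : ContDiffOn ℝ ∞ f U) {x : V n} (hx : x ∈ U)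
    (i j : Fin (n + 1)) : hessM n f x i j = hessM n f x j i := by
  have h := (hf.contDiffAt (hU.mem_nhds hx)).isSymmSndFDerivAt (by
    simp only [minSmoothness_of_isRCLikeNormedField]
    exact WithTop.coe_le_coe.2 le_top)
  exact h _ _

lemma hessM_transpose (hU : IsOpen U) (hf : ContDiffOn ℝ ∞ f U) {x : V n} (hx : x ∈ U) :
    (hessM n f x).transpose = hessM n f x := by
  ext i j
  exact hessM_comm hU hf hx j i

lemma contDiffOn_hessM (hU : IsOpen U) (hf : ContDiffOn ℝ ∞ f U) (i j : Fin (n + 1)) :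
    ContDiffOn ℝ ∞ (fun x => hessM n f x i j) U :=
  ((hf.pd_infty hU j).pd_infty hU i).congr fun _ hx => hessM_eq_pd hU hf hx i j

lemma pd_hessM_comm (hU : IsOpen U) (hf : ContDiffOn ℝ ∞ f U) {x : V n} (hx : x ∈ U)
    (i a j : Fin (n + 1)) :
    pd i (fun y => hessM n f y a j) x = pd j (fun y => hessM n f y a i) x := by
  have e1 : ∀ a b, (fun y => hessM n f y a b) =ᶠ[nhds x] pd b (pd a f) := fun a b => by
    filter_upwards [hU.mem_nhds hx] with y hy
    rw [hessM_comm hU hf hy, hessM_eq_pd hU hf hy]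
  rw [pd_congr (e1 a j), pd_congr (e1 a i), ← hessM_eq_pd hU (hf.pd_infty hU a) hx,
    ← hessM_eq_pd hU (hf.pd_infty hU a) hx, hessM_comm hU (hf.pd_infty hU a) hx]

lemma contDiffOn_newtonT (hU : IsOpen U) (hf : ContDiffOn ℝ ∞ f U) (k : ℕ) :
    (∀ i j, ContDiffOn ℝ ∞ (fun x => newtonT (hessM n f x) k i j) U) ∧
      ContDiffOn ℝ ∞ (fun x => matSym (hessM n f x) k) U :=
  newtonT_matSym_induction (fun F => ContDiffOn ℝ ∞ F U) (fun _ => contDiffOn_const)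
    (fun _ _ h1 h2 => h1.add h2) (fun _ _ h1 h2 => h1.mul h2) (fun x => hessM n f x)
    (fun i j => contDiffOn_hessM hU hf i j) k

lemma pd_matSym (A : V n → Matrix (Fin (n + 1)) (Fin (n + 1)) ℝ) {x : V n}
    (hA : ∀ i j, DifferentiableAt ℝ (fun y => A y i j) x) (k : ℕ) (l : Fin (n + 1)) :
    pd l (fun y => matSym (A y) (k + 1)) x =
      ∑ i, ∑ j, newtonT (A x) k i j * pd l (fun y => A y j i) x := by
  set B : V n → (Fin (n + 1) → Fin (n + 1) → ℝ) := fun y i j => A y i j with hB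
  have hBd : DifferentiableAt ℝ B x := by
    rw [hB, differentiableAt_pi]; intro i; rw [differentiableAt_pi]; exact hA i
  set S : (Fin (n + 1) → Fin (n + 1) → ℝ) → ℝ := fun b => matSym (Matrix.of b) (k + 1) with hS
  have hSd : DifferentiableAt ℝ S (B x) :=
    (newtonT_matSym_induction (fun F => DifferentiableAt ℝ F (B x))
      (fun c => differentiableAt_const c) (fun _ _ h1 h2 => h1.add h2) (fun _ _ h1 h2 => h1.mul h2)
      (fun b : Fin (n + 1) → Fin (n + 1) → ℝ => Matrix.of b) (fun i j => by
        simp only [Matrix.of_apply]; fun_prop) (k + 1)).2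
  set N : Fin (n + 1) → Fin (n + 1) → ℝ := fun i j => pd l (fun y => A y i j) x with hN
  have hBN : fderiv ℝ B x (EuclideanSpace.single l 1) = N := by
    ext i j
    have h1 : fderiv ℝ B x = ContinuousLinearMap.pi fun i => ContinuousLinearMap.pi fun j =>
        fderiv ℝ (fun y => A y i j) x := by
      rw [hB, fderiv_pi (fun i => differentiableAt_pi.2 (hA i))]
      congr 1; ext1 i
      rw [fderiv_pi (hA i)]
    rw [h1]; rfl
  have h1 : pd l (fun y => matSym (A y) (k + 1)) x = fderiv ℝ S (B x) N := by
    have : (fun y => matSym (A y) (k + 1)) = S ∘ B := rfl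
    rw [pd, this, fderiv_comp x hSd hBd, ContinuousLinearMap.comp_apply, hBN]
  have h2 : fderiv ℝ S (B x) N = (newtonT (A x) k * Matrix.of N).trace := by
    have hl : HasDerivAt (fun s : ℝ => B x + s • N) N 0 := by
      have := ((hasDerivAt_id (0 : ℝ)).smul_const
        N).const_add (B x)
      simpa using this
    have h3 : HasFDerivAt S (fderiv ℝ S (B x))
        (B x + (0 : ℝ) • N) := by
      rw [zero_smul, add_zero]; exact hSd.hasFDerivAt
    exact (h3.comp_hasDerivAt (0 : ℝ) hl).unique (hasDerivAt_matSym (A x) (Matrix.of N) k)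
  rw [h1, h2]
  simp [Matrix.trace, Matrix.mul_apply, hN]

/-- The Newton transformations of a Hessian are divergence free. -/
lemma sum_pd_newtonT (hU : IsOpen U) (hf : ContDiffOn ℝ ∞ f U) {x : V n} (hx : x ∈ U) (k : ℕ)
    (j : Fin (n + 1)) : ∑ i, pd i (fun y => newtonT (hessM n f y) k i j) x = 0 := by
  have hd : ∀ i j, DifferentiableAt ℝ (fun y => hessM n f y i j) x := fun i j =>
    differentiableAt_of_contDiffOn hU (contDiffOn_hessM hU hf i j) hx
  induction k generalizing j with
  | zero => simp [newtonT_zero, pd_const]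
  | succ k ih =>
    have hT : ∀ i j, DifferentiableAt ℝ (fun y => newtonT (hessM n f y) k i j) x := fun i j =>
      differentiableAt_of_contDiffOn hU ((contDiffOn_newtonT hU hf k).1 i j) hx
    have hs : DifferentiableAt ℝ (fun y => matSym (hessM n f y) (k + 1)) x :=
      differentiableAt_of_contDiffOn hU (contDiffOn_newtonT hU hf (k + 1)).2 hx
    have e : ∀ i, pd i (fun y => newtonT (hessM n f y) (k + 1) i j) x =
        (1 : Matrix (Fin (n + 1)) (Fin (n + 1)) ℝ) i j *
            pd i (fun y => matSym (hessM n f y) (k + 1)) x -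
          ∑ a, (newtonT (hessM n f x) k i a * pd i (fun y => hessM n f y a j) x +
            hessM n f x a j * pd i (fun y => newtonT (hessM n f y) k i a) x) := by
      intro i
      have e1 : (fun y => newtonT (hessM n f y) (k + 1) i j) = fun y =>
          matSym (hessM n f y) (k + 1) * (1 : Matrix (Fin (n + 1)) (Fin (n + 1)) ℝ) i j -
            ∑ a, newtonT (hessM n f y) k i a * hessM n f y a j := by
        ext y
        rw [newtonT_succ', Matrix.sub_apply, Matrix.smul_apply, smul_eq_mul, Matrix.mul_apply]
      rw [e1, pd_sub (hs.fun_mul (differentiableAt_const _))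
        (DifferentiableAt.fun_sum fun a _ => (hT i a).fun_mul (hd a j)), pd_mul hs
        (differentiableAt_const _), pd_const, mul_zero, zero_add,
        pd_sum _ fun a _ => (hT i a).fun_mul (hd a j)]
      congr 1
      exact Finset.sum_congr rfl fun a _ => pd_mul (hT i a) (hd a j)
    simp only [e, Finset.sum_sub_distrib, Finset.sum_add_distrib]
    have e2 : ∑ i, ∑ a, hessM n f x a j * pd i (fun y => newtonT (hessM n f y) k i a) x = 0 := by
      rw [Finset.sum_comm]
      refine Finset.sum_eq_zero fun a _ => ?_
      rw [← Finset.mul_sum, ih, mul_zero]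
    rw [e2, add_zero, sub_eq_zero]
    simp only [Matrix.one_apply, ite_mul, one_mul, zero_mul, Finset.sum_ite_eq', Finset.mem_univ,
      if_true]
    rw [pd_matSym _ hd]
    refine Finset.sum_congr rfl fun i _ => Finset.sum_congr rfl fun a _ => ?_
    rw [pd_hessM_comm hU hf hx]

/-- The vector field `T_k(D²h)(f ∇g - g ∇f)`. -/
def newtonField (k : ℕ) (h f g : V n → ℝ) (i : Fin (n + 1)) (x : V n) : ℝ :=
  ∑ j, newtonT (hessM n h x) k i j * (f x * pd j g x - g x * pd j f x)

lemma contDiffOn_newtonField (hU : IsOpen U) (hh : ContDiffOn ℝ ∞ h U) (hf : ContDiffOn ℝ ∞ f U)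
    (hg : ContDiffOn ℝ ∞ g U) (k : ℕ) (i : Fin (n + 1)) :
    ContDiffOn ℝ ∞ (newtonField k h f g i) U :=
  ContDiffOn.sum fun j _ => ((contDiffOn_newtonT hU hh k).1 i j).mul
    ((hf.mul (hg.pd_infty hU j)).sub (hg.mul (hf.pd_infty hU j)))

lemma sum_pd_newtonField (hU : IsOpen U) (hh : ContDiffOn ℝ ∞ h U) (hf : ContDiffOn ℝ ∞ f U)
    (hg : ContDiffOn ℝ ∞ g U) (k : ℕ) {x : V n} (hx : x ∈ U) :
    ∑ i, pd i (newtonField k h f g i) x = f x * (newtonT (hessM n h x) k * hessM n g x).trace -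
      g x * (newtonT (hessM n h x) k * hessM n f x).trace := by
  have hT : ∀ i j, DifferentiableAt ℝ (fun y => newtonT (hessM n h y) k i j) x := fun i j =>
    differentiableAt_of_contDiffOn hU ((contDiffOn_newtonT hU hh k).1 i j) hx
  have df := differentiableAt_of_contDiffOn hU hf hx
  have dg := differentiableAt_of_contDiffOn hU hg hx
  have dpf := fun j => differentiableAt_of_contDiffOn hU (hf.pd_infty hU j) hx
  have dpg := fun j => differentiableAt_of_contDiffOn hU (hg.pd_infty hU j) hx
  have e : ∀ i, pd i (newtonField k h f g i) x = ∑ j, (newtonT (hessM n h x) k i j *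
      ((f x * hessM n g x j i + pd j g x * pd i f x) -
        (g x * hessM n f x j i + pd j f x * pd i g x)) +
      (f x * pd j g x - g x * pd j f x) * pd i (fun y => newtonT (hessM n h y) k i j) x) := by
    intro i
    have e0 : newtonField k h f g i = fun x => ∑ j, newtonT (hessM n h x) k i j *
      (f x * pd j g x - g x * pd j f x) := rfl
    rw [e0, pd_sum _ fun j _ => (hT i j).fun_mul ((df.fun_mul (dpg j)).fun_sub (dg.fun_mul (dpf j)))]
    refine Finset.sum_congr rfl fun j _ => ?_
    rw [pd_mul (hT i j) ((df.fun_mul (dpg j)).fun_sub (dg.fun_mul (dpf j))),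
      pd_sub (df.fun_mul (dpg j)) (dg.fun_mul (dpf j)), pd_mul df (dpg j), pd_mul dg (dpf j),
      ← hessM_eq_pd hU hf hx, ← hessM_eq_pd hU hg hx, hessM_comm hU hf hx i j,
      hessM_comm hU hg hx i j]
  have e3 : ∑ i, ∑ j, (f x * pd j g x - g x * pd j f x) *
      pd i (fun y => newtonT (hessM n h y) k i j) x = 0 := by
    rw [Finset.sum_comm]
    refine Finset.sum_eq_zero fun j _ => ?_
    rw [← Finset.mul_sum, sum_pd_newtonT hU hh hx, mul_zero]
  have e4 : ∑ i, ∑ j, newtonT (hessM n h x) k i j * (pd j g x * pd i f x) =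
      ∑ i, ∑ j, newtonT (hessM n h x) k i j * (pd j f x * pd i g x) := by
    rw [Finset.sum_comm]
    refine Finset.sum_congr rfl fun i _ => Finset.sum_congr rfl fun j _ => ?_
    have : newtonT (hessM n h x) k j i = newtonT (hessM n h x) k i j :=
      congrFun (congrFun (newtonT_transpose (hessM_transpose hU hh hx) k) i) j
    rw [this]; ring
  have e5 : ∀ w : V n → ℝ, (newtonT (hessM n h x) k * hessM n w x).trace =
      ∑ i, ∑ j, newtonT (hessM n h x) k i j * hessM n w x j i := fun w => by
    simp [Matrix.trace, Matrix.mul_apply]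
  simp only [e, mul_sub, mul_add, Finset.sum_add_distrib, Finset.sum_sub_distrib, e3, add_zero, e4,
    e5]
  simp only [Finset.mul_sum]
  rw [add_sub_add_right_eq_sub]
  congr 1 <;> refine Finset.sum_congr rfl fun i _ => Finset.sum_congr rfl fun j _ => by ring

end

/-- The interior of the cone over the spherical cap. -/
def openCone (n : ℕ) (θ : ℝ) : Set (V n) := {x | cos θ * ‖x‖ < x (Fin.last n)}

/-- `f` is smooth on `U ⊇ coneCap n θ`, positively 1-homogeneous on the cone, and its vertical
derivative vanishes on the boundary of the cone. -/
structure IsCapHom (n : ℕ) (θ : ℝ) (U : Set (V n)) (f : V n → ℝ) : Prop where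
  isOpen : IsOpen U
  subset : coneCap n θ ⊆ U
  smooth : ContDiffOn ℝ ((⊤ : ℕ∞) : WithTop ℕ∞) f U
  hom : ∀ l : ℝ, 0 < l → ∀ x ∈ coneCap n θ, f (l • x) = l * f x
  bdry : ∀ x : V n, x ≠ 0 → x (Fin.last n) = cos θ * ‖x‖ → pd (Fin.last n) f x = 0

section
open scoped ContDiff
variable {n : ℕ} {θ : ℝ}

lemma mem_coneCap {x : V n} : x ∈ coneCap n θ ↔ x ≠ 0 ∧ cos θ * ‖x‖ ≤ x (Fin.last n) := by
  constructor
  · rintro ⟨l, hl, u, ⟨hu1, hu2⟩, rfl⟩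
    have hu0 : u ≠ 0 := by rintro rfl; simp at hu1
    refine ⟨smul_ne_zero hl.ne' hu0, ?_⟩
    rw [norm_smul, hu1, Real.norm_of_nonneg hl.le, mul_one, PiLp.smul_apply, smul_eq_mul, mul_comm]
    exact mul_le_mul_of_nonneg_left hu2 hl.le
  · rintro ⟨hx0, hx⟩
    have hp := norm_pos_iff.2 hx0
    refine ⟨‖x‖, hp, ‖x‖⁻¹ • x, ⟨norm_smul_inv_norm hx0, ?_⟩, ?_⟩
    · rw [PiLp.smul_apply, smul_eq_mul, ← div_eq_inv_mul, le_div_iff₀ hp]; exact hx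
    · rw [smul_smul, mul_inv_cancel₀ hp.ne', one_smul]

lemma smul_mem_coneCap {l : ℝ} (hl : 0 < l) {x : V n} (hx : x ∈ coneCap n θ) :
    l • x ∈ coneCap n θ := by
  rw [mem_coneCap] at hx ⊢
  refine ⟨smul_ne_zero hl.ne' hx.1, ?_⟩
  rw [norm_smul, Real.norm_of_nonneg hl.le, PiLp.smul_apply, smul_eq_mul, mul_left_comm]
  exact mul_le_mul_of_nonneg_left hx.2 hl.le

lemma smul_mem_openCone {l : ℝ} (hl : 0 < l) {x : V n} (hx : x ∈ openCone n θ) :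
    l • x ∈ openCone n θ := by
  rw [openCone, Set.mem_ofPred_eq] at hx ⊢
  rw [norm_smul, Real.norm_of_nonneg hl.le, PiLp.smul_apply, smul_eq_mul, mul_left_comm]
  exact mul_lt_mul_of_pos_left hx hl

lemma openCone_subset : openCone n θ ⊆ coneCap n θ := by
  intro x hx
  rw [openCone, Set.mem_ofPred_eq] at hx
  refine mem_coneCap.2 ⟨?_, hx.le⟩
  rintro rfl
  simp at hx

lemma isOpen_openCone : IsOpen (openCone n θ) :=
  isOpen_lt (by fun_prop) (by fun_prop)

lemma sphCap_subset : sphCap n θ ⊆ coneCap n θ := fun u hu => ⟨1, one_pos, u, hu, by simp⟩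

lemma Etop_last : Etop n (Fin.last n) = 1 := by simp [Etop]

lemma norm_Etop : ‖Etop n‖ = 1 := by simp [Etop]

lemma cos_pos_lt_one (hθ : θ ∈ Ioo 0 (π / 2)) : 0 < cos θ ∧ cos θ < 1 := by
  have hs := sin_pos_of_pos_of_lt_pi hθ.1 (by linarith [hθ.2, pi_pos])
  have hc := cos_pos_of_mem_Ioo ⟨by linarith [hθ.1, pi_pos], hθ.2⟩
  exact ⟨hc, by nlinarith [sin_sq_add_cos_sq θ]⟩

lemma add_smul_Etop_mem_openCone (hθ : θ ∈ Ioo 0 (π / 2)) {x : V n}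
    (hx : cos θ * ‖x‖ ≤ x (Fin.last n)) {ε : ℝ} (hε : 0 < ε) : x + ε • Etop n ∈ openCone n θ := by
  obtain ⟨h0, h1⟩ := cos_pos_lt_one hθ
  have h2 : ‖x + ε • Etop n‖ ≤ ‖x‖ + ε := by
    refine (norm_add_le _ _).trans ?_
    rw [norm_smul, norm_Etop, Real.norm_of_nonneg hε.le, mul_one]
  rw [openCone, Set.mem_ofPred_eq, PiLp.add_apply, PiLp.smul_apply, Etop_last, smul_eq_mul, mul_one]
  calc cos θ * ‖x + ε • Etop n‖ ≤ cos θ * (‖x‖ + ε) := mul_le_mul_of_nonneg_left h2 h0.le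
    _ < x (Fin.last n) + ε := by nlinarith

lemma neBot_nhdsWithin_openCone (hθ : θ ∈ Ioo 0 (π / 2)) {x : V n} (hx : x ∈ coneCap n θ) :
    (nhdsWithin x (openCone n θ)).NeBot := by
  rw [← mem_closure_iff_nhdsWithin_neBot]
  have ht : Filter.Tendsto (fun ε : ℝ => x + ε • Etop n) (nhdsWithin 0 (Ioi 0)) (nhds x) := by
    have : ContinuousAt (fun ε : ℝ => x + ε • Etop n) 0 := by fun_prop
    have h2 := this.tendsto
    simp only [zero_smul, add_zero] at h2
    exact h2.mono_left nhdsWithin_le_nhds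
  refine mem_closure_of_tendsto ht ?_
  filter_upwards [self_mem_nhdsWithin] with ε hε
  exact add_smul_Etop_mem_openCone hθ (mem_coneCap.1 hx).2 hε

lemma eq_of_eqOn_openCone (hθ : θ ∈ Ioo 0 (π / 2)) {W : Type*} [TopologicalSpace W] [T2Space W]
    {F H : V n → W} {x : V n} (hx : x ∈ coneCap n θ) (hF : ContinuousAt F x)
    (hH : ContinuousAt H x) (h : ∀ y ∈ openCone n θ, F y = H y) : F x = H x := by
  have := neBot_nhdsWithin_openCone hθ hx
  refine tendsto_nhds_unique_of_eventuallyEq (hF.mono_left nhdsWithin_le_nhds)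
    (hH.mono_left (nhdsWithin_le_nhds (s := openCone n θ))) ?_
  filter_upwards [self_mem_nhdsWithin] with y hy using h y hy

/-- The gradient of a positively 1-homogeneous function is 0-homogeneous. -/
lemma fderiv_smul_of_hom {U : Set (V n)} {f : V n → ℝ} (hU : IsOpen U) (hsub : coneCap n θ ⊆ U)
    (hf : ContDiffOn ℝ ∞ f U)
    (hom : ∀ l : ℝ, 0 < l → ∀ x ∈ coneCap n θ, f (l • x) = l * f x) (hθ : θ ∈ Ioo 0 (π / 2)) {x : V n}
    (hx : x ∈ coneCap n θ) {l : ℝ} (hl : 0 < l) : fderiv ℝ f (l • x) = fderiv ℝ f x := by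
  have hd : ∀ {y : V n}, y ∈ coneCap n θ → DifferentiableAt ℝ f y := fun hy =>
    differentiableAt_of_contDiffOn hU hf (hsub hy)
  have hc : ∀ {y : V n}, y ∈ coneCap n θ → ContinuousAt (fderiv ℝ f) y := fun hy =>
    ((hf.fderiv_infty hU).contDiffAt (hU.mem_nhds (hsub hy))).continuousAt
  refine eq_of_eqOn_openCone hθ (F := fun y => fderiv ℝ f (l • y)) hx ?_
    (hc hx) fun y hy => ?_
  · exact ContinuousAt.comp (f := fun y : V n => l • y)
      (hc (smul_mem_coneCap hl hx)) (by fun_prop)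
  · have e : (fun w : V n => f (l • w)) =ᶠ[nhds y] fun w => l * f w := by
      filter_upwards [isOpen_openCone.mem_nhds hy] with w hw using hom l hl w (openCone_subset hw)
    have h1 : HasFDerivAt (fun w : V n => f (l • w))
        ((fderiv ℝ f (l • y)).comp (l • ContinuousLinearMap.id ℝ (V n))) y :=
      HasFDerivAt.comp y (hd (smul_mem_coneCap hl (openCone_subset hy))).hasFDerivAt
        ((hasFDerivAt_id y).const_smul l)
    have h2 := ((hd (openCone_subset hy)).hasFDerivAt.const_mul l)
    have h3 := (h1.congr_of_eventuallyEq e.symm).unique h2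
    ext v
    have h4 := congrArg (fun L : V n →L[ℝ] ℝ => L v) h3
    simp only [ContinuousLinearMap.comp_apply, smul_apply,
      ContinuousLinearMap.id_apply, map_smul, smul_eq_mul] at h4
    exact mul_left_cancel₀ hl.ne' h4

namespace IsCapHom
variable {U : Set (V n)} {f : V n → ℝ}

lemma mem_nhds (hf : IsCapHom n θ U f) {x : V n} (hx : x ∈ coneCap n θ) : U ∈ nhds x :=
  hf.isOpen.mem_nhds (hf.subset hx)

lemma differentiableAt (hf : IsCapHom n θ U f) {x : V n} (hx : x ∈ coneCap n θ) :
    DifferentiableAt ℝ f x :=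
  differentiableAt_of_contDiffOn hf.isOpen hf.smooth (hf.subset hx)

lemma contDiffAt_fderiv (hf : IsCapHom n θ U f) {x : V n} (hx : x ∈ coneCap n θ) :
    ContDiffAt ℝ ∞ (fderiv ℝ f) x :=
  (hf.smooth.fderiv_infty hf.isOpen).contDiffAt (hf.mem_nhds hx)

lemma differentiableAt_fderiv (hf : IsCapHom n θ U f) {x : V n} (hx : x ∈ coneCap n θ) :
    DifferentiableAt ℝ (fderiv ℝ f) x :=
  (hf.contDiffAt_fderiv hx).differentiableAt (by simp)

lemma continuousAt_fderiv_fderiv (hf : IsCapHom n θ U f) {x : V n} (hx : x ∈ coneCap n θ) :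
    ContinuousAt (fderiv ℝ (fderiv ℝ f)) x :=
  ((hf.smooth.fderiv_infty hf.isOpen).continuousOn_fderiv_of_isOpen hf.isOpen
    (by simp)).continuousAt (hf.mem_nhds hx)

lemma hasDerivAt_ray (x : V n) : HasDerivAt (fun t : ℝ => t • x) x 1 := by
  simpa using (hasDerivAt_id (1 : ℝ)).smul_const x

/-- Euler's relation. -/
lemma fderiv_self (hf : IsCapHom n θ U f) {x : V n} (hx : x ∈ coneCap n θ) :
    fderiv ℝ f x x = f x := by
  have h1 : HasFDerivAt f (fderiv ℝ f x) ((1 : ℝ) • x) := by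
    rw [one_smul]; exact (hf.differentiableAt hx).hasFDerivAt
  have h2 := h1.comp_hasDerivAt (1 : ℝ) (hasDerivAt_ray x)
  have h3 : HasDerivAt (fun t : ℝ => t * f x) (f x) 1 := by
    simpa using (hasDerivAt_id (1 : ℝ)).mul_const (f x)
  refine h2.unique (h3.congr_of_eventuallyEq ?_)
  filter_upwards [Ioi_mem_nhds (show (0 : ℝ) < 1 by norm_num)] with t ht using hf.hom t ht x hx

lemma fderiv_smul (hf : IsCapHom n θ U f) (hθ : θ ∈ Ioo 0 (π / 2)) {x : V n}
    (hx : x ∈ coneCap n θ) {l : ℝ} (hl : 0 < l) : fderiv ℝ f (l • x) = fderiv ℝ f x :=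
  fderiv_smul_of_hom hf.isOpen hf.subset hf.smooth hf.hom hθ hx hl

lemma fderiv_fderiv_self (hf : IsCapHom n θ U f) (hθ : θ ∈ Ioo 0 (π / 2)) {x : V n}
    (hx : x ∈ coneCap n θ) : fderiv ℝ (fderiv ℝ f) x x = 0 := by
  have h1 : HasFDerivAt (fderiv ℝ f) (fderiv ℝ (fderiv ℝ f) x) ((1 : ℝ) • x) := by
    rw [one_smul]; exact (hf.differentiableAt_fderiv hx).hasFDerivAt
  have h2 := h1.comp_hasDerivAt (1 : ℝ) (hasDerivAt_ray x)
  refine h2.unique ((hasDerivAt_const (1 : ℝ) (fderiv ℝ f x)).congr_of_eventuallyEq ?_)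
  filter_upwards [Ioi_mem_nhds (show (0 : ℝ) < 1 by norm_num)] with t ht
    using hf.fderiv_smul hθ hx ht

lemma fderiv_fderiv_smul (hf : IsCapHom n θ U f) (hθ : θ ∈ Ioo 0 (π / 2)) {x : V n}
    (hx : x ∈ coneCap n θ) {l : ℝ} (hl : 0 < l) :
    l • fderiv ℝ (fderiv ℝ f) (l • x) = fderiv ℝ (fderiv ℝ f) x := by
  refine eq_of_eqOn_openCone hθ (F := fun y => l • fderiv ℝ (fderiv ℝ f) (l • y)) hx ?_
    (hf.continuousAt_fderiv_fderiv hx) fun y hy => ?_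
  · exact (ContinuousAt.comp (f := fun y : V n => l • y)
      (hf.continuousAt_fderiv_fderiv (smul_mem_coneCap hl hx)) (by fun_prop)).const_smul l
  · have e : (fun w : V n => fderiv ℝ f (l • w)) =ᶠ[nhds y] fun w => fderiv ℝ f w := by
      filter_upwards [isOpen_openCone.mem_nhds hy] with w hw
        using hf.fderiv_smul hθ (openCone_subset hw) hl
    have h1 : HasFDerivAt (fun w : V n => fderiv ℝ f (l • w))
        ((fderiv ℝ (fderiv ℝ f) (l • y)).comp (l • ContinuousLinearMap.id ℝ (V n))) y :=
      HasFDerivAt.comp y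
        (hf.differentiableAt_fderiv (smul_mem_coneCap hl (openCone_subset hy))).hasFDerivAt
        ((hasFDerivAt_id y).const_smul l)
    have h2 := (hf.differentiableAt_fderiv (openCone_subset hy)).hasFDerivAt
    have h3 := (h1.congr_of_eventuallyEq e.symm).unique h2
    rw [← h3]
    ext v
    simp

lemma hessM_smul (hf : IsCapHom n θ U f) (hθ : θ ∈ Ioo 0 (π / 2)) {x : V n}
    (hx : x ∈ coneCap n θ) {l : ℝ} (hl : 0 < l) : l • hessM n f (l • x) = hessM n f x := by
  ext i j
  rw [hessM, ← hf.fderiv_fderiv_smul hθ hx hl]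
  rfl

lemma hessM_mulVec_self (hf : IsCapHom n θ U f) (hθ : θ ∈ Ioo 0 (π / 2)) {x : V n}
    (hx : x ∈ coneCap n θ) : (hessM n f x).mulVec (fun i => x i) = 0 := by
  ext i
  have hxU := hf.subset hx
  have h1 : ∀ j, hessM n f x i j = pd j (pd i f) x := fun j => by
    rw [hessM_comm hf.isOpen hf.smooth hxU, hessM_eq_pd hf.isOpen hf.smooth hxU]
  have h2 : (hessM n f x).mulVec (fun i => x i) i = fderiv ℝ (pd i f) x x := by
    rw [fderiv_apply_eq_sum_pd, Matrix.mulVec, dotProduct]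
    refine Finset.sum_congr rfl fun j _ => ?_
    rw [h1, mul_comm]
  have h3 : pd i f = fun y => fderiv ℝ f y (EuclideanSpace.single i 1) := rfl
  rw [h2, h3, fderiv_clm_apply (hf.differentiableAt_fderiv hx) (by fun_prop)]
  simp [hf.fderiv_fderiv_self hθ hx]

end IsCapHom

lemma hasStrictFDerivAt_norm {x : V n} (hx : x ≠ 0) :
    HasStrictFDerivAt (fun y : V n => ‖y‖) (‖x‖⁻¹ • innerSL ℝ x) x := by
  have h := (hasStrictFDerivAt_norm_sq x).sqrt (by positivity)
  simp only [Real.sqrt_sq (norm_nonneg _)] at h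
  have e : (1 / (2 * ‖x‖)) • (2 • innerSL ℝ x) = ‖x‖⁻¹ • innerSL ℝ x := by
    rw [← Nat.cast_smul_eq_nsmul ℝ, smul_smul]
    congr 1
    field_simp
    norm_num
  rwa [e] at h

/-- The defining function of the cone. -/
def coneFn (n : ℕ) (θ : ℝ) (x : V n) : ℝ := x (Fin.last n) - cos θ * ‖x‖

lemma hasStrictFDerivAt_coneFn {x : V n} (hx : x ≠ 0) :
    HasStrictFDerivAt (coneFn n θ)
      (EuclideanSpace.proj (Fin.last n) - cos θ • (‖x‖⁻¹ • innerSL ℝ x)) x := by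
  have h1 : HasStrictFDerivAt (fun y : V n => y (Fin.last n))
      (EuclideanSpace.proj (𝕜 := ℝ) (Fin.last n)) x :=
    (EuclideanSpace.proj (𝕜 := ℝ) (Fin.last n)).hasStrictFDerivAt
  exact h1.sub ((hasStrictFDerivAt_norm hx).const_mul (cos θ))

namespace IsCapHom
variable {U : Set (V n)} {f g h : V n → ℝ}

lemma hessM_mulVec_Etop (hf : IsCapHom n θ U f) (hθ : θ ∈ Ioo 0 (π / 2)) {x : V n} (hx0 : x ≠ 0)
    (hx : x (Fin.last n) = cos θ * ‖x‖) :
    ∃ a b : ℝ, (hessM n f x).mulVec (fun i => Etop n i) =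
      a • (fun i => Etop n i) + b • (fun i => x i) := by
  have hxC : x ∈ coneCap n θ := mem_coneCap.2 ⟨hx0, hx.ge⟩
  have hz : ∀ y : V n, coneFn n θ y = coneFn n θ x ↔ y (Fin.last n) = cos θ * ‖y‖ := by
    intro y
    have : coneFn n θ x = 0 := by rw [coneFn, hx, sub_self]
    rw [this, coneFn, sub_eq_zero]
  have hext : IsLocalExtrOn (pd (Fin.last n) f) {y | coneFn n θ y = coneFn n θ x} x := by
    left
    have : ∀ᶠ y in nhdsWithin x {y | coneFn n θ y = coneFn n θ x}, y ≠ 0 :=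
      nhdsWithin_le_nhds (isOpen_ne.mem_nhds hx0)
    filter_upwards [this, self_mem_nhdsWithin] with y hy0 hy
    rw [hf.bdry x hx0 hx, hf.bdry y hy0 ((hz y).1 hy)]
  have hsm : ContDiffAt ℝ ∞ (pd (Fin.last n) f) x :=
    (hf.smooth.pd_infty hf.isOpen _).contDiffAt (hf.mem_nhds hxC)
  obtain ⟨a, b, hab, h0⟩ := hext.exists_multipliers_of_hasStrictFDerivAt_1d
    (hasStrictFDerivAt_coneFn hx0) (hsm.hasStrictFDerivAt (by simp))
  have happ : ∀ v : V n, a * (v (Fin.last n) - cos θ * (‖x‖⁻¹ * ⟪x, v⟫)) +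
      b * fderiv ℝ (pd (Fin.last n) f) x v = 0 := by
    intro v
    simpa using congrArg (fun L : V n →L[ℝ] ℝ => L v) h0
  have hb : b ≠ 0 := by
    rintro rfl
    have ha : a ≠ 0 := by rintro rfl; simp at hab
    have h1 := happ (Etop n)
    rw [Etop_last, Etop, EuclideanSpace.inner_single_right, hx] at h1
    have hn := norm_ne_zero_iff.2 hx0
    have e : ‖x‖⁻¹ * (cos θ * ‖x‖) = cos θ := by field_simp
    have h2 : a * (1 - cos θ * cos θ) = 0 := by
      simpa only [conj_trivial, one_mul, e, zero_mul, add_zero] using h1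
    obtain ⟨c0, c1⟩ := cos_pos_lt_one hθ
    have : 1 - cos θ * cos θ ≠ 0 := by nlinarith
    exact (mul_ne_zero ha this) h2
  refine ⟨-a / b, a / b * (cos θ * ‖x‖⁻¹), ?_⟩
  ext i
  have h1 := happ (EuclideanSpace.single i 1)
  have h2 : (hessM n f x).mulVec (fun i => Etop n i) i =
      fderiv ℝ (pd (Fin.last n) f) x (EuclideanSpace.single i 1) := by
    have : (fun i => Etop n i) = Pi.single (Fin.last n) (1 : ℝ) := rfl
    rw [this, Matrix.mulVec_single_one, Matrix.col_apply,
      hessM_eq_pd hf.isOpen hf.smooth (hf.subset hxC), pd]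
  have h3 : (EuclideanSpace.single i (1 : ℝ) : V n) (Fin.last n) = Etop n i := by
    simp [Etop, eq_comm]
  rw [h3, EuclideanSpace.inner_single_right] at h1
  rw [h2]
  simp only [Pi.add_apply, Pi.smul_apply, smul_eq_mul]
  simp only [conj_trivial, one_mul] at h1
  have h4 : fderiv ℝ (pd (Fin.last n) f) x (EuclideanSpace.single i 1) =
      -(a * (Etop n i - cos θ * (‖x‖⁻¹ * x i))) / b := by
    rw [eq_div_iff hb]; linarith
  rw [h4]
  ring

lemma newtonT_mulVec_self (hf : IsCapHom n θ U f) (hθ : θ ∈ Ioo 0 (π / 2)) {x : V n}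
    (hx : x ∈ coneCap n θ) (k : ℕ) : (newtonT (hessM n f x) k).mulVec (fun i => x i) =
      matSym (hessM n f x) k • (fun i => x i) := by
  cases k with
  | zero => rw [newtonT_zero, matSym_zero, Matrix.one_mulVec, one_smul]
  | succ k =>
    rw [newtonT_succ', Matrix.sub_mulVec, ← Matrix.mulVec_mulVec, hf.hessM_mulVec_self hθ hx,
      Matrix.mulVec_zero, sub_zero, Matrix.smul_mulVec, Matrix.one_mulVec]

lemma newtonT_mulVec_Etop (hf : IsCapHom n θ U f) (hθ : θ ∈ Ioo 0 (π / 2)) {x : V n} (hx0 : x ≠ 0)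
    (hx : x (Fin.last n) = cos θ * ‖x‖) (k : ℕ) :
    ∃ a b : ℝ, (newtonT (hessM n f x) k).mulVec (fun i => Etop n i) =
      a • (fun i => Etop n i) + b • (fun i => x i) := by
  induction k with
  | zero => exact ⟨1, 0, by simp [newtonT_zero]⟩
  | succ k ih =>
    obtain ⟨a, b, h1⟩ := ih
    obtain ⟨c, d, h2⟩ := hf.hessM_mulVec_Etop hθ hx0 hx
    refine ⟨matSym (hessM n f x) (k + 1) - a * c, -(a * d), ?_⟩
    rw [newtonT_succ, Matrix.sub_mulVec, ← Matrix.mulVec_mulVec, h1, Matrix.mulVec_add,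
      Matrix.mulVec_smul, Matrix.mulVec_smul, h2,
      hf.hessM_mulVec_self hθ (mem_coneCap.2 ⟨hx0, hx.ge⟩), Matrix.smul_mulVec, Matrix.one_mulVec]
    module

lemma sum_mul_newtonField (hh : IsCapHom n θ U h) {x : V n} (hx : x ∈ coneCap n θ) (k : ℕ)
    (w : Fin (n + 1) → ℝ) : ∑ i, w i * newtonField k h f g i x =
      ∑ j, (newtonT (hessM n h x) k).mulVec w j * (f x * pd j g x - g x * pd j f x) := by
  have hT : ∀ i j, newtonT (hessM n h x) k i j = newtonT (hessM n h x) k j i := fun i j =>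
    congrFun (congrFun (newtonT_transpose
      (hessM_transpose hh.isOpen hh.smooth (hh.subset hx)) k) j) i
  simp only [newtonField, Finset.mul_sum, Matrix.mulVec, dotProduct, Finset.sum_mul]
  rw [Finset.sum_comm]
  refine Finset.sum_congr rfl fun i _ => Finset.sum_congr rfl fun j _ => ?_
  rw [hT j i]; ring

lemma sum_coord_mul_newtonField (hh : IsCapHom n θ U h) (hf : IsCapHom n θ U f)
    (hg : IsCapHom n θ U g) (hθ : θ ∈ Ioo 0 (π / 2)) {x : V n} (hx : x ∈ coneCap n θ) (k : ℕ) :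
    ∑ i, x i * newtonField k h f g i x = 0 := by
  rw [hh.sum_mul_newtonField hx, hh.newtonT_mulVec_self hθ hx]
  have hf1 := hf.fderiv_self hx
  have hg1 := hg.fderiv_self hx
  rw [fderiv_apply_eq_sum_pd] at hf1 hg1
  calc _ = matSym (hessM n h x) k * (f x * ∑ j, x j * pd j g x - g x * ∑ j, x j * pd j f x) := by
        simp only [Finset.mul_sum, ← Finset.sum_sub_distrib]
        refine Finset.sum_congr rfl fun j _ => ?_
        simp only [Pi.smul_apply, smul_eq_mul]; ring
    _ = 0 := by rw [hf1, hg1]; ring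

lemma newtonField_last (hh : IsCapHom n θ U h) (hf : IsCapHom n θ U f)
    (hg : IsCapHom n θ U g) (hθ : θ ∈ Ioo 0 (π / 2)) {x : V n} (hx0 : x ≠ 0)
    (hx : x (Fin.last n) = cos θ * ‖x‖) (k : ℕ) : newtonField k h f g (Fin.last n) x = 0 := by
  have hxC : x ∈ coneCap n θ := mem_coneCap.2 ⟨hx0, hx.ge⟩
  have e : ∀ F : Fin (n + 1) → ℝ, F (Fin.last n) = ∑ i, Etop n i * F i := fun F => by
    simp [Etop]
  obtain ⟨a, b, hab⟩ := hh.newtonT_mulVec_Etop hθ hx0 hx k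
  have e1 := e (fun i => newtonField k h f g i x)
  simp only at e1
  rw [e1, hh.sum_mul_newtonField hxC, hab]
  have hf1 := hf.fderiv_self hxC
  have hg1 := hg.fderiv_self hxC
  rw [fderiv_apply_eq_sum_pd] at hf1 hg1
  have hf2 := (e fun i => pd i f x).symm.trans (hf.bdry x hx0 hx)
  have hg2 := (e fun i => pd i g x).symm.trans (hg.bdry x hx0 hx)
  calc _ = a * (f x * ∑ j, Etop n j * pd j g x - g x * ∑ j, Etop n j * pd j f x) +
        b * (f x * ∑ j, x j * pd j g x - g x * ∑ j, x j * pd j f x) := by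
        simp only [Finset.mul_sum, ← Finset.sum_sub_distrib, ← Finset.sum_add_distrib]
        refine Finset.sum_congr rfl fun j _ => ?_
        simp only [Pi.smul_apply, Pi.add_apply, smul_eq_mul]; ring
    _ = 0 := by rw [hf1, hg1, hf2, hg2]; ring

end IsCapHom

end

/-- A bump function on the line, positive exactly on `(1, 3)`. -/
def shellBump : ContDiffBump (2 : ℝ) := ⟨1 / 2, 1, by norm_num, by norm_num⟩

/-- A radial cut-off function, positive exactly on the shell `1 < ‖x‖² < 3`. -/
def shellFn {n : ℕ} (x : V n) : ℝ := shellBump (‖x‖ ^ 2)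

/-- A cut-off function in the variable `coneFn`, vanishing near the complement of the cone. -/
def cutFn (n : ℕ) (θ m : ℝ) (x : V n) : ℝ := smoothTransition (m * coneFn n θ x - 1)

section
open scoped ContDiff
variable {n : ℕ} {θ : ℝ}

lemma shellFn_pos_iff {x : V n} : 0 < shellFn x ↔ 1 < ‖x‖ ^ 2 ∧ ‖x‖ ^ 2 < 3 := by
  have h : ‖x‖ ^ 2 ∈ Function.support shellBump ↔ 1 < ‖x‖ ^ 2 ∧ ‖x‖ ^ 2 < 3 := by
    rw [shellBump.support_eq, Metric.mem_ball, Real.dist_eq, abs_lt]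
    constructor
    · rintro ⟨h1, h2⟩
      simp only [shellBump] at h1 h2
      constructor <;> linarith
    · rintro ⟨h1, h2⟩
      simp only [shellBump]
      constructor <;> linarith
  rw [← h, Function.mem_support, shellFn]
  exact ⟨fun h => h.ne', fun h => lt_of_le_of_ne shellBump.nonneg h.symm⟩

lemma shellFn_nonneg (x : V n) : 0 ≤ shellFn x := shellBump.nonneg

lemma shellFn_le_one (x : V n) : shellFn x ≤ 1 := shellBump.le_one

lemma contDiff_shellFn : ContDiff ℝ ∞ (shellFn (n := n)) :=
  shellBump.contDiff.comp (contDiff_norm_sq ℝ)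

lemma pd_shellFn (i : Fin (n + 1)) (x : V n) :
    pd i shellFn x = deriv shellBump (‖x‖ ^ 2) * (2 * x i) := by
  have h1 : HasDerivAt shellBump (deriv shellBump (‖x‖ ^ 2)) (‖x‖ ^ 2) :=
    ((shellBump.contDiff (n := 1)).differentiable (by simp) _).hasDerivAt
  have h2 := h1.comp_hasFDerivAt x (hasStrictFDerivAt_norm_sq x).hasFDerivAt
  have h3 : HasFDerivAt shellFn _ x := h2
  rw [pd, h3.fderiv]
  simp [EuclideanSpace.inner_single_right]

lemma exists_deriv_smoothTransition_bound : ∃ A : ℝ, ∀ t, |deriv smoothTransition t| ≤ A := by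
  have hc : Continuous (deriv smoothTransition) :=
    (smoothTransition.contDiff (n := 1)).continuous_deriv (by simp)
  have hs : HasCompactSupport (deriv smoothTransition) := by
    refine HasCompactSupport.intro (isCompact_Icc (a := (0 : ℝ)) (b := 1)) fun t ht => ?_
    rw [mem_Icc, not_and_or, not_le, not_le] at ht
    rcases ht with ht | ht
    · have : smoothTransition =ᶠ[nhds t] fun _ => 0 := by
        filter_upwards [Iio_mem_nhds ht] with s hs using smoothTransition.zero_of_nonpos (le_of_lt hs)
      rw [this.deriv_eq, deriv_const]
    · have : smoothTransition =ᶠ[nhds t] fun _ => 1 := by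
        filter_upwards [Ioi_mem_nhds ht] with s hs using smoothTransition.one_of_one_le (le_of_lt hs)
      rw [this.deriv_eq, deriv_const]
  exact hs.exists_bound_of_continuous hc

lemma deriv_smoothTransition_of_one_lt {t : ℝ} (ht : 1 < t) : deriv smoothTransition t = 0 := by
  have : smoothTransition =ᶠ[nhds t] fun _ => 1 := by
    filter_upwards [Ioi_mem_nhds ht] with s hs using smoothTransition.one_of_one_le (le_of_lt hs)
  rw [this.deriv_eq, deriv_const]

lemma continuous_coneFn : Continuous (coneFn n θ) := by
  unfold coneFn; fun_prop

lemma contDiffAt_coneFn {x : V n} (hx : x ≠ 0) : ContDiffAt ℝ ∞ (coneFn n θ) x := by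
  unfold coneFn
  have h1 : ContDiff ℝ ∞ fun y : V n => y (Fin.last n) :=
    (EuclideanSpace.proj (𝕜 := ℝ) (Fin.last n)).contDiff
  exact h1.contDiffAt.sub (contDiffAt_const.mul (contDiffAt_norm ℝ hx))

lemma contDiffAt_cutFn (m : ℝ) {x : V n} (hx : x ≠ 0) : ContDiffAt ℝ ∞ (cutFn n θ m) x :=
  smoothTransition.contDiff.contDiffAt.comp x
    ((contDiffAt_const.mul (contDiffAt_coneFn hx)).sub contDiffAt_const)

lemma pd_cutFn (m : ℝ) (i : Fin (n + 1)) {x : V n} (hx : x ≠ 0) :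
    pd i (cutFn n θ m) x = deriv smoothTransition (m * coneFn n θ x - 1) *
      (m * (Etop n i - cos θ * (‖x‖⁻¹ * x i))) := by
  have h1 : HasDerivAt smoothTransition (deriv smoothTransition (m * coneFn n θ x - 1))
      (m * coneFn n θ x - 1) :=
    ((smoothTransition.contDiff (n := 1)).differentiable (by simp) _).hasDerivAt
  have h2 := h1.comp_hasFDerivAt x
    (((hasStrictFDerivAt_coneFn (θ := θ) hx).hasFDerivAt.const_mul m).sub_const 1)
  have h3 : HasFDerivAt (cutFn n θ m) _ x := h2
  rw [pd, h3.fderiv]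
  have h4 : (EuclideanSpace.single i (1 : ℝ) : V n) (Fin.last n) = Etop n i := by
    simp [Etop, eq_comm]
  simp [EuclideanSpace.inner_single_right, ← h4]

lemma integral_pd_eq_zero {f : V n → ℝ} (hf : ContDiff ℝ 1 f) (hs : HasCompactSupport f)
    (i : Fin (n + 1)) : Integrable (pd i f) ∧ ∫ x, pd i f x = 0 := by
  have hc : Continuous (pd i f) := (hf.continuous_fderiv (by simp)).clm_apply continuous_const
  have hsp : HasCompactSupport (pd i f) := hs.fderiv_apply ℝ _
  have hi : Integrable (pd i f) := hc.integrable_of_hasCompactSupport hsp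
  refine ⟨hi, ?_⟩
  have e : pd i f = fun x => fderiv ℝ f x (EuclideanSpace.single i 1) := rfl
  rw [e] at hi ⊢
  have h := integral_mul_fderiv_eq_neg_fderiv_mul_of_integrable (μ := (volume : Measure (V n)))
    (f := fun _ => (1 : ℝ)) (g := f) (v := EuclideanSpace.single i 1) (by simp)
    (by simpa using hi) (by simpa using hf.continuous.integrable_of_hasCompactSupport hs)
    (fun x _ => differentiableAt_const _) (fun x _ => hf.differentiable (by simp) x)
  simpa using h

/-- A function of class `C¹` near the closed cone and vanishing on its boundary is locally bounded
by a multiple of the defining function. -/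
lemma exists_local_abs_le_coneFn (hθ : θ ∈ Ioo 0 (π / 2)) {F : V n → ℝ} {x₀ : V n}
    (hx₀ : x₀ ∈ coneCap n θ) (hF : ContDiffAt ℝ 1 F x₀)
    (h0 : ∀ x : V n, x ≠ 0 → x (Fin.last n) = cos θ * ‖x‖ → F x = 0) :
    ∃ C : ℝ, 0 ≤ C ∧ ∀ᶠ x in nhds x₀, x ∈ coneCap n θ → |F x| ≤ C * coneFn n θ x := by
  obtain ⟨c0, c1⟩ := cos_pos_lt_one hθ
  obtain ⟨hx0, hxz⟩ := mem_coneCap.1 hx₀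
  rcases hxz.lt_or_eq with hlt | heq
  · have hz : 0 < coneFn n θ x₀ := sub_pos.2 hlt
    refine ⟨(|F x₀| + 1) / (coneFn n θ x₀ / 2), by positivity, ?_⟩
    have h1 : ∀ᶠ x in nhds x₀, |F x| < |F x₀| + 1 :=
      hF.continuousAt.abs.eventually_lt continuousAt_const (by linarith)
    have h2 : ∀ᶠ x in nhds x₀, coneFn n θ x₀ / 2 < coneFn n θ x :=
      continuousAt_const.eventually_lt continuous_coneFn.continuousAt (by linarith)
    filter_upwards [h1, h2] with x hx1 hx2 _
    rw [div_mul_eq_mul_div, le_div_iff₀ (by linarith)]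
    exact mul_le_mul hx1.le hx2.le (by linarith) (by positivity)
  · obtain ⟨L, t, ht, hL⟩ := hF.exists_lipschitzOnWith
    obtain ⟨r, hr, hrt⟩ := Metric.mem_nhds_iff.1 (Filter.inter_mem ht (isOpen_ne.mem_nhds hx0))
    refine ⟨L / (1 - cos θ), div_nonneg L.2 (by linarith), ?_⟩
    have hz0 : coneFn n θ x₀ = 0 := by rw [coneFn, heq, sub_self]
    have h1 : ∀ᶠ x in nhds x₀, coneFn n θ x / (1 - cos θ) < r / 2 :=
      (continuous_coneFn.continuousAt.div_const _).eventually_lt continuousAt_const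
        (by rw [hz0, zero_div]; positivity)
    filter_upwards [h1, Metric.ball_mem_nhds x₀ (half_pos hr)] with x hx1 hx2 hxC
    have hz : 0 ≤ coneFn n θ x := sub_nonneg.2 (mem_coneCap.1 hxC).2
    set t1 := coneFn n θ x / (1 - cos θ) with ht1
    have ht10 : 0 ≤ t1 := div_nonneg hz (by linarith)
    have hcont : ContinuousOn (fun s : ℝ => coneFn n θ (x - s • Etop n)) (Icc 0 t1) :=
      (continuous_coneFn.comp (by fun_prop)).continuousOn
    have hend : coneFn n θ (x - t1 • Etop n) ≤ 0 := by
      have h2 : ‖x‖ - t1 ≤ ‖x - t1 • Etop n‖ := by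
        have := norm_sub_norm_le x (t1 • Etop n)
        rwa [norm_smul, norm_Etop, Real.norm_of_nonneg ht10, mul_one] at this
      have h3 : t1 * (1 - cos θ) = coneFn n θ x := div_mul_cancel₀ _ (by linarith)
      rw [coneFn] at h3
      rw [coneFn, PiLp.sub_apply, PiLp.smul_apply, Etop_last, smul_eq_mul, mul_one]
      nlinarith [mul_le_mul_of_nonneg_left h2 c0.le]
    obtain ⟨s, hs, hs0⟩ := intermediate_value_Icc' ht10 hcont
      (show (0 : ℝ) ∈ Icc _ _ from ⟨hend, by simpa using hz⟩)
    set y := x - s • Etop n with hy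
    have hxy : dist x y = s := by
      rw [dist_eq_norm, hy, sub_sub_cancel, norm_smul, norm_Etop, Real.norm_of_nonneg hs.1, mul_one]
    have hyB : y ∈ Metric.ball x₀ r := by
      rw [Metric.mem_ball] at hx2 ⊢
      have := dist_triangle y x x₀
      rw [dist_comm y x, hxy] at this
      linarith [hs.2]
    have hxB : x ∈ Metric.ball x₀ r := Metric.ball_subset_ball (by linarith) hx2
    have hFy : F y = 0 := h0 y (hrt hyB).2 (sub_eq_zero.1 hs0)
    have h4 := hL.dist_le_mul x (hrt hxB).1 y (hrt hyB).1
    rw [hFy, Real.dist_eq, sub_zero, hxy] at h4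
    calc |F x| ≤ L * s := h4
      _ ≤ L * t1 := mul_le_mul_of_nonneg_left hs.2 L.2
      _ = _ := by rw [ht1]; ring

/-- The part of the closed cone in a compact shell. -/
def coneShell (n : ℕ) (θ : ℝ) : Set (V n) :=
  {x | 1 ≤ ‖x‖ ^ 2 ∧ ‖x‖ ^ 2 ≤ 3 ∧ 0 ≤ coneFn n θ x}

lemma coneShell_subset : coneShell n θ ⊆ coneCap n θ := by
  rintro x ⟨h1, _, h3⟩
  refine mem_coneCap.2 ⟨?_, sub_nonneg.1 h3⟩
  rintro rfl
  norm_num at h1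

lemma norm_lt_two_of_sq_le {x : V n} (hx : ‖x‖ ^ 2 ≤ 3) : ‖x‖ ≤ 2 := by
  nlinarith [norm_nonneg x]

lemma isCompact_coneShell : IsCompact (coneShell n θ) := by
  refine (isCompact_closedBall (0 : V n) 2).of_isClosed_subset ?_ fun x hx => ?_
  · exact (isClosed_le continuous_const (continuous_norm.pow 2)).inter
      ((isClosed_le (continuous_norm.pow 2) continuous_const).inter
        (isClosed_le continuous_const continuous_coneFn))
  · rw [mem_closedBall_zero_iff]
    exact norm_lt_two_of_sq_le hx.2.1

lemma exists_abs_le_coneFn (hθ : θ ∈ Ioo 0 (π / 2)) {F : V n → ℝ}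
    (hF : ∀ x ∈ coneCap n θ, ContDiffAt ℝ 1 F x)
    (h0 : ∀ x : V n, x ≠ 0 → x (Fin.last n) = cos θ * ‖x‖ → F x = 0) :
    ∃ C : ℝ, 0 ≤ C ∧ ∀ x ∈ coneShell n θ, |F x| ≤ C * coneFn n θ x := by
  have key : ∃ C : ℝ, 0 ≤ C ∧ ∀ x ∈ coneShell n θ, x ∈ coneCap n θ → |F x| ≤ C * coneFn n θ x := by
    refine isCompact_coneShell.induction_on
      (p := fun s => ∃ C : ℝ, 0 ≤ C ∧ ∀ x ∈ s, x ∈ coneCap n θ → |F x| ≤ C * coneFn n θ x)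
      ⟨0, le_rfl, by simp⟩ ?_ ?_ ?_
    · rintro s t hst ⟨C, hC, h⟩
      exact ⟨C, hC, fun x hx => h x (hst hx)⟩
    · rintro s t ⟨C, hC, h⟩ ⟨D, hD, h'⟩
      refine ⟨C + D, add_nonneg hC hD, fun x hx hxC => ?_⟩
      have hz : 0 ≤ coneFn n θ x := sub_nonneg.2 (mem_coneCap.1 hxC).2
      rcases hx with hx | hx
      · exact (h x hx hxC).trans (mul_le_mul_of_nonneg_right (by linarith) hz)
      · exact (h' x hx hxC).trans (mul_le_mul_of_nonneg_right (by linarith) hz)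
    · intro x hx
      obtain ⟨C, hC, h⟩ := exists_local_abs_le_coneFn hθ (coneShell_subset hx)
        (hF x (coneShell_subset hx)) h0
      exact ⟨_, nhdsWithin_le_nhds h, C, hC, fun y hy => hy⟩
  obtain ⟨C, hC, h⟩ := key
  exact ⟨C, hC, fun x hx => h x hx (coneShell_subset hx)⟩

lemma mem_coneShell_of_shellFn_ne_zero {x : V n} (hx : shellFn x ≠ 0) (hz : 0 ≤ coneFn n θ x) :
    x ∈ coneShell n θ := by
  have := shellFn_pos_iff.1 (lt_of_le_of_ne (shellFn_nonneg x) hx.symm)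
  exact ⟨this.1.le, this.2.le, hz⟩

lemma shellFn_mul_cutFn_eq_zero {m : ℝ} (hm : 0 < m) {x : V n} (hx : x ∉ coneShell n θ) :
    shellFn x * cutFn n θ m x = 0 := by
  by_cases h : shellFn x = 0
  · rw [h, zero_mul]
  · have hz : coneFn n θ x < 0 := by
      by_contra! hz
      exact hx (mem_coneShell_of_shellFn_ne_zero h hz)
    rw [cutFn, smoothTransition.zero_of_nonpos (by nlinarith), mul_zero]

lemma contDiff_cut_mul {U : Set (V n)} (hU : IsOpen U) (hsub : coneCap n θ ⊆ U) {F : V n → ℝ}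
    (hF : ContDiffOn ℝ ∞ F U) {m : ℝ} (hm : 0 < m) :
    ContDiff ℝ 1 (fun x => shellFn x * cutFn n θ m x * F x) ∧
      HasCompactSupport (fun x => shellFn x * cutFn n θ m x * F x) := by
  constructor
  · rw [contDiff_iff_contDiffAt]
    intro x
    by_cases hx : x ∈ coneShell n θ
    · have hxC := coneShell_subset hx
      have h := (contDiff_shellFn.contDiffAt.mul (contDiffAt_cutFn (θ := θ) m
        (mem_coneCap.1 hxC).1)).mul (hF.contDiffAt (hU.mem_nhds (hsub hxC)))
      exact h.of_le (by simp)
    · refine contDiffAt_const (c := (0 : ℝ)).congr_of_eventuallyEq ?_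
      filter_upwards [isCompact_coneShell.isClosed.isOpen_compl.mem_nhds hx] with y hy
      rw [shellFn_mul_cutFn_eq_zero hm hy, zero_mul]
  · refine HasCompactSupport.intro (isCompact_coneShell (θ := θ)) fun x hx => ?_
    rw [shellFn_mul_cutFn_eq_zero hm hx, zero_mul]

lemma sum_pd_cut_mul {U : Set (V n)} (hU : IsOpen U) (hsub : coneCap n θ ⊆ U)
    {X : Fin (n + 1) → V n → ℝ} (hX : ∀ i, ContDiffOn ℝ ∞ (X i) U) (m : ℝ) {x : V n}
    (hx : x ∈ coneCap n θ) (hX1 : ∑ i, x i * X i x = 0) :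
    ∑ i, pd i (fun y => shellFn y * cutFn n θ m y * X i y) x =
      shellFn x * cutFn n θ m x * ∑ i, pd i (X i) x +
        shellFn x * (deriv smoothTransition (m * coneFn n θ x - 1) *
          (m * X (Fin.last n) x)) := by
  have hx0 := (mem_coneCap.1 hx).1
  have ds : DifferentiableAt ℝ (shellFn (n := n)) x :=
    contDiff_shellFn.contDiffAt.differentiableAt (by simp)
  have dc : DifferentiableAt ℝ (cutFn n θ m) x :=
    (contDiffAt_cutFn m hx0).differentiableAt (by simp)
  have dX := fun i => differentiableAt_of_contDiffOn hU (hX i) (hsub hx)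
  have h1 : ∀ i, pd i (fun y => shellFn y * cutFn n θ m y * X i y) x =
      shellFn x * cutFn n θ m x * pd i (X i) x +
        shellFn x * (deriv smoothTransition (m * coneFn n θ x - 1) *
          (m * (Etop n i * X i x))) +
        (cutFn n θ m x * deriv shellBump (‖x‖ ^ 2) * 2 -
          shellFn x * (deriv smoothTransition (m * coneFn n θ x - 1) * m * cos θ * ‖x‖⁻¹)) *
          (x i * X i x) := fun i => by
    rw [pd_mul (ds.fun_mul dc) (dX i), pd_mul ds dc, pd_shellFn, pd_cutFn m i hx0]
    ring
  have h2 : ∑ i, Etop n i * X i x = X (Fin.last n) x := by simp [Etop]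
  simp only [h1, Finset.sum_add_distrib, ← Finset.mul_sum, hX1, h2, mul_zero, add_zero]

lemma pd_cut_mul_of_notMem (m : ℝ) (F : V n → ℝ) {x : V n}
    (hx : x ∉ openCone n θ) (i : Fin (n + 1)) (hm : 0 < m) :
    pd i (fun y => shellFn y * cutFn n θ m y * F y) x = 0 := by
  have hz : coneFn n θ x ≤ 0 := sub_nonpos.2 (not_lt.1 hx)
  have h : (fun y => shellFn y * cutFn n θ m y * F y) =ᶠ[nhds x] fun _ => 0 := by
    have h1 : ∀ᶠ y in nhds x, m * coneFn n θ y < 1 :=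
      (continuousAt_const.mul continuous_coneFn.continuousAt).eventually_lt continuousAt_const
        (by simp only [Pi.mul_apply]; nlinarith)
    filter_upwards [h1] with y hy
    rw [cutFn, smoothTransition.zero_of_nonpos (by linarith), mul_zero, zero_mul]
  rw [pd_congr h, pd_const]

/-- The divergence theorem on the cone for fields tangent to its boundary and to the spheres. -/
lemma integral_shellFn_mul_div (hθ : θ ∈ Ioo 0 (π / 2)) {U : Set (V n)} (hU : IsOpen U)
    (hsub : coneCap n θ ⊆ U) {X : Fin (n + 1) → V n → ℝ} (hX : ∀ i, ContDiffOn ℝ ∞ (X i) U)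
    (hX1 : ∀ x ∈ coneCap n θ, ∑ i, x i * X i x = 0)
    (hX2 : ∀ x : V n, x ≠ 0 → x (Fin.last n) = cos θ * ‖x‖ → X (Fin.last n) x = 0) :
    ∫ x in openCone n θ, shellFn x * ∑ i, pd i (X i) x = 0 := by
  obtain ⟨A, hA⟩ := exists_deriv_smoothTransition_bound
  obtain ⟨C, hC, hXC⟩ := exists_abs_le_coneFn hθ (F := X (Fin.last n))
    (fun x hx => ((hX _).contDiffAt (hU.mem_nhds (hsub hx))).of_le (by simp)) hX2
  have hA0 : 0 ≤ A := (abs_nonneg _).trans (hA 0)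
  have hdiv : ContinuousOn (fun x => ∑ i, pd i (X i) x) (coneShell n θ) :=
    continuousOn_finsetSum _ fun i _ => (((hX i).pd_infty hU i).continuousOn).mono
      (coneShell_subset.trans hsub)
  obtain ⟨B, hB⟩ := isCompact_coneShell.exists_bound_of_continuousOn hdiv
  set W : ℕ → V n → ℝ := fun N x =>
    ∑ i, pd i (fun y => shellFn y * cutFn n θ ((N : ℝ) + 1) y * X i y) x with hW
  have hN : ∀ N : ℕ, (0 : ℝ) < (N : ℝ) + 1 := fun N => by positivity
  have hint : ∀ (N : ℕ) i, Integrable (pd i (fun y => shellFn y * cutFn n θ ((N : ℝ) + 1) y * X i y)) ∧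
      ∫ x, pd i (fun y => shellFn y * cutFn n θ ((N : ℝ) + 1) y * X i y) x = 0 := fun N i =>
    integral_pd_eq_zero (contDiff_cut_mul hU hsub (hX i) (hN N)).1
      (contDiff_cut_mul hU hsub (hX i) (hN N)).2 i
  have hWint : ∀ N, Integrable (W N) := fun N => integrable_finsetSum _ fun i _ => (hint N i).1
  have hW0 : ∀ N, ∫ x in openCone n θ, W N x = 0 := fun N => by
    rw [setIntegral_eq_integral_of_forall_compl_eq_zero, hW]
    · simp only
      rw [integral_finsetSum _ fun i _ => (hint N i).1]
      exact Finset.sum_eq_zero fun i _ => (hint N i).2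
    · intro x hx
      exact Finset.sum_eq_zero fun i _ => pd_cut_mul_of_notMem _ _ hx i (hN N)
  have hform : ∀ N, ∀ x ∈ openCone n θ, W N x =
      shellFn x * cutFn n θ ((N : ℝ) + 1) x * ∑ i, pd i (X i) x +
        shellFn x * (deriv smoothTransition (((N : ℝ) + 1) * coneFn n θ x - 1) *
          (((N : ℝ) + 1) * X (Fin.last n) x)) := fun N x hx =>
    sum_pd_cut_mul hU hsub hX _ (openCone_subset hx) (hX1 x (openCone_subset hx))
  have hlim : Filter.Tendsto (fun N => ∫ x in openCone n θ, W N x) Filter.atTop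
      (nhds (∫ x in openCone n θ, shellFn x * ∑ i, pd i (X i) x)) := by
    refine tendsto_integral_of_dominated_convergence
      ((coneShell n θ).indicator fun _ => B + 2 * A * C)
      (fun N => (hWint N).aestronglyMeasurable.restrict) ?_ ?_ ?_
    · exact (((integrable_indicator_iff isCompact_coneShell.measurableSet).2
        (integrableOn_const isCompact_coneShell.measure_ne_top)).restrict)
    · intro N
      refine (ae_restrict_iff' isOpen_openCone.measurableSet).2 (Filter.Eventually.of_forall ?_)
      intro x hx
      have hz : 0 < coneFn n θ x := sub_pos.2 hx
      rw [hform N x hx]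
      by_cases hs : shellFn x = 0
      · rw [hs]
        simp only [zero_mul, add_zero, norm_zero]
        refine indicator_nonneg (fun y hy => ?_) _
        have := (norm_nonneg _).trans (hB y hy)
        positivity
      · have hxS := mem_coneShell_of_shellFn_ne_zero hs hz.le
        rw [indicator_of_mem hxS]
        refine (norm_add_le _ _).trans (add_le_add ?_ ?_)
        · rw [norm_mul, norm_mul, Real.norm_of_nonneg (shellFn_nonneg x),
            Real.norm_of_nonneg (show 0 ≤ cutFn n θ _ x from smoothTransition.nonneg _)]
          have h1 : shellFn x * cutFn n θ ((N : ℝ) + 1) x ≤ 1 :=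
            mul_le_one₀ (shellFn_le_one x) (smoothTransition.nonneg _) (smoothTransition.le_one _)
          exact (mul_le_of_le_one_left (norm_nonneg _) h1).trans (hB x hxS)
        · rw [norm_mul, Real.norm_of_nonneg (shellFn_nonneg x)]
          refine (mul_le_of_le_one_left (norm_nonneg _) (shellFn_le_one x)).trans ?_
          by_cases ht : 1 < ((N : ℝ) + 1) * coneFn n θ x - 1
          · rw [deriv_smoothTransition_of_one_lt ht, zero_mul, norm_zero]
            positivity
          · rw [norm_mul, norm_mul, Real.norm_of_nonneg (hN N).le]
            calc _ ≤ A * (((N : ℝ) + 1) * (C * coneFn n θ x)) :=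
                  mul_le_mul (hA _) (mul_le_mul_of_nonneg_left (hXC x hxS) (hN N).le)
                    (by positivity) hA0
              _ = A * C * (((N : ℝ) + 1) * coneFn n θ x) := by ring
              _ ≤ A * C * 2 := mul_le_mul_of_nonneg_left (by linarith) (by positivity)
              _ = _ := by ring
    · refine (ae_restrict_iff' isOpen_openCone.measurableSet).2 (Filter.Eventually.of_forall ?_)
      intro x hx
      have hz : 0 < coneFn n θ x := sub_pos.2 hx
      refine tendsto_const_nhds.congr' ?_
      obtain ⟨N₀, hN₀⟩ := exists_nat_gt (2 / coneFn n θ x)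
      filter_upwards [Filter.eventually_ge_atTop N₀] with N hNN
      have h2 : 2 < ((N : ℝ) + 1) * coneFn n θ x := by
        rw [div_lt_iff₀ hz] at hN₀
        have : (N₀ : ℝ) ≤ N := Nat.cast_le.2 hNN
        nlinarith
      rw [hform N x hx, deriv_smoothTransition_of_one_lt (by linarith), cutFn,
        smoothTransition.one_of_one_le (by linarith)]
      ring
  simp only [hW0] at hlim
  exact (tendsto_nhds_unique hlim tendsto_const_nhds)

end

section
open scoped ContDiff
variable {n : ℕ} {θ : ℝ}

lemma IsHomExt.exists_isCapHom (hθ : θ ∈ Ioo 0 (π / 2)) {s G : V n → ℝ} (h : IsHomExt n θ ⊤ s G)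
    (hG : IsCapillaryF n θ G) : ∃ U, IsCapHom n θ U G := by
  obtain ⟨⟨U, hU, hsub, hsm⟩, hhom, _⟩ := h
  have hom : ∀ l : ℝ, 0 < l → ∀ x ∈ coneCap n θ, G (l • x) = l * G x := by
    rintro l hl x ⟨t, ht, u, hu, rfl⟩
    rw [smul_smul, hhom _ (mul_pos hl ht) u hu, hhom t ht u hu, mul_assoc]
  refine ⟨U, hU, hsub, hsm, hom, fun x hx0 hx => ?_⟩
  have hp := norm_pos_iff.2 hx0
  have hu : ‖x‖⁻¹ • x ∈ sphCapBdry n θ := by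
    refine ⟨norm_smul_inv_norm hx0, ?_⟩
    rw [PiLp.smul_apply, hx, smul_eq_mul, mul_left_comm, inv_mul_cancel₀ hp.ne', mul_one]
  have h1 := hG _ hu
  rwa [fderiv_smul_of_hom hU hsub hsm hom hθ (mem_coneCap.2 ⟨hx0, hx.ge⟩) (inv_pos.2 hp)] at h1

namespace IsCapHom
variable {U : Set (V n)} {f g : V n → ℝ}

lemma mono (hf : IsCapHom n θ U f) {U' : Set (V n)} (hU' : IsOpen U') (hsub : coneCap n θ ⊆ U')
    (h : U' ⊆ U) : IsCapHom n θ U' f :=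
  ⟨hU', hsub, hf.smooth.mono h, hf.hom, hf.bdry⟩

lemma sub (hf : IsCapHom n θ U f) (hg : IsCapHom n θ U g) :
    IsCapHom n θ U (fun x => f x - g x) where
  isOpen := hf.isOpen
  subset := hf.subset
  smooth := hf.smooth.sub hg.smooth
  hom l hl x hx := by rw [hf.hom l hl x hx, hg.hom l hl x hx]; ring
  bdry x hx0 hx := by
    have hxC : x ∈ coneCap n θ := mem_coneCap.2 ⟨hx0, hx.ge⟩
    rw [pd_sub (hf.differentiableAt hxC) (hg.differentiableAt hxC), hf.bdry x hx0 hx,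
      hg.bdry x hx0 hx, sub_zero]

lemma hessM_sub (hf : IsCapHom n θ U f) (hg : IsCapHom n θ U g) {x : V n} (hx : x ∈ coneCap n θ) :
    hessM n (fun y => f y - g y) x = hessM n f x - hessM n g x := by
  have hxU := hf.subset hx
  ext i j
  rw [Matrix.sub_apply, hessM_eq_pd hf.isOpen hf.smooth hxU, hessM_eq_pd hg.isOpen hg.smooth hxU,
    hessM_eq_pd hf.isOpen (hf.smooth.sub hg.smooth) hxU,
    ← pd_sub (differentiableAt_of_contDiffOn hf.isOpen (hf.smooth.pd_infty hf.isOpen j) hxU)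
      (differentiableAt_of_contDiffOn hf.isOpen (hg.smooth.pd_infty hf.isOpen j) hxU)]
  refine pd_congr ?_
  filter_upwards [hf.isOpen.mem_nhds hxU] with y hy
  exact pd_sub (differentiableAt_of_contDiffOn hf.isOpen hf.smooth hy)
    (differentiableAt_of_contDiffOn hf.isOpen hg.smooth hy)

end IsCapHom

lemma isCapHom_linear {U : Set (V n)} (hU : IsOpen U) (hsub : coneCap n θ ⊆ U) (L : V n →L[ℝ] ℝ)
    (hL : L (Etop n) = 0) : IsCapHom n θ U (fun x => L x) where
  isOpen := hU
  subset := hsub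
  smooth := L.contDiff.contDiffOn
  hom l _ x _ := by rw [map_smul, smul_eq_mul]
  bdry x _ _ := by
    rw [pd, L.fderiv]
    exact hL

lemma hessM_linear (L : V n →L[ℝ] ℝ) (x : V n) : hessM n (fun y => L y) x = 0 := by
  ext i j
  have : fderiv ℝ (fun y => L y) = fun _ => L := funext fun y => L.fderiv
  simp [hessM, this]

lemma hessQ_eq_sum (G : V n → ℝ) (x v w : V n) :
    hessQ n G x v w = ∑ i, ∑ j, v i * (w j * hessM n G x i j) := by
  have h : ∀ v : V n, v = ∑ i, v i • (EuclideanSpace.single i (1 : ℝ) : V n) := fun v => by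
    conv_lhs => rw [← (EuclideanSpace.basisFun (Fin (n + 1)) ℝ).sum_repr v]
    simp
  rw [hessQ]
  conv_lhs => rw [h v, h w]
  simp only [hessM, map_sum, map_smul, _root_.sum_apply, smul_apply, smul_eq_mul,
    Finset.mul_sum]
  rw [Finset.sum_comm]
  exact Finset.sum_congr rfl fun i _ => Finset.sum_congr rfl fun j _ => by ring

namespace IsCapHom
variable {U : Set (V n)} {f g : V n → ℝ}

lemma posSemidef_hessM (hf : IsCapHom n θ U f) (hθ : θ ∈ Ioo 0 (π / 2)) (hpos : TauNonneg n θ f)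
    {x : V n} (hx : x ∈ coneCap n θ) : (hessM n f x).PosSemidef := by
  obtain ⟨l, hl, u, hu, rfl⟩ := hx
  have huC := sphCap_subset hu
  have h1 : (hessM n f u).PosSemidef := by
    refine Matrix.PosSemidef.of_dotProduct_mulVec_nonneg ?_ fun v => ?_
    · rw [Matrix.IsHermitian, Matrix.conjTranspose_eq_transpose_of_trivial]
      exact hessM_transpose hf.isOpen hf.smooth (hf.subset huC)
    · have := hpos u hu (WithLp.toLp 2 v)
      rw [hessQ_eq_sum] at this
      simpa [dotProduct, Matrix.mulVec, Finset.mul_sum, mul_comm, mul_left_comm] using this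
  have h2 := hf.hessM_smul hθ huC hl
  have h3 : hessM n f (l • u) = l⁻¹ • hessM n f u := by
    rw [← h2, smul_smul, inv_mul_cancel₀ hl.ne', one_smul]
  rw [h3]
  exact h1.smul (inv_pos.2 hl).le

lemma hessQ_nonneg (hf : IsCapHom n θ U f) (hθ : θ ∈ Ioo 0 (π / 2)) (hpos : TauNonneg n θ f)
    {x : V n} (hx : x ∈ coneCap n θ) (v : V n) : 0 ≤ hessQ n f x v v := by
  obtain ⟨l, hl, u, hu, rfl⟩ := hx
  have h := hpos u hu v
  rw [hessQ, ← hf.fderiv_fderiv_smul hθ (sphCap_subset hu) hl] at h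
  exact nonneg_of_mul_nonneg_right (by simpa [hessQ] using h) hl

lemma hessQ_Etop_pos (hf : IsCapHom n θ U f) (hθ : θ ∈ Ioo 0 (π / 2)) (hpos : TauPos n θ f)
    {x : V n} (hx : x ∈ coneCap n θ) {i : Fin (n + 1)} (hi : i ≠ Fin.last n) (hxi : x i ≠ 0) :
    0 < hessQ n f x (Etop n) (Etop n) := by
  obtain ⟨l, hl, u, hu, rfl⟩ := hx
  have huC := sphCap_subset hu
  have hu1 : ⟪u, u⟫ = 1 := by rw [real_inner_self_eq_norm_sq, hu.1, one_pow]
  have hul : 0 < u (Fin.last n) := (cos_pos_lt_one hθ).1.trans_le hu.2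
  set v := Etop n - u (Fin.last n) • u with hv
  have hv0 : v ≠ 0 := by
    intro h0
    have h1 := congrArg (fun w : V n => w i) h0
    simp only [hv, PiLp.sub_apply, PiLp.smul_apply, smul_eq_mul, PiLp.zero_apply] at h1
    have h2 : Etop n i = 0 := by simp [Etop, hi]
    rw [h2, zero_sub, neg_eq_zero] at h1
    rcases mul_eq_zero.1 h1 with h1 | h1
    · exact hul.ne' h1
    · apply hxi
      rw [PiLp.smul_apply, h1, smul_zero]
  have hvu : ⟪v, u⟫ = 0 := by
    rw [hv, inner_sub_left, inner_smul_left, hu1, Etop, EuclideanSpace.inner_single_left]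
    simp
  have h := hpos.2 u hu v hv0 hvu
  have hsym : ∀ a b, fderiv ℝ (fderiv ℝ f) u a b = fderiv ℝ (fderiv ℝ f) u b a := by
    intro a b
    exact (hf.smooth.contDiffAt (hf.mem_nhds huC)).isSymmSndFDerivAt (by
      simp only [minSmoothness_of_isRCLikeNormedField]
      exact WithTop.coe_le_coe.2 le_top) a b
  have h0 := hf.fderiv_fderiv_self hθ huC
  have h1 : hessQ n f u v v = hessQ n f u (Etop n) (Etop n) := by
    simp only [hessQ, hv, map_sub, map_smul, h0, smul_zero, sub_zero]
    rw [hsym (Etop n) u, h0]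
    simp
  rw [h1, hessQ, ← hf.fderiv_fderiv_smul hθ huC hl] at h
  exact pos_of_mul_pos_right (by simpa [hessQ] using h) hl.le

end IsCapHom

lemma zero_ne_last (hn : 1 ≤ n) : (0 : Fin (n + 1)) ≠ Fin.last n := by
  rw [Ne, Fin.ext_iff]; simp; omega

lemma exists_mem_boundary (hn : 1 ≤ n) (θ : ℝ) :
    ∃ y : V n, ‖y‖ = 1 ∧ y (Fin.last n) = cos θ ∧ y 0 = sin θ := by
  have h0l := zero_ne_last hn
  set y : V n := EuclideanSpace.single 0 (sin θ) + EuclideanSpace.single (Fin.last n) (cos θ)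
    with hy
  have hyl : y (Fin.last n) = cos θ := by simp [hy, h0l.symm]
  have hy0 : y 0 = sin θ := by simp [hy, h0l]
  have hyn : ‖y‖ = 1 := by
    have h1 : ‖y‖ ^ 2 = 1 := by
      rw [hy, norm_add_sq_real, EuclideanSpace.inner_single_left]
      simp [h0l, sin_sq_add_cos_sq]
    nlinarith [norm_nonneg y]
  exact ⟨y, hyn, hyl, hy0⟩

lemma convex_openCone (hθ : θ ∈ Ioo 0 (π / 2)) : Convex ℝ (openCone n θ) := by
  have c0 := (cos_pos_lt_one hθ).1
  intro x hx y hy a b ha hb hab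
  rw [openCone, Set.mem_ofPred_eq] at *
  have h1 : ‖a • x + b • y‖ ≤ a * ‖x‖ + b * ‖y‖ := by
    refine (norm_add_le _ _).trans ?_
    rw [norm_smul, norm_smul, Real.norm_of_nonneg ha, Real.norm_of_nonneg hb]
  rw [PiLp.add_apply, PiLp.smul_apply, PiLp.smul_apply, smul_eq_mul, smul_eq_mul]
  have h2 := mul_le_mul_of_nonneg_left h1 c0.le
  rcases ha.lt_or_eq with ha | rfl
  · nlinarith [mul_lt_mul_of_pos_left hx ha, mul_le_mul_of_nonneg_left hy.le hb]
  · obtain rfl : b = 1 := by linarith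
    nlinarith

namespace IsCapHom
variable {U : Set (V n)} {f g : V n → ℝ}

/-- A convex 1-homogeneous function lies above its linear supporting functions. -/
lemma fderiv_apply_le (hf : IsCapHom n θ U f) (hθ : θ ∈ Ioo 0 (π / 2)) (hpos : TauNonneg n θ f)
    {q x : V n} (hq : q ∈ openCone n θ) (hx : x ∈ openCone n θ) : fderiv ℝ f q x ≤ f x := by
  have hmem : ∀ t ∈ Icc (0 : ℝ) 1, q + t • (x - q) ∈ coneCap n θ := fun t ht => by
    refine openCone_subset ?_
    have := convex_openCone hθ hq hx (sub_nonneg.2 ht.2) ht.1 (by ring)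
    convert this using 1
    module
  have hγ : ∀ t, HasDerivAt (fun t : ℝ => q + t • (x - q)) (x - q) t := fun t => by
    simpa using ((hasDerivAt_id t).smul_const (x - q)).const_add q
  have h1 : ∀ t ∈ Icc (0 : ℝ) 1, HasDerivAt (fun t : ℝ => f (q + t • (x - q)))
      (fderiv ℝ f (q + t • (x - q)) (x - q)) t := fun t ht =>
    (hf.differentiableAt (hmem t ht)).hasFDerivAt.comp_hasDerivAt t (hγ t)
  have h2 : ∀ t ∈ Icc (0 : ℝ) 1, HasDerivAt (fun t : ℝ => fderiv ℝ f (q + t • (x - q)) (x - q))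
      (hessQ n f (q + t • (x - q)) (x - q) (x - q)) t := fun t ht => by
    have := (hf.differentiableAt_fderiv (hmem t ht)).hasFDerivAt.comp_hasDerivAt t (hγ t)
    simpa [hessQ] using this.clm_apply (hasDerivAt_const t (x - q))
  have hmono : MonotoneOn (fun t : ℝ => fderiv ℝ f (q + t • (x - q)) (x - q)) (Icc 0 1) :=
    monotoneOn_of_deriv_nonneg (convex_Icc 0 1)
      (fun t ht => (h2 t ht).continuousAt.continuousWithinAt)
      (fun t ht => (h2 t (interior_subset ht)).differentiableAt.differentiableWithinAt)
      (fun t ht => by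
        rw [(h2 t (interior_subset ht)).deriv]
        exact hf.hessQ_nonneg hθ hpos (hmem t (interior_subset ht)) _)
  obtain ⟨c, hc, hc2⟩ := exists_hasDerivAt_eq_slope _ _ (show (0 : ℝ) < 1 by norm_num)
    (fun t ht => (h1 t ht).continuousAt.continuousWithinAt)
    (fun t ht => h1 t (Ioo_subset_Icc_self ht))
  have h3 := hmono (left_mem_Icc.2 zero_le_one) (Ioo_subset_Icc_self hc) hc.1.le
  simp only [zero_smul, add_zero, one_smul, add_sub_cancel, sub_zero, div_one] at h3 hc2
  rw [hc2, map_sub, hf.fderiv_self (openCone_subset hq)] at h3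
  linarith

lemma exists_fderiv_Etop_pos (hn : 1 ≤ n) (hf : IsCapHom n θ U f) (hθ : θ ∈ Ioo 0 (π / 2))
    (hpos : TauPos n θ f) : ∃ q ∈ openCone n θ, 0 < fderiv ℝ f q (Etop n) := by
  obtain ⟨c0, c1⟩ := cos_pos_lt_one hθ
  have hs := sin_pos_of_pos_of_lt_pi hθ.1 (by linarith [hθ.2, pi_pos])
  have h0l := zero_ne_last hn
  obtain ⟨y, hyn, hyl, hy0⟩ := exists_mem_boundary hn θ
  have hyB : y (Fin.last n) = cos θ * ‖y‖ := by rw [hyl, hyn, mul_one]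
  have hmem : ∀ t : ℝ, 0 ≤ t → y + t • Etop n ∈ coneCap n θ := by
    intro t ht
    rcases ht.lt_or_eq with ht | rfl
    · exact openCone_subset (add_smul_Etop_mem_openCone hθ hyB.ge ht)
    · rw [zero_smul, add_zero]
      exact mem_coneCap.2 ⟨by rintro h; simp [h] at hyn, hyB.ge⟩
  have h2 : ∀ t : ℝ, 0 ≤ t → HasDerivAt (fun t : ℝ => fderiv ℝ f (y + t • Etop n) (Etop n))
      (hessQ n f (y + t • Etop n) (Etop n) (Etop n)) t := fun t ht => by
    have hγ : HasDerivAt (fun t : ℝ => y + t • Etop n) (Etop n) t := by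
      simpa using ((hasDerivAt_id t).smul_const (Etop n)).const_add y
    have := (hf.differentiableAt_fderiv (hmem t ht)).hasFDerivAt.comp_hasDerivAt t hγ
    simpa [hessQ] using this.clm_apply (hasDerivAt_const t (Etop n))
  have hmono : StrictMonoOn (fun t : ℝ => fderiv ℝ f (y + t • Etop n) (Etop n)) (Icc 0 1) :=
    strictMonoOn_of_deriv_pos (convex_Icc 0 1)
      (fun t ht => (h2 t ht.1).continuousAt.continuousWithinAt)
      (fun t ht => by
        have ht0 := (interior_subset ht).1
        rw [(h2 t ht0).deriv]
        refine hf.hessQ_Etop_pos hθ hpos (hmem t ht0) h0l ?_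
        simpa [hy0, Etop, h0l] using hs.ne')
  refine ⟨y + (1 : ℝ) • Etop n, add_smul_Etop_mem_openCone hθ hyB.ge one_pos, ?_⟩
  have h3 := hmono (left_mem_Icc.2 zero_le_one) (right_mem_Icc.2 zero_le_one) one_pos
  simp only [zero_smul, add_zero] at h3
  have h4 : fderiv ℝ f y (Etop n) = 0 := hf.bdry y (by rintro h; simp [h] at hyn) hyB
  rwa [h4] at h3

/-- After subtracting a suitable horizontal linear function, a strictly convex capillary function
becomes positive. -/
lemma exists_linear_lt (hn : 1 ≤ n) (hf : IsCapHom n θ U f) (hθ : θ ∈ Ioo 0 (π / 2))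
    (hpos : TauPos n θ f) :
    ∃ L : V n →L[ℝ] ℝ, L (Etop n) = 0 ∧ ∀ x ∈ openCone n θ, 0 < f x - L x := by
  obtain ⟨q, hq, hqp⟩ := hf.exists_fderiv_Etop_pos hn hθ hpos
  have c0 := (cos_pos_lt_one hθ).1
  refine ⟨fderiv ℝ f q - fderiv ℝ f q (Etop n) • EuclideanSpace.proj (Fin.last n), ?_, ?_⟩
  · simp [Etop_last]
  · intro x hx
    have h1 := hf.fderiv_apply_le hθ hpos.1 hq hx
    have hxl : 0 < x (Fin.last n) := lt_of_le_of_lt (by positivity) hx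
    have h2 := mul_pos hqp hxl
    simp
    linarith

end IsCapHom

end

section
open scoped ContDiff
variable {n : ℕ} {θ : ℝ}

/-- A field tangent to the boundary of the cone and to the spheres, whose divergence is nonnegative
in the cone, is divergence free in the shell. -/
lemma div_eq_zero_of_nonneg (hθ : θ ∈ Ioo 0 (π / 2)) {U : Set (V n)} (hU : IsOpen U)
    (hsub : coneCap n θ ⊆ U) {X : Fin (n + 1) → V n → ℝ} (hX : ∀ i, ContDiffOn ℝ ∞ (X i) U)
    (hX1 : ∀ x ∈ coneCap n θ, ∑ i, x i * X i x = 0)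
    (hX2 : ∀ x : V n, x ≠ 0 → x (Fin.last n) = cos θ * ‖x‖ → X (Fin.last n) x = 0)
    (hdiv : ∀ x ∈ openCone n θ, 0 ≤ ∑ i, pd i (X i) x) {x : V n} (hx : x ∈ openCone n θ)
    (hx1 : 1 < ‖x‖ ^ 2) (hx3 : ‖x‖ ^ 2 < 3) : ∑ i, pd i (X i) x = 0 := by
  have h0 := integral_shellFn_mul_div hθ hU hsub hX hX1 hX2
  have hc : ContinuousOn (fun x => shellFn x * ∑ i, pd i (X i) x) U :=
    contDiff_shellFn.continuous.continuousOn.mul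
      (continuousOn_finsetSum _ fun i _ => ((hX i).pd_infty hU i).continuousOn)
  have hint : IntegrableOn (fun x => shellFn x * ∑ i, pd i (X i) x) (openCone n θ) := by
    have h1 : IntegrableOn (fun x => shellFn x * ∑ i, pd i (X i) x) (coneShell n θ) :=
      (hc.mono (coneShell_subset.trans hsub)).integrableOn_compact isCompact_coneShell
    refine h1.of_forall_sdiff_eq_zero isOpen_openCone.measurableSet ?_
    rintro y ⟨hy1, hy2⟩
    have hz : 0 ≤ coneFn n θ y := (sub_pos.2 hy1).le
    by_cases hs : shellFn y = 0
    · rw [hs, zero_mul]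
    · exact absurd (mem_coneShell_of_shellFn_ne_zero hs hz) hy2
  have hae : (fun x => shellFn x * ∑ i, pd i (X i) x) =ᵐ[volume.restrict (openCone n θ)] 0 := by
    refine (setIntegral_eq_zero_iff_of_nonneg_ae ?_ hint).1 h0
    refine (ae_restrict_iff' isOpen_openCone.measurableSet).2 (Filter.Eventually.of_forall ?_)
    exact fun y hy => mul_nonneg (shellFn_nonneg y) (hdiv y hy)
  have h1 := Measure.eqOn_open_of_ae_eq hae isOpen_openCone
    (hc.mono (openCone_subset.trans hsub)) continuousOn_const hx
  exact (mul_eq_zero.1 h1).resolve_left (shellFn_pos_iff.2 ⟨hx1, hx3⟩).ne'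

namespace IsCapHom
variable {U : Set (V n)} {f g : V n → ℝ}

lemma hessM_eq_of_shell (hf : IsCapHom n θ U f) (hg : IsCapHom n θ U g) (hθ : θ ∈ Ioo 0 (π / 2))
    (h : ∀ x ∈ openCone n θ, 1 < ‖x‖ ^ 2 → ‖x‖ ^ 2 < 3 → hessM n f x = hessM n g x) {x : V n}
    (hx : x ∈ openCone n θ) : hessM n f x = hessM n g x := by
  have hx0 := (mem_coneCap.1 (openCone_subset hx)).1
  have hp := norm_pos_iff.2 hx0
  have hl : 0 < √2 * ‖x‖⁻¹ := by positivity
  have hn : ‖(√2 * ‖x‖⁻¹) • x‖ ^ 2 = 2 := by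
    rw [norm_smul, Real.norm_of_nonneg hl.le, mul_assoc, inv_mul_cancel₀ hp.ne', mul_one,
      Real.sq_sqrt (by norm_num)]
  rw [← hf.hessM_smul hθ (openCone_subset hx) hl, ← hg.hessM_smul hθ (openCone_subset hx) hl,
    h _ (smul_mem_openCone hl hx) (by rw [hn]; norm_num) (by rw [hn]; norm_num)]

/-- Positive convex capillary functions with the same `σ_k`, `k ≥ 2`, have the same Hessian. -/
lemma hessM_eq_of_matSym_eq_of_pos (hf : IsCapHom n θ U f) (hg : IsCapHom n θ U g)
    (hθ : θ ∈ Ioo 0 (π / 2)) (hfP : ∀ x ∈ coneCap n θ, (hessM n f x).PosSemidef)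
    (hgP : ∀ x ∈ coneCap n θ, (hessM n g x).PosSemidef) {k : ℕ} (hk : 1 ≤ k)
    (hσ : ∀ x ∈ coneCap n θ, 0 < matSym (hessM n g x) (k + 1))
    (hfg : ∀ x ∈ coneCap n θ, matSym (hessM n f x) (k + 1) = matSym (hessM n g x) (k + 1))
    (hf0 : ∀ x ∈ openCone n θ, 0 < f x) (hg0 : ∀ x ∈ openCone n θ, 0 < g x) {x : V n}
    (hx : x ∈ openCone n θ) : hessM n f x = hessM n g x := by
  refine hf.hessM_eq_of_shell hg hθ (fun x hx hx1 hx3 => ?_) hx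
  have hU := hf.isOpen
  set X : Fin (n + 1) → V n → ℝ := fun i x => newtonField k g g f i x + newtonField k f f g i x
    with hXdef
  have hX1 := contDiffOn_newtonField hU hg.smooth hg.smooth hf.smooth k
  have hX2 := contDiffOn_newtonField hU hf.smooth hf.smooth hg.smooth k
  have hdiv : ∀ y ∈ openCone n θ, ∑ i, pd i (X i) y =
      g y * ((newtonT (hessM n g y) k * hessM n f y).trace -
        (k + 1) * matSym (hessM n g y) (k + 1)) +
      f y * ((newtonT (hessM n f y) k * hessM n g y).trace -
        (k + 1) * matSym (hessM n g y) (k + 1)) := by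
    intro y hy
    have hyC := openCone_subset hy
    have hyU := hf.subset hyC
    have e : ∀ i, pd i (X i) y = pd i (newtonField k g g f i) y + pd i (newtonField k f f g i) y :=
      fun i => pd_add (differentiableAt_of_contDiffOn hU (hX1 i) hyU)
        (differentiableAt_of_contDiffOn hU (hX2 i) hyU)
    rw [Finset.sum_congr rfl fun i _ => e i, Finset.sum_add_distrib,
      sum_pd_newtonField hU hg.smooth hg.smooth hf.smooth k hyU,
      sum_pd_newtonField hU hf.smooth hf.smooth hg.smooth k hyU, trace_newtonT_mul_self,
      trace_newtonT_mul_self, hfg y hyC]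
    ring
  have hle1 : ∀ y ∈ openCone n θ, 0 ≤ (newtonT (hessM n g y) k * hessM n f y).trace -
      (k + 1) * matSym (hessM n g y) (k + 1) := fun y hy => by
    have hyC := openCone_subset hy
    exact sub_nonneg.2 (le_trace_newtonT_mul (hfP y hyC) (hgP y hyC) hk (hσ y hyC) (hfg y hyC) rfl)
  have hle2 : ∀ y ∈ openCone n θ, 0 ≤ (newtonT (hessM n f y) k * hessM n g y).trace -
      (k + 1) * matSym (hessM n g y) (k + 1) := fun y hy => by
    have hyC := openCone_subset hy
    exact sub_nonneg.2 (le_trace_newtonT_mul (hgP y hyC) (hfP y hyC) hk (hσ y hyC) rfl (hfg y hyC))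
  have h0 := div_eq_zero_of_nonneg hθ hU hf.subset (X := X) (fun i => (hX1 i).add (hX2 i))
    (fun y hy => by
      simp only [hXdef, mul_add, Finset.sum_add_distrib]
      rw [hg.sum_coord_mul_newtonField hg hf hθ hy, hf.sum_coord_mul_newtonField hf hg hθ hy,
        add_zero])
    (fun y hy0 hy => by
      simp only [hXdef]
      rw [hg.newtonField_last hg hf hθ hy0 hy, hf.newtonField_last hf hg hθ hy0 hy, add_zero])
    (fun y hy => by
      rw [hdiv y hy]
      exact add_nonneg (mul_nonneg (hg0 y hy).le (hle1 y hy))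
        (mul_nonneg (hf0 y hy).le (hle2 y hy)))
    hx hx1 hx3
  rw [hdiv x hx] at h0
  have hxC := openCone_subset hx
  by_contra hne
  have hlt := sub_pos.2
    (lt_trace_newtonT_mul (hfP x hxC) (hgP x hxC) hk (hσ x hxC) (hfg x hxC) rfl hne)
  have := mul_pos (hg0 x hx) hlt
  have := mul_nonneg (hf0 x hx).le (hle2 x hx)
  linarith

end IsCapHom

/-- The support function of the unit sphere centered at `-cos θ E_{n+1}`. -/
def capSupp (n : ℕ) (θ : ℝ) (x : V n) : ℝ := ‖x‖ - cos θ * x (Fin.last n)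

lemma pd_norm {x : V n} (hx : x ≠ 0) (i : Fin (n + 1)) : pd i (fun y : V n => ‖y‖) x = ‖x‖⁻¹ * x i := by
  rw [pd, (hasStrictFDerivAt_norm hx).hasFDerivAt.fderiv]
  simp [EuclideanSpace.inner_single_right]

lemma pd_coord (j i : Fin (n + 1)) (x : V n) :
    pd i (fun y : V n => y j) x = if i = j then 1 else 0 := by
  have h : (fun y : V n => y j) = fun y => EuclideanSpace.proj (𝕜 := ℝ) j y := rfl
  rw [pd, h, ContinuousLinearMap.fderiv]
  simp [eq_comm]

lemma differentiableAt_coord (j : Fin (n + 1)) (x : V n) :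
    DifferentiableAt ℝ (fun y : V n => y j) x :=
  (EuclideanSpace.proj (𝕜 := ℝ) j).differentiableAt

lemma pd_capSupp {x : V n} (hx : x ≠ 0) (i : Fin (n + 1)) :
    pd i (capSupp n θ) x = ‖x‖⁻¹ * x i - cos θ * Etop n i := by
  have h1 : DifferentiableAt ℝ (fun y : V n => ‖y‖) x :=
    (hasStrictFDerivAt_norm hx).hasFDerivAt.differentiableAt
  have h2 := differentiableAt_coord (Fin.last n) x
  have : capSupp n θ = fun y => ‖y‖ - cos θ * y (Fin.last n) := rfl
  rw [this, pd_sub h1 (h2.const_mul _), pd_norm hx, pd_mul (differentiableAt_const _) h2, pd_coord,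
    pd_const]
  simp [Etop]

lemma contDiffOn_capSupp : ContDiffOn ℝ ∞ (capSupp n θ) {x | x ≠ 0} := by
  intro x hx
  have h1 : ContDiff ℝ ∞ fun y : V n => y (Fin.last n) :=
    (EuclideanSpace.proj (𝕜 := ℝ) (Fin.last n)).contDiff
  exact ((contDiffAt_norm ℝ hx).sub (contDiffAt_const.mul h1.contDiffAt)).contDiffWithinAt

lemma hessM_capSupp {x : V n} (hx : x ≠ 0) (i j : Fin (n + 1)) :
    hessM n (capSupp n θ) x i j =
      ‖x‖⁻¹ * (if i = j then 1 else 0) - ‖x‖⁻¹ ^ 3 * (x i * x j) := by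
  have hn := norm_ne_zero_iff.2 hx
  have e : pd j (capSupp n θ) =ᶠ[nhds x] fun y => ‖y‖⁻¹ * y j - cos θ * Etop n j := by
    filter_upwards [isOpen_ne.mem_nhds hx] with y hy using pd_capSupp hy j
  have h1 : HasFDerivAt (fun y : V n => ‖y‖⁻¹) _ x :=
    (hasDerivAt_inv hn).comp_hasFDerivAt x (hasStrictFDerivAt_norm hx).hasFDerivAt
  have h2 : pd i (fun y : V n => ‖y‖⁻¹) x = -(‖x‖⁻¹ ^ 3 * x i) := by
    rw [pd, h1.fderiv]
    simp [EuclideanSpace.inner_single_right]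
    ring
  have h3 := differentiableAt_coord j x
  rw [hessM_eq_pd isOpen_ne contDiffOn_capSupp hx, pd_congr e,
    pd_sub (h1.differentiableAt.fun_mul h3) (differentiableAt_const _),
    pd_mul h1.differentiableAt h3, pd_coord, pd_const, h2]
  ring

lemma isCapHom_capSupp {U : Set (V n)} (hU : IsOpen U) (hsub : coneCap n θ ⊆ U)
    (h0 : U ⊆ {x | x ≠ 0}) : IsCapHom n θ U (capSupp n θ) where
  isOpen := hU
  subset := hsub
  smooth := contDiffOn_capSupp.mono h0
  hom l hl x _ := by
    rw [capSupp, capSupp, norm_smul, Real.norm_of_nonneg hl.le, PiLp.smul_apply, smul_eq_mul]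
    ring
  bdry x hx0 hx := by
    have hn := norm_ne_zero_iff.2 hx0
    rw [pd_capSupp hx0, Etop_last, hx]
    field_simp
    ring

lemma capSupp_pos (hθ : θ ∈ Ioo 0 (π / 2)) {x : V n} (hx : x ≠ 0) : 0 < capSupp n θ x := by
  obtain ⟨c0, c1⟩ := cos_pos_lt_one hθ
  have hp := norm_pos_iff.2 hx
  have h1 : x (Fin.last n) ≤ ‖x‖ := (le_abs_self _).trans (PiLp.norm_apply_le x _)
  rw [capSupp]
  nlinarith

namespace IsCapHom
variable {U : Set (V n)} {f g : V n → ℝ}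

/-- A capillary function with `σ_1 = 0` has vanishing Hessian. -/
lemma hessM_eq_zero_of_trace_eq_zero (hf : IsCapHom n θ U f) (hθ : θ ∈ Ioo 0 (π / 2))
    (htr : ∀ x ∈ coneCap n θ, (hessM n f x).trace = 0) {x : V n}
    (hx : x ∈ openCone n θ) : hessM n f x = 0 := by
  have h0 : ∀ x ∈ coneCap n θ, (x : V n) ≠ 0 := fun x hx => (mem_coneCap.1 hx).1
  have hU' : IsOpen (U ∩ {x | x ≠ 0}) := hf.isOpen.inter isOpen_ne
  have hsub' : coneCap n θ ⊆ U ∩ {x | x ≠ 0} := fun x hx => ⟨hf.subset hx, h0 x hx⟩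
  replace hf := hf.mono hU' hsub' inter_subset_left
  have hℓ : IsCapHom n θ (U ∩ {x | x ≠ 0}) (capSupp n θ) :=
    isCapHom_capSupp hU' hsub' inter_subset_right
  have hz : IsCapHom n θ (U ∩ {x | x ≠ 0}) (fun x => (0 : V n →L[ℝ] ℝ) x) :=
    isCapHom_linear hU' hsub' 0 rfl
  have key : hessM n f x = hessM n (fun x => (0 : V n →L[ℝ] ℝ) x) x := by
    refine hf.hessM_eq_of_shell hz hθ (fun x hx hx1 hx3 => ?_) hx
    rw [hessM_linear]
    have hdiv : ∀ y ∈ openCone n θ, ∑ i, pd i (newtonField 1 f f (capSupp n θ) i) y =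
        capSupp n θ y * ∑ i, ∑ j, hessM n f y i j ^ 2 := by
      intro y hy
      have hyC := openCone_subset hy
      have hsymm := hessM_comm hf.isOpen hf.smooth (hf.subset hyC)
      have hT : newtonT (hessM n f y) 1 = -hessM n f y := by
        have h1 := trace_newtonT_mul_self (hessM n f y) 0
        rw [newtonT_zero, one_mul, htr y hyC] at h1
        have h2 : matSym (hessM n f y) (0 + 1) = 0 := by simpa using h1.symm
        have h7 := newtonT_succ (hessM n f y) 0
        rw [h2, newtonT_zero] at h7
        simpa using h7
      have h3 : (newtonT (hessM n f y) 1 * hessM n (capSupp n θ) y).trace = 0 := by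
        have h4 : hessM n f y * hessM n (capSupp n θ) y = ‖y‖⁻¹ • hessM n f y := by
          ext i j
          have h5 := congrFun (hf.hessM_mulVec_self hθ hyC) i
          simp only [Matrix.mulVec, dotProduct, Pi.zero_apply] at h5
          rw [Matrix.mul_apply]
          calc _ = ‖y‖⁻¹ * (∑ l, hessM n f y i l * if l = j then 1 else 0) -
                ‖y‖⁻¹ ^ 3 * y j * ∑ l, hessM n f y i l * y l := by
                rw [Finset.mul_sum, Finset.mul_sum, ← Finset.sum_sub_distrib]
                refine Finset.sum_congr rfl fun l _ => ?_
                rw [hessM_capSupp (h0 y hyC)]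
                ring
            _ = _ := by rw [h5]; simp
        rw [hT, neg_mul, h4, Matrix.trace_neg, Matrix.trace_smul, htr y hyC, smul_zero, neg_zero]
      have h6 : (newtonT (hessM n f y) 1 * hessM n f y).trace = -∑ i, ∑ j, hessM n f y i j ^ 2 := by
        rw [hT, neg_mul, Matrix.trace_neg, Matrix.trace]
        simp only [Matrix.diag, Matrix.mul_apply]
        congr 1
        refine Finset.sum_congr rfl fun i _ => Finset.sum_congr rfl fun j _ => ?_
        rw [hsymm j i, sq]
      rw [sum_pd_newtonField hf.isOpen hf.smooth hf.smooth hℓ.smooth 1 (hf.subset hyC), h3, h6]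
      ring
    have h1 := div_eq_zero_of_nonneg hθ hf.isOpen hf.subset
      (contDiffOn_newtonField hf.isOpen hf.smooth hf.smooth hℓ.smooth 1)
      (fun y hy => hf.sum_coord_mul_newtonField hf hℓ hθ hy 1)
      (fun y hy0 hy => hf.newtonField_last hf hℓ hθ hy0 hy 1)
      (fun y hy => by
        rw [hdiv y hy]
        exact mul_nonneg (capSupp_pos hθ (h0 y (openCone_subset hy))).le
          (Finset.sum_nonneg fun i _ => Finset.sum_nonneg fun j _ => sq_nonneg _))
      hx hx1 hx3
    rw [hdiv x hx] at h1
    have h2 := (mul_eq_zero.1 h1).resolve_left (capSupp_pos hθ (h0 x (openCone_subset hx))).ne'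
    ext i j
    have h3 := (Finset.sum_eq_zero_iff_of_nonneg fun i _ =>
      Finset.sum_nonneg fun j _ => sq_nonneg _).1 h2 i (Finset.mem_univ _)
    have h4 := (Finset.sum_eq_zero_iff_of_nonneg fun j _ => sq_nonneg _).1 h3 j (Finset.mem_univ _)
    simpa using h4
  rw [key, hessM_linear]

/-- Strictly convex capillary functions with the same positive `σ_k` have the same Hessian. -/
lemma hessM_eq_of_matSym_eq (hn : 1 ≤ n) (hf : IsCapHom n θ U f) (hg : IsCapHom n θ U g)
    (hθ : θ ∈ Ioo 0 (π / 2)) (hfP : TauPos n θ f) (hgP : TauPos n θ g) {k : ℕ} (hk : 1 ≤ k)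
    (hσ : ∀ x ∈ coneCap n θ, 0 < matSym (hessM n g x) k)
    (hfg : ∀ x ∈ coneCap n θ, matSym (hessM n f x) k = matSym (hessM n g x) k) {x : V n}
    (hx : x ∈ openCone n θ) : hessM n f x = hessM n g x := by
  obtain ⟨k, rfl⟩ : ∃ k', k = k' + 1 := ⟨k - 1, by omega⟩
  rcases Nat.eq_zero_or_pos k with rfl | hk'
  · have htr : ∀ A : Matrix (Fin (n + 1)) (Fin (n + 1)) ℝ, matSym A (0 + 1) = A.trace := fun A => by
      have := trace_newtonT_mul_self A 0
      rw [newtonT_zero, one_mul] at this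
      simpa using this.symm
    have h := (hf.sub hg).hessM_eq_zero_of_trace_eq_zero hθ (fun y hy => by
      rw [hf.hessM_sub hg hy, Matrix.trace_sub, ← htr, ← htr, hfg y hy, sub_self]) hx
    rwa [hf.hessM_sub hg (openCone_subset hx), sub_eq_zero] at h
  · obtain ⟨L, hL, hfL⟩ := hf.exists_linear_lt hn hθ hfP
    obtain ⟨L', hL', hgL⟩ := hg.exists_linear_lt hn hθ hgP
    have i1 : IsCapHom n θ U (fun x => L x) := isCapHom_linear hf.isOpen hf.subset L hL
    have i2 : IsCapHom n θ U (fun x => L' x) := isCapHom_linear hf.isOpen hf.subset L' hL'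
    have e1 : ∀ y ∈ coneCap n θ, hessM n (fun x => f x - L x) y = hessM n f y := fun y hy => by
      rw [hf.hessM_sub i1 hy, hessM_linear, sub_zero]
    have e2 : ∀ y ∈ coneCap n θ, hessM n (fun x => g x - L' x) y = hessM n g y := fun y hy => by
      rw [hg.hessM_sub i2 hy, hessM_linear, sub_zero]
    have h := (hf.sub i1).hessM_eq_of_matSym_eq_of_pos (hg.sub i2) hθ
      (fun y hy => by rw [e1 y hy]; exact hf.posSemidef_hessM hθ hfP.1 hy)
      (fun y hy => by rw [e2 y hy]; exact hg.posSemidef_hessM hθ hgP.1 hy) hk'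
      (fun y hy => by rw [e2 y hy]; exact hσ y hy)
      (fun y hy => by rw [e1 y hy, e2 y hy]; exact hfg y hy) hfL hgL hx
    rwa [e1 x (openCone_subset hx), e2 x (openCone_subset hx)] at h

/-- Capillary functions with the same Hessian differ by a horizontal linear function. -/
lemma exists_linear_of_hessM_eq (hn : 1 ≤ n) (hf : IsCapHom n θ U f) (hg : IsCapHom n θ U g)
    (hθ : θ ∈ Ioo 0 (π / 2)) (h : ∀ x ∈ openCone n θ, hessM n f x = hessM n g x) :
    ∃ L : V n →L[ℝ] ℝ, L (Etop n) = 0 ∧ ∀ x ∈ coneCap n θ, f x - g x = L x := by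
  have hw := hf.sub hg
  set w : V n → ℝ := fun x => f x - g x with hwdef
  have hE : Etop n ∈ openCone n θ := by
    rw [openCone, Set.mem_ofPred_eq, Etop_last, norm_Etop, mul_one]
    exact (cos_pos_lt_one hθ).2
  have hD : ∀ x ∈ openCone n θ, fderiv ℝ (fderiv ℝ w) x = 0 := fun x hx => by
    have h1 : hessM n w x = 0 := by
      rw [hf.hessM_sub hg (openCone_subset hx), h x hx, sub_self]
    ext a b
    have := hessQ_eq_sum w x a b
    rw [h1] at this
    simpa [hessQ] using this
  have hc : ∀ x ∈ openCone n θ, fderiv ℝ w x = fderiv ℝ w (Etop n) := fun x hx =>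
    isOpen_openCone.is_const_of_fderiv_eq_zero (convex_openCone hθ).isPreconnected
      (fun y hy => (hw.differentiableAt_fderiv (openCone_subset hy)).differentiableWithinAt)
      (fun y hy => hD y hy) hx hE
  have hc' : ∀ x ∈ coneCap n θ, fderiv ℝ w x = fderiv ℝ w (Etop n) := fun x hx =>
    eq_of_eqOn_openCone hθ hx (hw.contDiffAt_fderiv hx).continuousAt continuousAt_const hc
  refine ⟨fderiv ℝ w (Etop n), ?_, fun x hx => ?_⟩
  · obtain ⟨y, hyn, hyl, _⟩ := exists_mem_boundary hn θ
    have hy0 : y ≠ 0 := by rintro rfl; simp at hyn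
    have hy : y (Fin.last n) = cos θ * ‖y‖ := by rw [hyl, hyn, mul_one]
    rw [← hc' y (mem_coneCap.2 ⟨hy0, hy.ge⟩)]
    exact hw.bdry y hy0 hy
  · rw [← hc' x hx, hw.fderiv_self hx]

end IsCapHom

end

section
open scoped ContDiff
variable {n : ℕ} {θ : ℝ}

/-- The horizontal embedding of `ℝⁿ` in `ℝⁿ⁺¹`. -/
def horizEmb (n : ℕ) (v : Fin n → ℝ) : V n := ∑ i, v i • EuclideanSpace.single i.castSucc 1

/-- The projection of `ℝⁿ⁺¹` to the horizontal coordinates. -/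
def horizProj (n : ℕ) (x : V n) : Fin n → ℝ := fun i => x i.castSucc

/-- The parametrization of the capillary cap as a graph. -/
def capGraph (n : ℕ) (θ : ℝ) (v : Fin n → ℝ) : V n :=
  horizEmb n v + (√(1 - ‖horizEmb n v‖ ^ 2) - cos θ) • Etop n

lemma horizEmb_castSucc (v : Fin n → ℝ) (i : Fin n) : horizEmb n v i.castSucc = v i := by
  simp [horizEmb, Pi.single_apply]

lemma horizEmb_last (v : Fin n → ℝ) : horizEmb n v (Fin.last n) = 0 := by
  simp [horizEmb, Fin.ext_iff, (Fin.is_lt _).ne']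

lemma horizEmb_horizProj_add (x : V n) :
    horizEmb n (horizProj n x) + x (Fin.last n) • Etop n = x := by
  ext i
  refine Fin.lastCases ?_ (fun i => ?_) i
  · simp [horizEmb_last, Etop]
  · simp [horizEmb_castSucc, horizProj, Etop, Fin.ext_iff, (Fin.is_lt i).ne]

lemma horizEmb_smul (c : ℝ) (v : Fin n → ℝ) : horizEmb n (c • v) = c • horizEmb n v := by
  simp [horizEmb, Finset.smul_sum, smul_smul]

lemma contDiff_horizEmb : ContDiff ℝ ∞ (horizEmb n) :=
  ContDiff.sum fun i _ => (contDiff_apply ℝ ℝ i).smul contDiff_const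

lemma horizProj_capGraph (v : Fin n → ℝ) : horizProj n (capGraph n θ v) = v := by
  ext i
  simp [horizProj, capGraph, horizEmb_castSucc, Etop, Fin.ext_iff, (Fin.is_lt i).ne]

lemma norm_sq_horizEmb_add (v : Fin n → ℝ) (t : ℝ) :
    ‖horizEmb n v + t • Etop n‖ ^ 2 = ‖horizEmb n v‖ ^ 2 + t ^ 2 := by
  rw [norm_add_sq_real, inner_smul_right, norm_smul, norm_Etop, Etop,
    EuclideanSpace.inner_single_right, horizEmb_last]
  simp

lemma abs_le_norm_horizEmb (v : Fin n → ℝ) : ‖v‖ ≤ ‖horizEmb n v‖ := by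
  refine (pi_norm_le_iff_of_nonneg (norm_nonneg _)).2 fun i => ?_
  rw [← horizEmb_castSucc v i]
  exact PiLp.norm_apply_le _ _

lemma sin_pos_of_mem (hθ : θ ∈ Ioo 0 (π / 2)) : 0 < sin θ :=
  sin_pos_of_pos_of_lt_pi hθ.1 (by linarith [hθ.2, pi_pos])

lemma capGraph_mem (hθ : θ ∈ Ioo 0 (π / 2)) {v : Fin n → ℝ} (hv : ‖horizEmb n v‖ ≤ sin θ) :
    capGraph n θ v ∈ capCap n θ := by
  have c0 := (cos_pos_lt_one hθ).1
  have h1 : cos θ ^ 2 ≤ 1 - ‖horizEmb n v‖ ^ 2 := by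
    have := pow_le_pow_left₀ (norm_nonneg _) hv 2
    linarith [sin_sq_add_cos_sq θ]
  constructor
  · have : cos θ ≤ √(1 - ‖horizEmb n v‖ ^ 2) := Real.le_sqrt_of_sq_le h1
    simpa [capGraph, horizEmb_last, Etop] using this
  · have h2 : capGraph n θ v + cos θ • Etop n =
        horizEmb n v + √(1 - ‖horizEmb n v‖ ^ 2) • Etop n := by
      rw [capGraph]; module
    have h3 : ‖capGraph n θ v + cos θ • Etop n‖ ^ 2 = 1 := by
      rw [h2, norm_sq_horizEmb_add, Real.sq_sqrt ((sq_nonneg _).trans h1)]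
      ring
    exact (sq_eq_sq₀ (norm_nonneg _) zero_le_one).1 (by rw [h3, one_pow])

lemma exists_capGraph_eq (hθ : θ ∈ Ioo 0 (π / 2)) {ζ : V n} (hζ : ζ ∈ capCap n θ) :
    ‖horizEmb n (horizProj n ζ)‖ ≤ sin θ ∧ capGraph n θ (horizProj n ζ) = ζ := by
  have c0 := (cos_pos_lt_one hθ).1
  have h1 : ζ + cos θ • Etop n =
      horizEmb n (horizProj n ζ) + (ζ (Fin.last n) + cos θ) • Etop n := by
    conv_lhs => rw [← horizEmb_horizProj_add ζ]
    module
  have h2 : ‖horizEmb n (horizProj n ζ)‖ ^ 2 + (ζ (Fin.last n) + cos θ) ^ 2 = 1 := by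
    rw [← norm_sq_horizEmb_add, ← h1, hζ.2, one_pow]
  constructor
  · refine abs_le_of_sq_le_sq' ?_ (sin_pos_of_mem hθ).le |>.2
    nlinarith [hζ.1, sin_sq_add_cos_sq θ]
  · have h3 : √(1 - ‖horizEmb n (horizProj n ζ)‖ ^ 2) = ζ (Fin.last n) + cos θ := by
      rw [← h2, add_sub_cancel_left, Real.sqrt_sq (by linarith [hζ.1])]
    rw [capGraph, h3, add_sub_cancel_right, horizEmb_horizProj_add]

lemma contDiffAt_capGraph {v : Fin n → ℝ} (hv : ‖horizEmb n v‖ < 1) :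
    ContDiffAt ℝ ∞ (capGraph n θ) v := by
  have h1 : (1 : ℝ) - ‖horizEmb n v‖ ^ 2 ≠ 0 := by nlinarith [norm_nonneg (horizEmb n v)]
  have h2 : ContDiffAt ℝ ∞ (fun w : Fin n → ℝ => 1 - ‖horizEmb n w‖ ^ 2) v :=
    contDiffAt_const.sub (contDiff_horizEmb.norm_sq ℝ).contDiffAt
  exact contDiff_horizEmb.contDiffAt.add (((h2.sqrt h1).sub contDiffAt_const).smul contDiffAt_const)

lemma isCompact_graphDomain : IsCompact {v : Fin n → ℝ | ‖horizEmb n v‖ ≤ sin θ} := by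
  refine (isCompact_closedBall (0 : Fin n → ℝ) (sin θ)).of_isClosed_subset
    (isClosed_le contDiff_horizEmb.continuous.norm continuous_const) fun v hv => ?_
  rw [mem_closedBall_zero_iff]
  exact (abs_le_norm_horizEmb v).trans hv

lemma hausdorffMeasure_capCap_lt_top (hθ : θ ∈ Ioo 0 (π / 2)) :
    (μH[(n : ℝ)] : Measure (V n)) (capCap n θ) < ⊤ := by
  set D := {v : Fin n → ℝ | ‖horizEmb n v‖ ≤ sin θ} with hD
  have hs1 : sin θ < 1 := by
    have := sin_sq_add_cos_sq θ
    have := (cos_pos_lt_one hθ).1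
    nlinarith [sin_pos_of_mem hθ]
  have hll : LocallyLipschitzOn D (capGraph n θ) := fun v hv => by
    obtain ⟨K, t, ht, hK⟩ := ((contDiffAt_capGraph (θ := θ) (lt_of_le_of_lt hv hs1)).of_le
      (show (1 : WithTop ℕ∞) ≤ ∞ by simp)).exists_lipschitzOnWith
    exact ⟨K, t, mem_nhdsWithin_of_mem_nhds ht, hK⟩
  obtain ⟨K, hK⟩ := hll.exists_lipschitzOnWith_of_compact isCompact_graphDomain
  have h1 := hK.hausdorffMeasure_image_le (d := (n : ℝ)) (by positivity)
  have h2 : (μH[(n : ℝ)] : Measure (Fin n → ℝ)) D < ⊤ := by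
    have := hausdorffMeasure_pi_real (ι := Fin n)
    rw [Fintype.card_fin] at this
    rw [this]
    exact isCompact_graphDomain.measure_lt_top
  have hsub : capCap n θ ⊆ capGraph n θ '' D := fun ζ hζ =>
    ⟨horizProj n ζ, (exists_capGraph_eq hθ hζ).1, (exists_capGraph_eq hθ hζ).2⟩
  refine (measure_mono hsub).trans_lt (h1.trans_lt ?_)
  exact ENNReal.mul_lt_top (ENNReal.rpow_lt_top_of_nonneg (by positivity) ENNReal.coe_ne_top) h2

lemma isCompact_capCap : IsCompact (capCap n θ) := by
  have h1 : Continuous fun ζ : V n => ζ (Fin.last n) := by fun_prop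
  have h2 : Continuous fun ζ : V n => ‖ζ + cos θ • Etop n‖ := by fun_prop
  refine (isCompact_closedBall (-(cos θ • Etop n)) 1).of_isClosed_subset ?_ fun ζ hζ => ?_
  · exact (isClosed_le continuous_const h1).inter (isClosed_eq h2 continuous_const)
  · rw [mem_closedBall_iff_norm, sub_neg_eq_add, hζ.2]

lemma integrableOn_capCap (hθ : θ ∈ Ioo 0 (π / 2)) {F : V n → ℝ}
    (hF : ContinuousOn F (capCap n θ)) : IntegrableOn F (capCap n θ) μH[(n : ℝ)] := by
  have : IsFiniteMeasure ((μH[(n : ℝ)] : Measure (V n)).restrict (capCap n θ)) :=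
    ⟨by rw [Measure.restrict_apply_univ]; exact hausdorffMeasure_capCap_lt_top hθ⟩
  obtain ⟨C, hC⟩ := isCompact_capCap.exists_bound_of_continuousOn hF
  refine (integrable_const C).mono' (hF.aestronglyMeasurable isCompact_capCap.measurableSet) ?_
  exact (ae_restrict_iff' isCompact_capCap.measurableSet).2 (Filter.Eventually.of_forall hC)

lemma lipschitzWith_horizProj : LipschitzWith 1 (horizProj n) := by
  refine LipschitzWith.of_dist_le_mul fun x y => ?_
  rw [NNReal.coe_one, one_mul, dist_eq_norm, dist_eq_norm]
  refine (pi_norm_le_iff_of_nonneg (norm_nonneg _)).2 fun i => ?_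
  exact PiLp.norm_apply_le (x - y) i.castSucc

/-- A horizontal linear function which vanishes almost everywhere on the cap is zero. -/
lemma eq_zero_of_integral_sq_eq_zero (hθ : θ ∈ Ioo 0 (π / 2)) {L : V n →L[ℝ] ℝ}
    (hL : L (Etop n) = 0) (h : ∫ ζ in capCap n θ, L ζ ^ 2 ∂μH[(n : ℝ)] = 0) (x : V n) : L x = 0 := by
  by_contra hx
  have hint : IntegrableOn (fun ζ => L ζ ^ 2) (capCap n θ) μH[(n : ℝ)] :=
    integrableOn_capCap hθ (L.continuous.pow 2).continuousOn
  have hae := (setIntegral_eq_zero_iff_of_nonneg_ae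
    (Filter.Eventually.of_forall fun ζ => sq_nonneg (L ζ)) hint).1 h
  set A := {ζ : V n | ζ ∈ capCap n θ ∧ L ζ ≠ 0} with hA
  have hA0 : (μH[(n : ℝ)] : Measure (V n)) A = 0 := by
    have h1 := (ae_restrict_iff' isCompact_capCap.measurableSet).1 hae
    refine measure_mono_null ?_ (ae_iff.1 h1)
    rintro ζ ⟨hζ, hζL⟩ hc
    exact hζL (pow_eq_zero_iff two_ne_zero |>.1 (hc hζ))
  have hLJ : Continuous fun v : Fin n → ℝ => L (horizEmb n v) :=
    L.continuous.comp contDiff_horizEmb.continuous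
  set O := {v : Fin n → ℝ | ‖horizEmb n v‖ < sin θ ∧ L (horizEmb n v) ≠ 0} with hO
  have hOo : IsOpen O :=
    (isOpen_lt contDiff_horizEmb.continuous.norm continuous_const).inter
      (isOpen_ne_fun hLJ continuous_const)
  have hLx : L (horizEmb n (horizProj n x)) = L x := by
    conv_rhs => rw [← horizEmb_horizProj_add x]
    rw [map_add, map_smul, hL, smul_zero, add_zero]
  have hOne : O.Nonempty := by
    set r := sin θ / (‖horizEmb n (horizProj n x)‖ + 1) with hr
    have hs := sin_pos_of_mem hθ
    have hr0 : 0 < r := by positivity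
    refine ⟨r • horizProj n x, ?_, ?_⟩
    · rw [horizEmb_smul, norm_smul, Real.norm_of_nonneg hr0.le, hr, div_mul_eq_mul_div,
        div_lt_iff₀ (by positivity)]
      nlinarith
    · rw [horizEmb_smul, map_smul, hLx]
      exact mul_ne_zero hr0.ne' hx
  have hsub : O ⊆ horizProj n '' A := fun v hv => by
    refine ⟨capGraph n θ v, ⟨capGraph_mem hθ hv.1.le, ?_⟩, horizProj_capGraph v⟩
    rw [capGraph, map_add, map_smul, hL, smul_zero, add_zero]
    exact hv.2
  have h2 := lipschitzWith_horizProj.hausdorffMeasure_image_le (d := (n : ℝ)) (by positivity) A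
  rw [hA0, mul_zero] at h2
  have h3 := hausdorffMeasure_pi_real (ι := Fin n)
  rw [Fintype.card_fin] at h3
  rw [h3] at h2
  exact (hOo.measure_pos volume hOne).not_ge ((measure_mono hsub).trans h2)

lemma add_mem_sphCap {ζ : V n} (hζ : ζ ∈ capCap n θ) : ζ + cos θ • Etop n ∈ sphCap n θ := by
  refine ⟨hζ.2, ?_⟩
  simpa [Etop] using hζ.1

lemma sub_mem_capCap {u : V n} (hu : u ∈ sphCap n θ) : u - cos θ • Etop n ∈ capCap n θ := by
  refine ⟨?_, by rw [sub_add_cancel]; exact hu.1⟩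
  simpa [Etop] using hu.2

lemma IsHomExt.continuousOn {s G : V n → ℝ} (h : IsHomExt n θ ⊤ s G) :
    ContinuousOn s (capCap n θ) := by
  obtain ⟨⟨U, hU, hsub, hsm⟩, _, hs⟩ := h
  have h1 : ContinuousOn (fun ζ => G (ζ + cos θ • Etop n)) (capCap n θ) :=
    hsm.continuousOn.comp (by fun_prop) fun ζ hζ => hsub (sphCap_subset (add_mem_sphCap hζ))
  exact h1.congr fun ζ hζ => (hs ζ hζ).symm

lemma matSym_hessM_of_sigmaElem {U : Set (V n)} {G φ : V n → ℝ} (hG : IsCapHom n θ U G)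
    (hθ : θ ∈ Ioo 0 (π / 2)) {k : ℕ} (hkn : k ≤ n)
    (h : ∀ ζ ∈ capCap n θ, sigmaElem n k G (ζ + cos θ • Etop n) = φ ζ) {l : ℝ} (hl : 0 < l)
    {u : V n} (hu : u ∈ sphCap n θ) :
    matSym (hessM n G (l • u)) k = l⁻¹ ^ k * φ (u - cos θ • Etop n) := by
  have h1 := h _ (sub_mem_capCap hu)
  have h2 : matSym (hessM n G u) k = φ (u - cos θ • Etop n) := by
    rw [← h1, sub_add_cancel, sigmaElem, matSym_eq_charpoly_coeff _ (by simp; omega),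
      Fintype.card_fin]
  have h3 : hessM n G (l • u) = l⁻¹ • hessM n G u := by
    rw [← hG.hessM_smul hθ (sphCap_subset hu) hl, smul_smul, inv_mul_cancel₀ hl.ne', one_smul]
  rw [h3, matSym_smul, h2]

/-- Uniqueness for the capillary Christoffel–Minkowski problem. -/
theorem capillary_uniqueness {n k : ℕ} (hn : 1 ≤ n) (hθ : θ ∈ Ioo 0 (π / 2)) (hk : 1 ≤ k)
    (hkn : k ≤ n) {φ : V n → ℝ} (hφ : ∀ ζ ∈ capCap n θ, 0 < φ ζ) {s₁ G₁ s₂ G₂ : V n → ℝ}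
    (h₁ : IsHomExt n θ ⊤ s₁ G₁) (h₂ : IsHomExt n θ ⊤ s₂ G₂) (hc₁ : IsCapillaryF n θ G₁)
    (hc₂ : IsCapillaryF n θ G₂) (ht₁ : TauPos n θ G₁) (ht₂ : TauPos n θ G₂)
    (hi₁ : ∀ i : Fin (n + 1), i ≠ Fin.last n → ∫ ζ in capCap n θ, s₁ ζ * ζ i ∂μH[(n : ℝ)] = 0)
    (hi₂ : ∀ i : Fin (n + 1), i ≠ Fin.last n → ∫ ζ in capCap n θ, s₂ ζ * ζ i ∂μH[(n : ℝ)] = 0)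
    (hσ₁ : ∀ ζ ∈ capCap n θ, sigmaElem n k G₁ (ζ + cos θ • Etop n) = φ ζ)
    (hσ₂ : ∀ ζ ∈ capCap n θ, sigmaElem n k G₂ (ζ + cos θ • Etop n) = φ ζ) :
    ∀ x ∈ coneCap n θ, G₁ x = G₂ x := by
  obtain ⟨U₁, hU₁⟩ := h₁.exists_isCapHom hθ hc₁
  obtain ⟨U₂, hU₂⟩ := h₂.exists_isCapHom hθ hc₂
  have hU := hU₁.isOpen.inter hU₂.isOpen
  have hsub : coneCap n θ ⊆ U₁ ∩ U₂ := subset_inter hU₁.subset hU₂.subset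
  have H₁ := hU₁.mono hU hsub inter_subset_left
  have H₂ := hU₂.mono hU hsub inter_subset_right
  have hess := fun x (hx : x ∈ openCone n θ) => H₁.hessM_eq_of_matSym_eq hn H₂ hθ ht₁ ht₂ hk
    (by
      rintro x ⟨l, hl, u, hu, rfl⟩
      rw [matSym_hessM_of_sigmaElem H₂ hθ hkn hσ₂ hl hu]
      exact mul_pos (pow_pos (inv_pos.2 hl) k) (hφ _ (sub_mem_capCap hu)))
    (by
      rintro x ⟨l, hl, u, hu, rfl⟩
      rw [matSym_hessM_of_sigmaElem H₁ hθ hkn hσ₁ hl hu,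
        matSym_hessM_of_sigmaElem H₂ hθ hkn hσ₂ hl hu]) hx
  obtain ⟨L, hLE, hL⟩ := H₁.exists_linear_of_hessM_eq hn H₂ hθ hess
  have hs : ∀ ζ ∈ capCap n θ, s₁ ζ - s₂ ζ = L ζ := fun ζ hζ => by
    rw [← h₁.2.2 ζ hζ, ← h₂.2.2 ζ hζ, hL _ (sphCap_subset (add_mem_sphCap hζ)), map_add, map_smul,
      hLE, smul_zero, add_zero]
  have hI : ∀ s : V n → ℝ, ContinuousOn s (capCap n θ) → ∀ i,
      IntegrableOn (fun ζ => s ζ * ζ i) (capCap n θ) μH[(n : ℝ)] := fun s hs i => by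
    have hci : Continuous fun ζ : V n => ζ i := by fun_prop
    exact integrableOn_capCap hθ (hs.mul hci.continuousOn)
  have hLi : ∀ i : Fin (n + 1), i ≠ Fin.last n →
      ∫ ζ in capCap n θ, L ζ * ζ i ∂μH[(n : ℝ)] = 0 := fun i hi => by
    have e : ∫ ζ in capCap n θ, L ζ * ζ i ∂μH[(n : ℝ)] =
        ∫ ζ in capCap n θ, (s₁ ζ * ζ i - s₂ ζ * ζ i) ∂μH[(n : ℝ)] :=
      setIntegral_congr_fun isCompact_capCap.measurableSet fun ζ hζ => by
        simp only [← sub_mul, hs ζ hζ]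
    rw [e, integral_sub (hI s₁ h₁.continuousOn i) (hI s₂ h₂.continuousOn i), hi₁ i hi,
      hi₂ i hi, sub_zero]
  have hsq : ∫ ζ in capCap n θ, L ζ ^ 2 ∂μH[(n : ℝ)] = 0 := by
    have e : ∀ ζ : V n, L ζ ^ 2 = ∑ i, L (EuclideanSpace.single i 1) * (L ζ * ζ i) := fun ζ => by
      have h1 : L ζ = ∑ i, ζ i * L (EuclideanSpace.single i 1) := by
        conv_lhs => rw [← (EuclideanSpace.basisFun (Fin (n + 1)) ℝ).sum_repr ζ]
        simp
      rw [sq]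
      nth_rewrite 2 [h1]
      rw [Finset.mul_sum]
      exact Finset.sum_congr rfl fun i _ => by ring
    simp only [e]
    rw [integral_finsetSum _ fun i _ => (hI L L.continuous.continuousOn i).const_mul _]
    refine Finset.sum_eq_zero fun i _ => ?_
    rw [integral_const_mul]
    by_cases hi : i = Fin.last n
    · have : L (EuclideanSpace.single i 1) = 0 := by rw [hi]; exact hLE
      rw [this, zero_mul]
    · rw [hLi i hi, mul_zero]
  intro x hx
  rw [← sub_eq_zero, hL x hx]
  exact eq_zero_of_integral_sq_eq_zero hθ hLE hsq x

lemma isCompact_sphCap : IsCompact (sphCap n θ) :=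
  have h : Continuous fun u : V n => u (Fin.last n) := by fun_prop
  (isCompact_sphere (0 : V n) 1).of_isClosed_subset
    ((isClosed_eq continuous_norm continuous_const).inter
      (isClosed_le continuous_const h)) fun u hu => by simpa using hu.1

lemma IsCapHom.continuousAt_iteratedFDeriv {U : Set (V n)} {f : V n → ℝ} (hf : IsCapHom n θ U f)
    (j : ℕ) {x : V n} (hx : x ∈ coneCap n θ) : ContinuousAt (iteratedFDeriv ℝ j f) x := by
  have h := (hf.smooth.continuousOn_iteratedFDerivWithin (m := j) (mod_cast le_top)
    hf.isOpen.uniqueDiffOn).continuousAt (hf.mem_nhds hx)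
  refine h.congr ?_
  filter_upwards [hf.mem_nhds hx] with y hy using iteratedFDerivWithin_of_isOpen j hf.isOpen hy

lemma IsCapHom.iteratedFDeriv_eq (hθ : θ ∈ Ioo 0 (π / 2)) {U W : Set (V n)} {f g : V n → ℝ}
    (hf : IsCapHom n θ U f) (hg : IsCapHom n θ W g) (h : ∀ x ∈ coneCap n θ, f x = g x) (j : ℕ)
    {x : V n} (hx : x ∈ coneCap n θ) : iteratedFDeriv ℝ j f x = iteratedFDeriv ℝ j g x := by
  refine eq_of_eqOn_openCone hθ hx (hf.continuousAt_iteratedFDeriv j hx)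
    (hg.continuousAt_iteratedFDeriv j hx) fun y hy => ?_
  have : f =ᶠ[nhds y] g := by
    filter_upwards [isOpen_openCone.mem_nhds hy] with z hz using h z (openCone_subset hz)
  exact (this.iteratedFDeriv ℝ j).eq_of_nhds

lemma IsCapHom.exists_iteratedFDeriv_bound {U : Set (V n)} {f : V n → ℝ} (hf : IsCapHom n θ U f)
    (m : ℕ) : ∃ C > 0, ∀ u ∈ sphCap n θ, ∀ j ≤ m, ‖iteratedFDeriv ℝ j f u‖ ≤ C := by
  have h : ∀ j : ℕ, ∃ C, ∀ u ∈ sphCap n θ, ‖iteratedFDeriv ℝ j f u‖ ≤ C := fun j =>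
    isCompact_sphCap.exists_bound_of_continuousOn fun u hu =>
      (hf.continuousAt_iteratedFDeriv j (sphCap_subset hu)).continuousWithinAt
  choose C hC using h
  refine ⟨1 + ∑ j ∈ Finset.range (m + 1), |C j|, by positivity, fun u hu j hj => ?_⟩
  have h1 := Finset.single_le_sum (f := fun j => |C j|) (fun i _ => abs_nonneg _)
    (Finset.mem_range.2 (Nat.lt_succ_of_le hj))
  have h2 := (hC j u hu).trans (le_abs_self _)
  linarith

end

/-- `C^m` estimates for solutions of the capillary `σ_k` problem. -/
theorem capillary_Cm_estimate (n k : ℕ) (hn : 1 ≤ n) (θ : ℝ)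
    (hθ : θ ∈ Ioo 0 (π / 2)) (hk : 1 ≤ k) (hkn : k ≤ n)
    (φ Φ : V n → ℝ) (hφpos : ∀ ζ ∈ capCap n θ, 0 < φ ζ) (hΦ : IsHomExt n θ ⊤ φ Φ) :
    ∀ m : ℕ, 1 ≤ m → ∃ C : ℝ, 0 < C ∧
      ∀ s G : V n → ℝ, IsHomExt n θ ⊤ s G → IsCapillaryF n θ G → TauPos n θ G →
        (∀ i : Fin (n + 1), i ≠ Fin.last n →
          ∫ ζ in capCap n θ, s ζ * ζ i ∂μH[(n : ℝ)] = 0) →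
        (∀ ζ ∈ capCap n θ, sigmaElem n k G (ζ + Real.cos θ • Etop n) = φ ζ) →
        ∀ u ∈ sphCap n θ, ∀ j : ℕ, j ≤ m → ‖iteratedFDeriv ℝ j G u‖ ≤ C := by
  intro m _
  by_cases hex : ∃ s₀ G₀ : V n → ℝ, IsHomExt n θ ⊤ s₀ G₀ ∧ IsCapillaryF n θ G₀ ∧ TauPos n θ G₀ ∧
      (∀ i : Fin (n + 1), i ≠ Fin.last n →
        ∫ ζ in capCap n θ, s₀ ζ * ζ i ∂μH[(n : ℝ)] = 0) ∧
      ∀ ζ ∈ capCap n θ, sigmaElem n k G₀ (ζ + Real.cos θ • Etop n) = φ ζ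
  · obtain ⟨s₀, G₀, h₀, hc₀, ht₀, hi₀, hσ₀⟩ := hex
    obtain ⟨U₀, hU₀⟩ := h₀.exists_isCapHom hθ hc₀
    obtain ⟨C, hC, hbound⟩ := hU₀.exists_iteratedFDeriv_bound m
    refine ⟨C, hC, fun s G h hc ht hi hσ u hu j hj => ?_⟩
    obtain ⟨U, hU⟩ := h.exists_isCapHom hθ hc
    rw [hU.iteratedFDeriv_eq hθ hU₀
      (capillary_uniqueness hn hθ hk hkn hφpos h h₀ hc hc₀ ht ht₀ hi hi₀ hσ hσ₀) j
      (sphCap_subset hu)]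
    exact hbound u hu j hj
  · exact ⟨1, one_pos, fun s G h hc ht hi hσ => (hex ⟨s, G, h, hc, ht, hi, hσ⟩).elim⟩
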